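/- arXiv:2012.12623 — 2 statements merged into one kernel-verified Lean document; each statement's English description precedes it below -/
import Mathlib

section
/- For every integer n ≥ 1: (a) Z_n^{{(1,1), b_n}} = Z_{n−1}; (b) Z_n^{{(0,0), b_n}} = Z_n; and (c) for every integer 2 ≤ j ≤ 2n−1, Z_n^{{(1,1),(j,j)}} = Z_{n−1}^{{(j−2,j−2), b_{n−1}}}. -/
open Finset

/-- Membership predicate for the vertex set `V_n` of the TSSCPP graph `G_n`:
`0 ≤ x₁ ≤ 2n`, `x₁ ≤ x₂ ≤ 2n+1`, with `(2n,2n+1)` removed when `n` is odd. -/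
def memV (n : ℕ) (x : ℤ × ℤ) : Prop :=
  0 ≤ x.1 ∧ x.1 ≤ 2*(n:ℤ) ∧ x.1 ≤ x.2 ∧ x.2 ≤ 2*(n:ℤ)+1 ∧
    ¬(n % 2 = 1 ∧ x.1 = 2*(n:ℤ) ∧ x.2 = 2*(n:ℤ)+1)

instance memV.decPred (n : ℕ) : DecidablePred (memV n) := fun x => by
  unfold memV; infer_instance

/-- The vertex set `V_n` as a finite set. -/
noncomputable def Vfin (n : ℕ) : Finset (ℤ × ℤ) :=
  (Finset.Icc (0:ℤ) (2*(n:ℤ)) ×ˢ Finset.Icc (0:ℤ) (2*(n:ℤ)+1)).filter (memV n)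

/-- The vertex set `V_n` as a set. -/
def Vset (n : ℕ) : Set (ℤ × ℤ) := {x | memV n x}

/-- The distinguished vertex `b_n = (2n, 2n+1-(n mod 2))`. -/
def bvertex (n : ℕ) : ℤ × ℤ := (2*(n:ℤ), 2*(n:ℤ)+1 - ((n % 2 : ℕ) : ℤ))

/-- Edge relation (with `x` the "lower-left" endpoint) of the TSSCPP graph `G_n`:
horizontal edges `((x₁,x₂),(x₁+1,x₂))` for `0 ≤ x₁ ≤ 2n−1`, `x₁ ≤ x₂ ≤ 2n+1`, `x₁+x₂` odd;
vertical edges `((x₁,x₂),(x₁,x₂+1))` for `0 ≤ x₁ ≤ 2n` (`2n−1` when `n` odd), `x₁ ≤ x₂ ≤ 2n`;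
diagonal edges `((x₁,x₁),(x₁+1,x₁+1))` for `0 ≤ x₁ ≤ 2n−1`. -/
def edgeRel (n : ℕ) (x y : ℤ × ℤ) : Prop :=
  (y.1 = x.1 + 1 ∧ y.2 = x.2 ∧ 0 ≤ x.1 ∧ x.1 ≤ 2*(n:ℤ) - 1 ∧ x.1 ≤ x.2 ∧
      x.2 ≤ 2*(n:ℤ)+1 ∧ Odd (x.1 + x.2)) ∨
  (y.1 = x.1 ∧ y.2 = x.2 + 1 ∧ 0 ≤ x.1 ∧ x.1 ≤ 2*(n:ℤ) - ((n % 2 : ℕ) : ℤ) ∧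
      x.1 ≤ x.2 ∧ x.2 ≤ 2*(n:ℤ)) ∨
  (x.1 = x.2 ∧ y.1 = x.1 + 1 ∧ y.2 = x.2 + 1 ∧ 0 ≤ x.1 ∧ x.1 ≤ 2*(n:ℤ) - 1)

/-- The TSSCPP graph `G_n` (as a graph on all of `ℤ × ℤ`; all of its edges join
vertices of `V_n`). -/
def Gph (n : ℕ) : SimpleGraph (ℤ × ℤ) where
  Adj x y := edgeRel n x y ∨ edgeRel n y x
  symm := ⟨fun x y h => Or.symm h⟩
  loopless := ⟨by
    rintro ⟨x1, x2⟩ (h | h) <;>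
      rcases h with ⟨h1, h2, -⟩ | ⟨h1, h2, -⟩ | ⟨h0, h1, h2, -⟩ <;> omega⟩

/-- `Zpm n U` = number of perfect matchings of the subgraph of `G_n` induced on `V_n \ U`. -/
noncomputable def Zpm (n : ℕ) (U : Set (ℤ × ℤ)) : ℕ :=
  Nat.card {M : ((Gph n).induce (Vset n \ U)).Subgraph // M.IsPerfectMatching}

/-!
Deleting `(1,1)` leaves leaves: `(0,0)` must be matched to `(0,1)`, then `(0,2)` to `(0,3)`, and so
on up column `0`, after which column `1` is matched from the top down. What remains is a copy of
`G_{n-1}` translated by `(2,2)`, except possibly for its two corner vertices on the last column,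
which one more leaf removal adds or deletes. This gives (a) and (c).

For (b), expand along the edges that meet a vertex off the zigzag path `(0,0), (0,1), (1,1), …`.
The vertices left over span a strip of triangles from which some apexes have been removed; such a
strip has one perfect matching or none, according to the parity of its number of vertices. Neither
`(0,0)` nor `b_n` is used by the expansion, and deleting both preserves the parity.
-/

section Matchings

variable {V V' : Type*} {G : SimpleGraph V} {H : SimpleGraph V'} {W U D : Set V}

/-- The perfect matchings of the subgraph of `G` induced on `W`, taken as subgraphs of `G` itself so
that matchings of different vertex sets can be compared and joined. -/
def matchingsOn (G : SimpleGraph V) (W : Set V) : Set G.Subgraph :=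
  {M | M.IsMatching ∧ M.verts = W}

/-- The number of perfect matchings of the subgraph of `G` induced on `W`; it is meant for finite
`W`, since an infinite set of matchings is counted as `0`. -/
noncomputable def numMatchings (G : SimpleGraph V) (W : Set V) : ℕ :=
  (matchingsOn G W).ncard

theorem finite_isMatching_verts_subset (hW : W.Finite) :
    {M : G.Subgraph | M.IsMatching ∧ M.verts ⊆ W}.Finite := by
  have hE : ((fun p : V × V => s(p.1, p.2)) '' W ×ˢ W).Finite := (hW.prod hW).image _
  refine Set.Finite.of_finite_image (f := SimpleGraph.Subgraph.edgeSet)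
    (hE.finite_subsets.subset ?_)
    (SimpleGraph.Subgraph.IsMatching.injOn_edgeSet.mono fun M hM => hM.1)
  rintro _ ⟨M, ⟨-, hMW⟩, rfl⟩ ⟨a, b⟩ hab
  exact ⟨(a, b), ⟨hMW (M.edge_vert hab), hMW (M.edge_vert hab.symm)⟩, rfl⟩

theorem finite_matchingsOn (hW : W.Finite) : (matchingsOn G W).Finite :=
  (finite_isMatching_verts_subset hW).subset fun _ hM => ⟨hM.1, hM.2.subset⟩

theorem subgraph_le_of_adj {K L : G.Subgraph} (hK : K.IsMatching)
    (h : ∀ a b, K.Adj a b → L.Adj a b) : K ≤ L := by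
  refine ⟨fun a ha => ?_, fun {a b} => h a b⟩
  obtain ⟨b, hab, -⟩ := hK ha
  exact L.edge_vert (h a b hab)

theorem isAntichain_matchingsOn : IsAntichain (· ≤ ·) (matchingsOn G W) := by
  rintro M ⟨hM, hMW⟩ N ⟨hN, hNW⟩ hne hle
  refine hne (hle.antisymm (subgraph_le_of_adj hN fun a b hab => ?_))
  obtain ⟨c, hac, -⟩ := hM (hMW ▸ hNW ▸ N.edge_vert hab)
  rwa [hN.eq_of_adj_left hab (hle.2 hac)]

theorem isMatching_induce {M : G.Subgraph} (hM : M.IsMatching) {s : Set V} (hs : s ⊆ M.verts)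
    (hclosed : ∀ a ∈ s, ∀ b, M.Adj a b → b ∈ s) : (M.induce s).IsMatching := by
  intro a ha
  obtain ⟨b, hab, -⟩ := hM (hs ha)
  exact ⟨b, ⟨ha, hclosed a ha b hab, hab⟩, fun c hac => hM.eq_of_adj_left hac.2.2 hab⟩

/-! ### Prescribing a submatching -/

theorem sup_mem_matchingsOn {K M : G.Subgraph} (hK : K.IsMatching) (hKW : K.verts ⊆ W)
    (hM : M ∈ matchingsOn G (W \ K.verts)) : K ⊔ M ∈ matchingsOn G W := by
  refine ⟨hK.sup hM.1 ?_, ?_⟩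
  · rw [hK.support_eq_verts, hM.1.support_eq_verts, hM.2]
    exact Set.disjoint_sdiff_right
  · rw [SimpleGraph.Subgraph.verts_sup, hM.2, Set.union_sdiff_cancel hKW]

theorem induce_sdiff_mem_matchingsOn {K M : G.Subgraph} (hK : K.IsMatching)
    (hM : M ∈ matchingsOn G W) (hKM : K ≤ M) :
    M.induce (W \ K.verts) ∈ matchingsOn G (W \ K.verts) := by
  refine ⟨isMatching_induce hM.1 (Set.sdiff_subset.trans hM.2.superset) ?_, rfl⟩
  intro a ha b hab
  refine ⟨hM.2 ▸ M.edge_vert hab.symm, fun hb => ha.2 ?_⟩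
  obtain ⟨c, hbc, -⟩ := hK hb
  rw [hM.1.eq_of_adj_left hab.symm (hKM.2 hbc)]
  exact K.edge_vert hbc.symm

theorem image_sup_matchingsOn {K : G.Subgraph} (hK : K.IsMatching) (hKW : K.verts ⊆ W) :
    (K ⊔ ·) '' matchingsOn G (W \ K.verts) = {M ∈ matchingsOn G W | K ≤ M} := by
  refine Set.Subset.antisymm ?_ ?_
  · rintro _ ⟨M, hM, rfl⟩
    exact ⟨sup_mem_matchingsOn hK hKW hM, le_sup_left⟩
  · rintro M ⟨hM, hKM⟩
    have hrest := induce_sdiff_mem_matchingsOn hK hM hKM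
    refine ⟨_, hrest, isAntichain_matchingsOn.eq (sup_mem_matchingsOn hK hKW hrest) hM ?_⟩
    exact sup_le hKM (subgraph_le_of_adj hrest.1 fun a b hab => hab.2.2)

theorem injOn_sup_matchingsOn (K : G.Subgraph) :
    (matchingsOn G (W \ K.verts)).InjOn (K ⊔ ·) := by
  intro M hM N hN hMN
  refine isAntichain_matchingsOn.eq hM hN (subgraph_le_of_adj hM.1 fun a b hab => ?_)
  have hKN : (K ⊔ N).Adj a b := by
    rw [← show K ⊔ M = K ⊔ N from hMN]
    exact Or.inr hab
  have ha : a ∈ W \ K.verts := hM.2 ▸ M.edge_vert hab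
  exact hKN.resolve_left fun h => ha.2 (K.edge_vert h)

theorem ncard_matchingsOn_ge {K : G.Subgraph} (hK : K.IsMatching) (hKW : K.verts ⊆ W) :
    {M ∈ matchingsOn G W | K ≤ M}.ncard = numMatchings G (W \ K.verts) := by
  rw [← image_sup_matchingsOn hK hKW, (injOn_sup_matchingsOn K).ncard_image,
    numMatchings]

theorem numMatchings_sdiff_pair {a b : V} (hab : G.Adj a b) (ha : a ∈ W) (hb : b ∈ W)
    (hforced : ∀ M ∈ matchingsOn G W, M.Adj a b) :
    numMatchings G (W \ {a, b}) = numMatchings G W := by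
  have hle : ∀ M ∈ matchingsOn G W, G.subgraphOfAdj hab ≤ M := fun M hM =>
    SimpleGraph.subgraphOfAdj_le_of_adj M (hforced M hM)
  have h := ncard_matchingsOn_ge (SimpleGraph.Subgraph.IsMatching.subgraphOfAdj hab)
    (Set.pair_subset ha hb)
  rw [Set.sep_eq_self_iff_mem_true.2 hle] at h
  exact h.symm

theorem numMatchings_sdiff_leaf {a b : V} (hab : G.Adj a b) (ha : a ∈ W) (hb : b ∈ W)
    (hleaf : ∀ x ∈ W, G.Adj a x → x = b) :
    numMatchings G (W \ {a, b}) = numMatchings G W := by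
  refine numMatchings_sdiff_pair hab ha hb fun M hM => ?_
  obtain ⟨x, hax, -⟩ := hM.1 (hM.2 ▸ ha)
  rwa [← hleaf x (hM.2 ▸ M.edge_vert hax.symm) hax.adj_sub]

theorem numMatchings_eq_of_forall_leaf {S : ℕ → Set V} {p q : ℕ → V} {k : ℕ}
    (hS : ∀ i < k, S (i + 1) = S i \ {p i, q i}) (hadj : ∀ i < k, G.Adj (p i) (q i))
    (hp : ∀ i < k, p i ∈ S i) (hq : ∀ i < k, q i ∈ S i)
    (hleaf : ∀ i < k, ∀ x ∈ S i, G.Adj (p i) x → x = q i) :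
    numMatchings G (S k) = numMatchings G (S 0) := by
  have hpeel : ∀ i ≤ k, numMatchings G (S i) = numMatchings G (S 0) := by
    intro i
    induction i with
    | zero => exact fun _ => rfl
    | succ i ih =>
      intro hi
      rw [hS i hi, numMatchings_sdiff_leaf (hadj i hi) (hp i hi) (hq i hi) (hleaf i hi),
        ih (Nat.le_of_succ_le hi)]
  exact hpeel k le_rfl

/-- If `a` were matched to `c`, no partner would be left for `b`. -/
theorem numMatchings_sdiff_triangle {a b c : V} (hab : G.Adj a b) (ha : a ∈ W) (hb : b ∈ W)
    (hNa : ∀ x ∈ W, G.Adj a x → x = b ∨ x = c) (hNb : ∀ x ∈ W, G.Adj b x → x = a ∨ x = c) :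
    numMatchings G (W \ {a, b}) = numMatchings G W := by
  refine numMatchings_sdiff_pair hab ha hb fun M hM => ?_
  obtain ⟨x, hax, -⟩ := hM.1 (hM.2 ▸ ha)
  obtain ⟨y, hby, -⟩ := hM.1 (hM.2 ▸ hb)
  rcases hNa x (hM.2 ▸ M.edge_vert hax.symm) hax.adj_sub with rfl | rfl
  · exact hax
  rcases hNb y (hM.2 ▸ M.edge_vert hby.symm) hby.adj_sub with rfl | rfl
  · exact hby.symm
  · exact absurd (hM.1.eq_of_adj_right hax hby) hab.ne

theorem numMatchings_empty : numMatchings G ∅ = 1 := by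
  refine Set.ncard_eq_one.2 ⟨⊥, Set.eq_singleton_iff_unique_mem.2 ⟨⟨?_, rfl⟩, fun M hM => ?_⟩⟩
  · exact fun a ha => ha.elim
  · exact M.eq_bot_iff_verts_eq_empty.2 hM.2

theorem numMatchings_singleton (a : V) : numMatchings G {a} = 0 := by
  refine (Set.ncard_eq_zero (finite_matchingsOn (Set.finite_singleton a))).2 ?_
  refine Set.eq_empty_of_forall_notMem fun M ⟨hM, hMa⟩ => ?_
  obtain ⟨b, hab, -⟩ := hM (hMa ▸ rfl : a ∈ M.verts)
  exact hab.ne (hMa ▸ M.edge_vert hab.symm : b ∈ ({a} : Set V)).symm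

/-! ### Expansion along a set of vertices -/

/-- The matchings inside `W` that cover `U` and have no edge away from `U`: the possible traces, on
the edges meeting `U`, of a perfect matching of `W`. -/
def matchingsCovering (G : SimpleGraph V) (U W : Set V) : Set G.Subgraph :=
  {K | K.IsMatching ∧ U ⊆ K.verts ∧ K.verts ⊆ W ∧ ∀ a b, K.Adj a b → a ∈ U ∨ b ∈ U}

theorem exists_le_mem_matchingsCovering (hU : U ⊆ W) {M : G.Subgraph}
    (hM : M ∈ matchingsOn G W) : ∃ K ∈ matchingsCovering G U W, K ≤ M := by
  have hsub : U ∪ {x | ∃ u ∈ U, M.Adj x u} ⊆ M.verts :=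
    Set.union_subset (hM.2 ▸ hU) fun x ⟨u, _, hxu⟩ => M.edge_vert hxu
  have hmatching : (M.induce (U ∪ {x | ∃ u ∈ U, M.Adj x u})).IsMatching := by
    refine isMatching_induce hM.1 hsub ?_
    rintro a (ha | ⟨u, hu, hau⟩) b hab
    · exact Or.inr ⟨a, ha, hab.symm⟩
    · exact Or.inl (hM.1.eq_of_adj_left hau hab ▸ hu)
  refine ⟨_, ⟨hmatching, Set.subset_union_left, hM.2 ▸ hsub, ?_⟩,
    subgraph_le_of_adj hmatching fun a b hab => hab.2.2⟩
  rintro a b ⟨ha | ⟨u, hu, hau⟩, -, hab⟩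
  · exact Or.inl ha
  · exact Or.inr (hM.1.eq_of_adj_left hau hab ▸ hu)

theorem le_of_mem_matchingsCovering {K L M : G.Subgraph} (hK : K ∈ matchingsCovering G U W)
    (hL : L ∈ matchingsCovering G U W) (hM : M.IsMatching) (hKM : K ≤ M) (hLM : L ≤ M) :
    K ≤ L := by
  have key : ∀ a b, a ∈ U → K.Adj a b → L.Adj a b := fun a b ha hab => by
    obtain ⟨c, hac, -⟩ := hL.1 (hL.2.1 ha)
    rwa [hM.eq_of_adj_left (hKM.2 hab) (hLM.2 hac)]
  refine subgraph_le_of_adj hK.1 fun a b hab => ?_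
  rcases hK.2.2.2 a b hab with ha | hb
  · exact key a b ha hab
  · exact (key b a hb hab.symm).symm

theorem numMatchings_eq_finsum (hW : W.Finite) (hU : U ⊆ W) :
    numMatchings G W = ∑ᶠ K ∈ matchingsCovering G U W, numMatchings G (W \ K.verts) := by
  have hunion : matchingsOn G W =
      ⋃ K ∈ matchingsCovering G U W, {M ∈ matchingsOn G W | K ≤ M} := by
    refine Set.Subset.antisymm (fun M hM => ?_) (Set.iUnion₂_subset fun K _ M hM => hM.1)
    obtain ⟨K, hK, hKM⟩ := exists_le_mem_matchingsCovering hU hM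
    exact Set.mem_biUnion hK ⟨hM, hKM⟩
  have hdisj : (matchingsCovering G U W).PairwiseDisjoint
      fun K => {M ∈ matchingsOn G W | K ≤ M} := by
    refine fun K hK L hL hne => Set.disjoint_left.2 fun M hKM hLM => hne ?_
    exact le_antisymm (le_of_mem_matchingsCovering hK hL hKM.1.1 hKM.2 hLM.2)
      (le_of_mem_matchingsCovering hL hK hKM.1.1 hLM.2 hKM.2)
  have hfinite : (matchingsCovering G U W).Finite :=
    (finite_isMatching_verts_subset hW).subset fun K hK => ⟨hK.1, hK.2.2.1⟩
  rw [numMatchings, hunion,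
    hfinite.ncard_biUnion (fun K _ => (finite_matchingsOn hW).subset (Set.sep_subset _ _)) hdisj]
  exact finsum_mem_congr rfl fun K hK => ncard_matchingsOn_ge hK.1 hK.2.2.1

theorem notMem_verts_of_mem_matchingsCovering {K : G.Subgraph} {d : V}
    (hK : K ∈ matchingsCovering G U W) (hdU : d ∉ U) (hd : ∀ u ∈ U, ¬ G.Adj d u) :
    d ∉ K.verts := by
  intro hdK
  obtain ⟨u, hdu, -⟩ := hK.1 hdK
  exact hd u ((hK.2.2.2 d u hdu).resolve_left hdU) hdu.adj_sub

theorem matchingsCovering_sdiff (hDU : Disjoint D U) (hD : ∀ d ∈ D, ∀ u ∈ U, ¬ G.Adj d u) :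
    matchingsCovering G U (W \ D) = matchingsCovering G U W := by
  refine Set.ext fun K => ⟨fun hK => ?_, fun hK => ?_⟩
  · exact ⟨hK.1, hK.2.1, hK.2.2.1.trans Set.sdiff_subset, hK.2.2.2⟩
  · refine ⟨hK.1, hK.2.1, Set.subset_sdiff.2 ⟨hK.2.2.1, Set.disjoint_right.2 fun d hd => ?_⟩,
      hK.2.2.2⟩
    exact notMem_verts_of_mem_matchingsCovering hK (Set.disjoint_left.1 hDU hd) (hD d hd)

theorem numMatchings_sdiff_of_forall_covering (hW : W.Finite) (hU : U ⊆ W) (hDU : Disjoint D U)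
    (hD : ∀ d ∈ D, ∀ u ∈ U, ¬ G.Adj d u)
    (h : ∀ K ∈ matchingsCovering G U W,
      numMatchings G ((W \ D) \ K.verts) = numMatchings G (W \ K.verts)) :
    numMatchings G (W \ D) = numMatchings G W := by
  have hU' : U ⊆ W \ D := Set.subset_sdiff.2 ⟨hU, hDU.symm⟩
  rw [numMatchings_eq_finsum hW hU, numMatchings_eq_finsum (hW.subset Set.sdiff_subset) hU',
    matchingsCovering_sdiff hDU hD]
  exact finsum_mem_congr rfl h

/-! ### Invariance under embeddings -/

theorem map_mem_matchingsOn (φ : G ↪g H) {M : G.Subgraph} (hM : M ∈ matchingsOn G W) :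
    M.map φ.toHom ∈ matchingsOn H (φ '' W) :=
  ⟨hM.1.map φ.toHom φ.injective, by rw [← hM.2]; rfl⟩

theorem comap_mem_matchingsOn (φ : G ↪g H) {N : H.Subgraph} (hN : N ∈ matchingsOn H (φ '' W)) :
    N.comap φ.toHom ∈ matchingsOn G W := by
  have hverts : (N.comap φ.toHom).verts = W := by
    rw [SimpleGraph.Subgraph.comap_verts, hN.2]
    exact Set.preimage_image_eq W φ.injective
  refine ⟨fun a ha => ?_, hverts⟩
  obtain ⟨y, hay, -⟩ := hN.1 ha
  obtain ⟨b, -, rfl⟩ : y ∈ φ '' W := hN.2 ▸ N.edge_vert hay.symm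
  exact ⟨b, ⟨φ.map_adj_iff.1 hay.adj_sub, hay⟩,
    fun c hac => φ.injective (hN.1.eq_of_adj_left hac.2 hay)⟩

theorem numMatchings_image (φ : G ↪g H) (W : Set V) :
    numMatchings H (φ '' W) = numMatchings G W := by
  have himage : matchingsOn H (φ '' W) = SimpleGraph.Subgraph.map φ.toHom '' matchingsOn G W := by
    refine Set.Subset.antisymm (fun N hN => ?_) ?_
    · have hcomap := comap_mem_matchingsOn φ hN
      exact ⟨_, hcomap, isAntichain_matchingsOn.eq (map_mem_matchingsOn φ hcomap) hN
        ((SimpleGraph.Subgraph.map_le_iff_le_comap _ _ _).2 le_rfl)⟩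
    · rintro _ ⟨M, hM, rfl⟩
      exact map_mem_matchingsOn φ hM
  have hinj : (matchingsOn G W).InjOn (SimpleGraph.Subgraph.map φ.toHom) := fun M hM N hN hMN =>
    isAntichain_matchingsOn.eq hM hN (subgraph_le_of_adj hM.1 fun a b hab => by
      obtain ⟨a', b', hab', ha, hb⟩ : (N.map φ.toHom).Adj (φ a) (φ b) := hMN ▸ ⟨a, b, hab, rfl, rfl⟩
      rwa [← φ.injective ha, ← φ.injective hb])
  rw [numMatchings, himage, hinj.ncard_image, numMatchings]

theorem card_isPerfectMatching (G : SimpleGraph V) :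
    Nat.card {M : G.Subgraph // M.IsPerfectMatching} = numMatchings G Set.univ :=
  congrArg Set.ncard (Set.ext fun _ => and_congr_right fun _ =>
    SimpleGraph.Subgraph.isSpanning_iff)

theorem card_isPerfectMatching_induce (G : SimpleGraph V) (W : Set V) :
    Nat.card {M : (G.induce W).Subgraph // M.IsPerfectMatching} = numMatchings G W := by
  rw [card_isPerfectMatching, ← numMatchings_image (SimpleGraph.Embedding.induce W), Set.image_univ]
  exact congrArg _ Subtype.range_coe

theorem numMatchings_image_of_injOn {φ : V → V'} (hφ : W.InjOn φ)
    (hadj : ∀ x ∈ W, ∀ y ∈ W, H.Adj (φ x) (φ y) ↔ G.Adj x y) :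
    numMatchings H (φ '' W) = numMatchings G W := by
  let ψ : G.induce W ↪g H := ⟨⟨W.domRestrict φ, hφ.injective⟩, fun {x y} => hadj x x.2 y y.2⟩
  rw [← card_isPerfectMatching_induce G, card_isPerfectMatching, ← numMatchings_image ψ,
    Set.image_univ]
  exact congrArg _ (Set.range_domRestrict φ W).symm

end Matchings

/-! ### The triangle strip -/

/-- The two-way infinite strip of triangles: `i` is joined to `i + 1`, and consecutive even integers
are joined to each other. -/
def stripGraph : SimpleGraph ℤ :=
  SimpleGraph.fromRel fun i j => j = i + 1 ∨ Even i ∧ j = i + 2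

/-- `R` contains every even integer lying between two of its members, i.e. `R` arises from an
interval by deleting odd integers only. These sets induce subgraphs of `stripGraph` with at most
one perfect matching. -/
def IsEvenConvex (R : Set ℤ) : Prop :=
  ∀ i ∈ R, ∀ j ∈ R, ∀ k, Even k → i ≤ k → k ≤ j → k ∈ R

theorem stripGraph_adj {i j : ℤ} :
    stripGraph.Adj i j ↔ j = i + 1 ∨ i = j + 1 ∨ i % 2 = 0 ∧ (j = i + 2 ∨ i = j + 2) := by
  simp only [stripGraph, SimpleGraph.fromRel_adj, Int.even_iff]
  omega

theorem IsEvenConvex.sdiff {R A : Set ℤ} (hR : IsEvenConvex R)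
    (hA : ∀ i ∈ R \ A, ∀ j ∈ R \ A, ∀ k ∈ A, i ≤ k → ¬ k ≤ j) : IsEvenConvex (R \ A) :=
  fun i hi j hj k hk hik hkj =>
    ⟨hR i hi.1 j hj.1 k hk hik hkj, fun hkA => hA i hi j hj k hkA hik hkj⟩

theorem even_card_sdiff_pair {α : Type*} [DecidableEq α] {R : Finset α} {a b : α} (ha : a ∈ R)
    (hb : b ∈ R) (hab : a ≠ b) : Even #(R \ {a, b}) ↔ Even #R := by
  have hsub : {a, b} ⊆ R := Finset.insert_subset ha (Finset.singleton_subset_iff.2 hb)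
  have hcard := Finset.card_sdiff_add_card_eq_card hsub
  rw [Finset.card_pair hab] at hcard
  rw [← hcard, Nat.even_add, iff_true_right even_two]

theorem numMatchings_stripGraph_sdiff_pair {R : Set ℤ} (hR : IsEvenConvex R) {a b : ℤ}
    (ha : a ∈ R) (hb : b ∈ R) (hlt : a < b) (hab : ∀ i ∈ R, i = a ∨ i = b ∨ b < i) :
    numMatchings stripGraph (R \ {a, b}) = numMatchings stripGraph R := by
  have hgap : ∀ k, a < k → k < b → k % 2 = 1 := by
    intro k hak hkb
    by_contra hk
    have := hab k (hR a ha b hb k (Int.even_iff.2 (by omega)) hak.le hkb.le)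
    omega
  have hgap_one := hgap (a + 1)
  have hgap_two := hgap (a + 2)
  have hadj : stripGraph.Adj a b := by
    rw [stripGraph_adj]
    omega
  by_cases htriangle : a % 2 = 0 ∧ b = a + 1
  · refine numMatchings_sdiff_triangle (c := a + 2) hadj ha hb ?_ ?_ <;>
    · intro x hx hadj
      have := hab x hx
      rw [stripGraph_adj] at hadj
      omega
  · refine numMatchings_sdiff_leaf hadj ha hb fun x hx hadj => ?_
    have := hab x hx
    rw [stripGraph_adj] at hadj
    omega

theorem exists_lt_pair_of_one_lt_card {α : Type*} [LinearOrder α] {R : Finset α} (hR : 1 < #R) :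
    ∃ a ∈ R, ∃ b ∈ R, a < b ∧ ∀ i ∈ R, i = a ∨ i = b ∨ b < i := by
  have hne : R.Nonempty := Finset.card_pos.1 (by omega)
  have hne' : (R.erase (R.min' hne)).Nonempty := by
    rw [← Finset.card_pos, Finset.card_erase_of_mem (R.min'_mem hne)]
    omega
  have hmin := Finset.min'_mem _ hne'
  have hb := Finset.mem_of_mem_erase hmin
  refine ⟨_, R.min'_mem hne, _, hb,
    (R.min'_le _ hb).lt_of_ne (Finset.ne_of_mem_erase hmin).symm, fun i hi => ?_⟩
  refine or_iff_not_imp_left.2 fun hia => ?_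
  exact (Finset.min'_le _ i (Finset.mem_erase.2 ⟨hia, hi⟩)).eq_or_lt.imp_left Eq.symm

theorem numMatchings_stripGraph {R : Finset ℤ} (hR : IsEvenConvex (R : Set ℤ)) :
    numMatchings stripGraph (R : Set ℤ) = if Even #R then 1 else 0 := by
  induction R using Finset.strongInduction with
  | H R ih =>
    rcases Nat.lt_trichotomy #R 1 with hcard | hcard | hcard
    · obtain rfl : R = ∅ := Finset.card_eq_zero.1 (by omega)
      simp [numMatchings_empty]
    · obtain ⟨a, rfl⟩ := Finset.card_eq_one.1 hcard
      simp [numMatchings_singleton]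
    · obtain ⟨a, ha, b, hb, hlt, hab⟩ := exists_lt_pair_of_one_lt_card hcard
      have hsub : R \ {a, b} ⊂ R := Finset.sdiff_ssubset
        (Finset.insert_subset ha (Finset.singleton_subset_iff.2 hb)) (Finset.insert_nonempty a {b})
      have hconvex : IsEvenConvex (R \ {a, b} : Set ℤ) := by
        refine hR.sdiff fun i hi j _ k hk hik => ?_
        have := hab i hi.1
        have hne := hi.2
        simp only [Set.mem_insert_iff, Set.mem_singleton_iff] at hk hne
        omega
      have hpeel := ih _ hsub (by simpa using hconvex)
      simp only [even_card_sdiff_pair ha hb hlt.ne, Finset.coe_sdiff, Finset.coe_pair] at hpeel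
      rw [← hpeel, numMatchings_stripGraph_sdiff_pair hR ha hb hlt hab]

/-! ### The graph `G_n` -/

theorem Zpm_eq_numMatchings (n : ℕ) (U : Set (ℤ × ℤ)) :
    Zpm n U = numMatchings (Gph n) (Vset n \ U) :=
  card_isPerfectMatching_induce _ _

theorem mem_Vset_iff {n : ℕ} {a b : ℤ} :
    (a, b) ∈ Vset n ↔ 0 ≤ a ∧ a ≤ 2 * (n : ℤ) ∧ a ≤ b ∧ b ≤ 2 * (n : ℤ) + 1 ∧
      ¬(n % 2 = 1 ∧ a = 2 * (n : ℤ) ∧ b = 2 * (n : ℤ) + 1) := Iff.rfl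

theorem finite_Vset (n : ℕ) : (Vset n).Finite := by
  refine (Set.finite_Icc ((0 : ℤ), (0 : ℤ)) (2 * (n : ℤ), 2 * (n : ℤ) + 1)).subset ?_
  rintro ⟨a, b⟩ hx
  rw [mem_Vset_iff] at hx
  simp only [Set.mem_Icc, Prod.mk_le_mk]
  omega

theorem edgeRel_iff {n : ℕ} {a b c d : ℤ} :
    edgeRel n (a, b) (c, d) ↔
      (c = a + 1 ∧ d = b ∧ 0 ≤ a ∧ a ≤ 2 * (n : ℤ) - 1 ∧ a ≤ b ∧ b ≤ 2 * (n : ℤ) + 1 ∧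
        (a + b) % 2 = 1) ∨
      (c = a ∧ d = b + 1 ∧ 0 ≤ a ∧ a ≤ 2 * (n : ℤ) - ((n % 2 : ℕ) : ℤ) ∧ a ≤ b ∧
        b ≤ 2 * (n : ℤ)) ∨
      (a = b ∧ c = a + 1 ∧ d = b + 1 ∧ 0 ≤ a ∧ a ≤ 2 * (n : ℤ) - 1) := by
  rw [← Int.odd_iff]
  rfl

theorem Gph_adj_iff {n : ℕ} {x y : ℤ × ℤ} :
    (Gph n).Adj x y ↔ edgeRel n x y ∨ edgeRel n y x := Iff.rfl

/-! ### Forced edges -/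

theorem numMatchings_sep_column_zero {n : ℕ} {W : Set (ℤ × ℤ)}
    (hW : ∀ b, (0, b) ∈ W ↔ 0 ≤ b ∧ b ≤ 2 * (n : ℤ) + 1) (h11 : (1, 1) ∉ W) :
    numMatchings (Gph n) {x ∈ W | x.1 ≠ 0} = numMatchings (Gph n) W := by
  let S (i : ℕ) : Set (ℤ × ℤ) := {x ∈ W | x.1 = 0 → 2 * (i : ℤ) ≤ x.2}
  have hstart : S 0 = W := by
    refine Set.sep_eq_self_iff_mem_true.2 ?_
    rintro ⟨a, b⟩ hx rfl
    simpa using ((hW b).1 hx).1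
  have hend : S (n + 1) = {x ∈ W | x.1 ≠ 0} := by
    refine Set.ext fun ⟨a, b⟩ => and_congr_right fun hx => ⟨?_, fun hne h0 => (hne h0).elim⟩
    rintro hle rfl
    have := (hW b).1 hx
    have := hle rfl
    dsimp only at this
    omega
  rw [← hend, ← hstart]
  refine numMatchings_eq_of_forall_leaf (p := fun i => (0, 2 * (i : ℤ)))
    (q := fun i => (0, 2 * (i : ℤ) + 1)) ?_ ?_ ?_ ?_ ?_
  · intro i _
    ext ⟨a, b⟩
    simp only [S, Set.mem_sep_iff, Set.mem_sdiff, Set.mem_insert_iff, Set.mem_singleton_iff,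
      Prod.mk.injEq, and_assoc]
    exact and_congr_right fun _ => by omega
  · intro i _
    rw [Gph_adj_iff, edgeRel_iff]
    omega
  · exact fun i hi => ⟨(hW _).2 (by omega), fun _ => le_rfl⟩
  · exact fun i hi => ⟨(hW _).2 (by omega), fun _ => by dsimp only; omega⟩
  · rintro i _ ⟨a, b⟩ ⟨hx, hle⟩ hadj
    have hne : ¬(a = 1 ∧ b = 1) := by
      rintro ⟨rfl, rfl⟩
      exact h11 hx
    simp only [Gph_adj_iff, edgeRel_iff] at hadj
    simp only [Prod.mk.injEq] at hle ⊢
    omega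

theorem numMatchings_sep_column_one {n : ℕ} {W : Set (ℤ × ℤ)} (h0 : ∀ b, (0, b) ∉ W)
    (hW : ∀ b, (1, b) ∈ W ↔ 2 ≤ b ∧ b ≤ 2 * (n : ℤ) + 1) :
    numMatchings (Gph n) {x ∈ W | x.1 ≠ 1} = numMatchings (Gph n) W := by
  let S (i : ℕ) : Set (ℤ × ℤ) := {x ∈ W | x.1 = 1 → x.2 ≤ 2 * (n : ℤ) + 1 - 2 * i}
  have hstart : S 0 = W := by
    refine Set.sep_eq_self_iff_mem_true.2 ?_
    rintro ⟨a, b⟩ hx rfl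
    simpa using ((hW b).1 hx).2
  have hend : S n = {x ∈ W | x.1 ≠ 1} := by
    refine Set.ext fun ⟨a, b⟩ => and_congr_right fun hx => ⟨?_, fun hne h1 => (hne h1).elim⟩
    rintro hle rfl
    have := (hW b).1 hx
    have := hle rfl
    dsimp only at this
    omega
  rw [← hend, ← hstart]
  refine numMatchings_eq_of_forall_leaf (p := fun i => (1, 2 * (n : ℤ) + 1 - 2 * i))
    (q := fun i => (1, 2 * (n : ℤ) - 2 * i)) ?_ ?_ ?_ ?_ ?_
  · intro i _
    ext ⟨a, b⟩
    simp only [S, Set.mem_sep_iff, Set.mem_sdiff, Set.mem_insert_iff, Set.mem_singleton_iff,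
      Prod.mk.injEq, and_assoc]
    exact and_congr_right fun _ => by omega
  · intro i hi
    rw [Gph_adj_iff, edgeRel_iff, edgeRel_iff]
    omega
  · exact fun i hi => ⟨(hW _).2 (by omega), fun _ => le_rfl⟩
  · exact fun i hi => ⟨(hW _).2 (by omega), fun _ => by dsimp only; omega⟩
  · rintro i hi ⟨a, b⟩ ⟨hx, hle⟩ hadj
    have hne : a ≠ 0 := by
      rintro rfl
      exact h0 b hx
    simp only [Gph_adj_iff, edgeRel_iff] at hadj
    simp only [Prod.mk.injEq] at hle ⊢
    omega

/-- Deleting `(1,1)` forces all edges of the first two columns: column `0` is matched upwards from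
`(0,0)`, and then column `1` downwards from its top vertex. -/
theorem numMatchings_sep_two_le {n : ℕ} {W : Set (ℤ × ℤ)}
    (hW : ∀ a b, a ≤ 1 → ((a, b) ∈ W ↔ (a, b) ∈ Vset n ∧ (a, b) ≠ (1, 1))) :
    numMatchings (Gph n) {x ∈ W | 2 ≤ x.1} = numMatchings (Gph n) W := by
  have hcolumns : {x ∈ W | 2 ≤ x.1} = {x ∈ {x ∈ W | x.1 ≠ 0} | x.1 ≠ 1} := by
    ext ⟨a, b⟩
    simp only [Set.mem_sep_iff, and_assoc]
    refine and_congr_right fun hx => ?_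
    have hnonneg : a ≤ 1 → 0 ≤ a := fun ha => (mem_Vset_iff.1 ((hW a b ha).1 hx).1).1
    omega
  have hzero : ∀ b, (0, b) ∈ W ↔ 0 ≤ b ∧ b ≤ 2 * (n : ℤ) + 1 := fun b => by
    rw [hW 0 b (by omega), mem_Vset_iff, Ne, Prod.mk.injEq]
    omega
  have hone : ∀ b, (1, b) ∈ W ↔ 2 ≤ b ∧ b ≤ 2 * (n : ℤ) + 1 := fun b => by
    rw [hW 1 b le_rfl, mem_Vset_iff, Ne, Prod.mk.injEq]
    omega
  rw [hcolumns, numMatchings_sep_column_one, numMatchings_sep_column_zero hzero]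
  · simp [hW]
  · exact fun b hb => hb.2 rfl
  · simpa using hone

theorem numMatchings_sdiff_corner {n : ℕ} (hn : n % 2 = 0) {W : Set (ℤ × ℤ)}
    (htop : (2 * (n : ℤ), 2 * (n : ℤ) + 1) ∈ W) (hdiag : (2 * (n : ℤ), 2 * (n : ℤ)) ∈ W) :
    numMatchings (Gph n) (W \ {(2 * (n : ℤ), 2 * (n : ℤ) + 1), (2 * (n : ℤ), 2 * (n : ℤ))}) =
      numMatchings (Gph n) W := by
  refine numMatchings_sdiff_leaf ?_ htop hdiag ?_
  · rw [Gph_adj_iff, edgeRel_iff, edgeRel_iff]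
    omega
  · rintro ⟨a, b⟩ - hadj
    rw [Gph_adj_iff, edgeRel_iff, edgeRel_iff] at hadj
    rw [Prod.mk.injEq]
    omega

/-! ### The inclusion of `G_m` into `G_{m+1}` -/

theorem edgeRel_add_two {m : ℕ} {x y : ℤ × ℤ} (hx : x ∈ Vset m) (hy : y ∈ Vset m)
    (hx' : x + (2, 2) ∈ Vset (m + 1)) (hy' : y + (2, 2) ∈ Vset (m + 1)) :
    edgeRel (m + 1) (x + (2, 2)) (y + (2, 2)) ↔ edgeRel m x y := by
  obtain ⟨a, b⟩ := x
  obtain ⟨c, d⟩ := y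
  rw [Prod.mk_add_mk, mem_Vset_iff] at hx' hy'
  rw [mem_Vset_iff] at hx hy
  rw [Prod.mk_add_mk, Prod.mk_add_mk, edgeRel_iff, edgeRel_iff]
  refine or_congr ?_ (or_congr ?_ ?_) <;> omega

theorem numMatchings_eq_of_add_two {m : ℕ} {X Y : Set (ℤ × ℤ)} (hX : X ⊆ Vset m)
    (hY : Y ⊆ Vset (m + 1)) (hXY : ∀ a b, (a + 2, b + 2) ∈ Y ↔ (a, b) ∈ X) :
    numMatchings (Gph (m + 1)) Y = numMatchings (Gph m) X := by
  have hmem : ∀ x ∈ X, x + (2, 2) ∈ Y := fun x hx => (hXY x.1 x.2).2 hx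
  have himage : (· + (2, 2)) '' X = Y := by
    refine Set.Subset.antisymm (Set.image_subset_iff.2 hmem) fun ⟨a, b⟩ hy => ?_
    exact ⟨(a - 2, b - 2), (hXY _ _).1 (by simpa using hy), by simp⟩
  rw [← himage]
  refine numMatchings_image_of_injOn (add_left_injective ((2 : ℤ), (2 : ℤ))).injOn ?_
  exact fun x hx y hy => or_congr
    (edgeRel_add_two (hX hx) (hX hy) (hY (hmem x hx)) (hY (hmem y hy)))
    (edgeRel_add_two (hX hy) (hX hx) (hY (hmem y hy)) (hY (hmem x hx)))

theorem Zpm_insert_one_one {n : ℕ} {U : Set (ℤ × ℤ)} (hU : ∀ x ∈ U, 2 ≤ x.1) :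
    Zpm n (insert (1, 1) U) = numMatchings (Gph n) {x ∈ Vset n \ U | 2 ≤ x.1} := by
  have hsep : {x ∈ Vset n \ U | 2 ≤ x.1} = {x ∈ Vset n \ insert (1, 1) U | 2 ≤ x.1} := by
    ext ⟨a, b⟩
    simp only [Set.mem_ofPred_eq, Set.mem_sdiff, Set.mem_insert_iff, Prod.mk.injEq]
    grind
  rw [Zpm_eq_numMatchings, hsep, numMatchings_sep_two_le]
  intro a b ha
  have hnotMem : (a, b) ∉ U := fun h => (hU _ h).not_gt (by dsimp only; omega)
  simp only [Set.mem_sdiff, Set.mem_insert_iff, hnotMem, or_false]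

theorem Zpm_succ_one_bvertex (m : ℕ) : Zpm (m + 1) {(1, 1), bvertex (m + 1)} = Zpm m ∅ := by
  rw [Zpm_insert_one_one (by simp [bvertex]), Zpm_eq_numMatchings, Set.sdiff_empty]
  rcases Nat.mod_two_eq_zero_or_one m with hm | hm
  · rw [← numMatchings_sdiff_corner (W := Vset m) hm (by rw [mem_Vset_iff]; omega)
      (by rw [mem_Vset_iff]; omega)]
    refine numMatchings_eq_of_add_two Set.sdiff_subset (fun x hx => hx.1.1) fun a b => ?_
    simp only [Set.mem_ofPred_eq, Set.mem_sdiff, Set.mem_insert_iff, Set.mem_singleton_iff,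
      bvertex, mem_Vset_iff, Prod.mk.injEq]
    omega
  · refine numMatchings_eq_of_add_two subset_rfl (fun x hx => hx.1.1) fun a b => ?_
    simp only [Set.mem_ofPred_eq, Set.mem_sdiff, Set.mem_singleton_iff, bvertex, mem_Vset_iff,
      Prod.mk.injEq]
    omega

theorem Zpm_succ_one_add_two {m : ℕ} {a b : ℤ} (ha : 0 ≤ a) (ham : a < 2 * m) :
    Zpm (m + 1) {(1, 1), (a + 2, b + 2)} = Zpm m {(a, b), bvertex m} := by
  rw [Zpm_insert_one_one (by simp [ha]), Zpm_eq_numMatchings]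
  rcases Nat.mod_two_eq_zero_or_one m with hm | hm
  · refine numMatchings_eq_of_add_two Set.sdiff_subset (fun x hx => hx.1.1) fun c d => ?_
    simp only [Set.mem_ofPred_eq, Set.mem_sdiff, Set.mem_insert_iff, Set.mem_singleton_iff,
      bvertex, mem_Vset_iff, Prod.mk.injEq]
    omega
  · rw [← numMatchings_sdiff_corner (n := m + 1) (by omega)]
    · refine numMatchings_eq_of_add_two Set.sdiff_subset (fun x hx => hx.1.1.1) fun c d => ?_
      simp only [Set.mem_ofPred_eq, Set.mem_sdiff, Set.mem_insert_iff, Set.mem_singleton_iff,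
        bvertex, mem_Vset_iff, Prod.mk.injEq]
      omega
    all_goals
      simp only [Set.mem_ofPred_eq, Set.mem_sdiff, Set.mem_singleton_iff, mem_Vset_iff,
        Prod.mk.injEq]
      omega

/-! ### The zigzag path -/

/-- The zigzag path `(0,0), (0,1), (1,1), (1,2), …` along the diagonal. -/
def zigzag (i : ℤ) : ℤ × ℤ := (i / 2, (i + 1) / 2)

/-- The vertices of `G_n` off the zigzag path. -/
def upperPart (n : ℕ) : Set (ℤ × ℤ) := {x ∈ Vset n | x.1 + 2 ≤ x.2}

/-- The index of `b_n` on the zigzag path, of which it is the last vertex in `G_n`. -/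
def lastIndex (n : ℕ) : ℤ := 4 * (n : ℤ) + 1 - ((n % 2 : ℕ) : ℤ)

theorem zigzag_injective : Function.Injective zigzag := by
  intro i j h
  simp only [zigzag, Prod.mk.injEq] at h
  omega

theorem lastIndex_pos (n : ℕ) : 0 < lastIndex n := by
  rw [lastIndex]
  omega

theorem zigzag_zero : zigzag 0 = (0, 0) := rfl

theorem zigzag_lastIndex (n : ℕ) : zigzag (lastIndex n) = bvertex n := by
  rw [zigzag, lastIndex, bvertex, Prod.mk.injEq]
  omega

theorem mem_upperPart_iff {n : ℕ} {a b : ℤ} :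
    (a, b) ∈ upperPart n ↔ (a, b) ∈ Vset n ∧ a + 2 ≤ b := Iff.rfl

theorem zigzag_notMem_upperPart (n : ℕ) (i : ℤ) : zigzag i ∉ upperPart n := by
  rw [zigzag, mem_upperPart_iff]
  omega

theorem Vset_sdiff_upperPart (n : ℕ) :
    Vset n \ upperPart n = zigzag '' Set.Icc 0 (lastIndex n) := by
  ext ⟨a, b⟩
  rw [Set.mem_sdiff, mem_upperPart_iff, mem_Vset_iff]
  constructor
  · refine fun h => ⟨a + b, ?_, ?_⟩
    · rw [Set.mem_Icc, lastIndex]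
      omega
    · rw [zigzag, Prod.mk.injEq]
      omega
  · rintro ⟨i, hi, h⟩
    rw [Set.mem_Icc, lastIndex] at hi
    rw [zigzag, Prod.mk.injEq] at h
    omega

theorem not_adj_zigzag_of_mem_upperPart {n : ℕ} {i : ℤ}
    (hi : Even i ∨ i = lastIndex n) {u : ℤ × ℤ} (hu : u ∈ upperPart n) :
    ¬ (Gph n).Adj (zigzag i) u := by
  obtain ⟨a, b⟩ := u
  rw [mem_upperPart_iff, mem_Vset_iff] at hu
  rw [lastIndex, Int.even_iff] at hi
  rw [zigzag, Gph_adj_iff, edgeRel_iff, edgeRel_iff]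
  omega

theorem edgeRel_zigzag {n : ℕ} {i j : ℤ} (hi : i ∈ Set.Icc 0 (lastIndex n))
    (hj : j ∈ Set.Icc 0 (lastIndex n)) :
    edgeRel n (zigzag i) (zigzag j) ↔ j = i + 1 ∨ i % 2 = 0 ∧ j = i + 2 := by
  rw [Set.mem_Icc, lastIndex] at hi hj
  rw [zigzag, zigzag, edgeRel_iff]
  omega

theorem zigzag_adj {n : ℕ} {i j : ℤ} (hi : i ∈ Set.Icc 0 (lastIndex n))
    (hj : j ∈ Set.Icc 0 (lastIndex n)) :
    (Gph n).Adj (zigzag i) (zigzag j) ↔ stripGraph.Adj i j := by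
  rw [Gph_adj_iff, edgeRel_zigzag hi hj, edgeRel_zigzag hj hi, stripGraph_adj]
  omega

theorem numMatchings_image_zigzag {n : ℕ} {R : Finset ℤ}
    (hRn : (R : Set ℤ) ⊆ Set.Icc 0 (lastIndex n)) (hR : IsEvenConvex (R : Set ℤ)) :
    numMatchings (Gph n) (zigzag '' R) = if Even #R then 1 else 0 := by
  rw [← numMatchings_stripGraph hR]
  exact numMatchings_image_of_injOn zigzag_injective.injOn
    fun i hi j hj => zigzag_adj (hRn hi) (hRn hj)

theorem Vset_sdiff_eq_image_zigzag {n : ℕ} {A : Set (ℤ × ℤ)} (hA : upperPart n ⊆ A) :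
    Vset n \ A = zigzag '' (Set.Icc 0 (lastIndex n) \ zigzag ⁻¹' A) := by
  rw [Set.image_sdiff_preimage, ← Vset_sdiff_upperPart, Set.sdiff_sdiff,
    Set.union_eq_self_of_subset_left hA]

theorem isEvenConvex_Icc_sdiff {lo hi : ℤ} {A : Set ℤ} (hA : ∀ i, Even i → i ∉ A) :
    IsEvenConvex (Set.Icc lo hi \ A) := fun _ hi _ hj k hk hik hkj =>
  ⟨⟨hi.1.1.trans hik, hkj.trans hj.1.2⟩, hA k hk⟩

theorem numMatchings_image_zigzag_sdiff {n : ℕ} {R : Set ℤ}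
    (hRn : R ⊆ Set.Icc 0 (lastIndex n)) (hR : IsEvenConvex R)
    (h0 : 0 ∈ R) (hlast : lastIndex n ∈ R) :
    numMatchings (Gph n) (zigzag '' R \ {zigzag 0, zigzag (lastIndex n)}) =
      numMatchings (Gph n) (zigzag '' R) := by
  lift R to Finset ℤ using (Set.finite_Icc _ _).subset hRn
  have hconvex : IsEvenConvex (R \ {0, lastIndex n} : Set ℤ) := by
    refine hR.sdiff fun i hi j hj k hk => ?_
    have hi' := hRn hi.1
    have hj' := hRn hj.1
    have hni := hi.2
    have hnj := hj.2
    simp only [Set.mem_Icc, Set.mem_insert_iff, Set.mem_singleton_iff] at hk hi' hj' hni hnj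
    omega
  have himage : zigzag '' R \ {zigzag 0, zigzag (lastIndex n)} =
      zigzag '' (R \ {0, lastIndex n} : Finset ℤ) := by
    rw [← Set.image_pair, ← Set.image_sdiff zigzag_injective, Finset.coe_sdiff, Finset.coe_pair]
  rw [himage, numMatchings_image_zigzag, numMatchings_image_zigzag hRn hR]
  · simp only [even_card_sdiff_pair h0 hlast (lastIndex_pos n).ne]
  · exact (Finset.coe_subset.2 Finset.sdiff_subset).trans hRn
  · simpa using hconvex

theorem Zpm_zero_bvertex (n : ℕ) : Zpm n {(0, 0), bvertex n} = Zpm n ∅ := by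
  classical
  rw [Zpm_eq_numMatchings, Zpm_eq_numMatchings, Set.sdiff_empty, ← zigzag_zero, ← zigzag_lastIndex]
  have hends : ∀ d ∈ ({zigzag 0, zigzag (lastIndex n)} : Set (ℤ × ℤ)), ∀ u ∈ upperPart n,
      ¬ (Gph n).Adj d u := by
    rintro _ (rfl | rfl) u hu
    · exact not_adj_zigzag_of_mem_upperPart (.inl .zero) hu
    · exact not_adj_zigzag_of_mem_upperPart (.inr rfl) hu
  have hdisj : Disjoint ({zigzag 0, zigzag (lastIndex n)} : Set (ℤ × ℤ)) (upperPart n) := by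
    simp [zigzag_notMem_upperPart]
  refine numMatchings_sdiff_of_forall_covering (finite_Vset n) (Set.sep_subset _ _) hdisj hends
    fun K hK => ?_
  have hfree : ∀ i, Even i ∨ i = lastIndex n → zigzag i ∉ K.verts := fun i hi =>
    notMem_verts_of_mem_matchingsCovering hK (zigzag_notMem_upperPart n i)
      fun u hu => not_adj_zigzag_of_mem_upperPart hi hu
  have hlast := (lastIndex_pos n).le
  rw [sdiff_right_comm, Vset_sdiff_eq_image_zigzag hK.2.1]
  exact numMatchings_image_zigzag_sdiff Set.sdiff_subset
    (isEvenConvex_Icc_sdiff fun i hi => hfree i (.inl hi))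
    ⟨⟨le_rfl, hlast⟩, hfree 0 (.inl .zero)⟩ ⟨⟨hlast, le_rfl⟩, hfree _ (.inr rfl)⟩

/-- For every `n ≥ 1`: (a) `Z_n^{{(1,1), b_n}} = Z_{n−1}`; (b) `Z_n^{{(0,0), b_n}} = Z_n`;
(c) for every `2 ≤ j ≤ 2n−1`, `Z_n^{{(1,1),(j,j)}} = Z_{n−1}^{{(j−2,j−2), b_{n−1}}}`. -/
theorem Zpm_boundary_identities (n : ℕ) (hn : 1 ≤ n) :
    Zpm n {((1:ℤ), (1:ℤ)), bvertex n} = Zpm (n-1) ∅ ∧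
    Zpm n {((0:ℤ), (0:ℤ)), bvertex n} = Zpm n ∅ ∧
    ∀ j : ℕ, 2 ≤ j → j ≤ 2*n - 1 →
      Zpm n {((1:ℤ), (1:ℤ)), ((j:ℤ), (j:ℤ))}
        = Zpm (n-1) {((j:ℤ) - 2, (j:ℤ) - 2), bvertex (n-1)} := by
  obtain ⟨m, rfl⟩ : ∃ m, n = m + 1 := ⟨n - 1, by omega⟩
  rw [Nat.add_sub_cancel]
  refine ⟨Zpm_succ_one_bvertex m, Zpm_zero_bvertex (m + 1), fun j h2 hj => ?_⟩
  simpa only [sub_add_cancel] using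
    Zpm_succ_one_add_two (m := m) (a := (j : ℤ) - 2) (b := (j : ℤ) - 2) (by omega) (by omega)
end

section
/- Let n ≥ 1 and suppose the Kasteleyn matrix K_n, regarded as a matrix over ℂ, is invertible. Let x = (i₁, i₁+2i₂+ε_i) and y = (j₁, j₁+2j₂+ε_j) be vertices of V_n with 0 ≤ i₁, j₁ ≤ 2n−1, ε_i, ε_j ∈ {0,1}, 0 ≤ i₂ ≤ n−⌊(i₁+ε_i)/2⌋ and 0 ≤ j₂ ≤ n−⌊(j₁+ε_j)/2⌋. Then: (1) if ε_i = ε_j = 1, K_n⁻¹(x,y) = Σ_{ℓ₁=0}^{i₁} Σ_{ℓ₂=0}^{j₁} (−1)^{i₂+j₂}(−1)^{ℓ₁+ℓ₂} binom(i₂−1+ℓ₁, ℓ₁) binom(j₂−1+ℓ₂, ℓ₂) t_n^{1,1}(i₁−ℓ₁, j₁−ℓ₂); (2) if ε_i = ε_j = 0, K_n⁻¹(x,y) = Σ_{ℓ₁=0}^{i₂} Σ_{ℓ₂=0}^{j₂} (−1)^{i₂+j₂} binom(i₂, ℓ₁) binom(j₂, ℓ₂) t_n^{0,0}(i₁+ℓ₁,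 j₁+ℓ₂); (3) if ε_i = 1 and ε_j = 0, K_n⁻¹(x,y) = Σ_{ℓ₁=0}^{i₁} Σ_{ℓ₂=0}^{j₂} (−1)^{i₂+j₂}(−1)^{ℓ₁} binom(i₂−1+ℓ₁, ℓ₁) binom(j₂, ℓ₂) t_n^{1,0}(i₁−ℓ₁, j₁+ℓ₂) − (−1)^{i₂+j₂}·1_{x₁≥y₁}·1_{x₁+x₂<y₁+y₂}·binom(j₂−i₂−1, i₁−j₁); and the remaining case ε_i = 0, ε_j = 1 is determined by skew-symmetry K_n⁻¹(x,y) = −K_n⁻¹(y,x). -/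
open Finset

/-- The entry function `k(x,y)` of the Kasteleyn matrix (over `ℂ`). -/
def kfunC (x y : ℤ × ℤ) : ℂ :=
  if ((x.1 + x.2) % 2 = 0 ∧ x.2 = y.2 ∧ x.1 - y.1 = 1) ∨
     ((x.1 + x.2) % 2 = 0 ∧ x.1 = y.1 ∧ (y.2 - x.2 = 1 ∨ x.2 - y.2 = 1)) ∨
     (x.1 = x.2 ∧ y.1 = y.2 ∧ y.1 = x.1 - 1)
  then 1 else 0

/-- The Kasteleyn matrix `K_n` of `G_n` over `ℂ`, rows and columns indexed by `V_n`. -/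
def KmatC (n : ℕ) : Matrix ↥(Vfin n) ↥(Vfin n) ℂ :=
  fun x y => kfunC x.val y.val - kfunC y.val x.val

/-- `p(n,k,ℓ) = (−1)^k (3n−3k+2) C_{n−k} (n+k−2ℓ+1)! (2n−k−ℓ+1)! / ((k−ℓ)! (3n−k+2−2ℓ)!)`. -/
def pnk (n k l : ℕ) : ℚ :=
  (-1)^k * (3*(n:ℚ) - 3*(k:ℚ) + 2) * (catalan (n-k) : ℚ) *
    (Nat.factorial (n+k-2*l+1) : ℚ) * (Nat.factorial (2*n-k-l+1) : ℚ) /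
    ((Nat.factorial (k-l) : ℚ) * (Nat.factorial (3*n-k+2-2*l) : ℚ))

/-- `h_n^{0,b}(i) = −((i+1) mod 2) + Σ_{k=0}^{n} p(n,k,0)·(1/2πi)∮ (1+r)^{n−k}(1−r)^{-1}r^{2k−i} dr`,
over the positively oriented circle of radius `1/2` centred at the origin. -/
noncomputable def h0b (n i : ℕ) : ℂ :=
  -((((i+1) % 2 : ℕ) : ℂ)) + ∑ k ∈ Finset.range (n+1), ((pnk n k 0 : ℚ) : ℂ) *
    (1/(2*(Real.pi : ℂ)*Complex.I)) *
    (∮ r in C(0, 1/2), (1+r)^(n-k) * (1-r)⁻¹ * r^(2*(k:ℤ) - (i:ℤ)))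

/-- `h_n^{1,b}(i) = Σ_{k=0}^{n} p(n,k,0)·(1/2πi)∮ (1+r)^{n−k} r^{2k−i−1} dr`. -/
noncomputable def h1b (n i : ℕ) : ℂ :=
  ∑ k ∈ Finset.range (n+1), ((pnk n k 0 : ℚ) : ℂ) *
    (1/(2*(Real.pi : ℂ)*Complex.I)) *
    (∮ r in C(0, 1/2), (1+r)^(n-k) * r^(2*(k:ℤ) - (i:ℤ) - 1))

/-- Generalized binomial coefficient `binom(m,ℓ) = m(m−1)⋯(m−ℓ+1)/ℓ!` for integer `m`. -/
noncomputable def genBinom (m : ℤ) (l : ℕ) : ℂ :=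
  (∏ t ∈ Finset.range l, ((m : ℂ) - (t : ℂ))) / (Nat.factorial l : ℂ)

/-- `A₁(r; i,k) = (1+r)^{n−k}/r^{i−2k+1}` and `A₀(r; i,k) = (1+r)^{n−k}/((1−r)·r^{i−2k})`. -/
noncomputable def Afun (e n k i : ℕ) (r : ℂ) : ℂ :=
  if e = 1 then (1+r)^(n-k) * r^(2*(k:ℤ) - (i:ℤ) - 1)
  else (1+r)^(n-k) * (1-r)⁻¹ * r^(2*(k:ℤ) - (i:ℤ))

/-- `(1/2πi)⁴ ∮∮∮∮ F(r₁,r₂,s₁,s₂) dr₁ dr₂ ds₁ ds₂`, each contour the positively oriented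
circle of radius `1/2` centred at the origin. -/
noncomputable def quadInt (F : ℂ → ℂ → ℂ → ℂ → ℂ) : ℂ :=
  (1/(2*(Real.pi : ℂ)*Complex.I))^4 *
    ∮ s2 in C(0, 1/2), ∮ s1 in C(0, 1/2), ∮ r2 in C(0, 1/2), ∮ r1 in C(0, 1/2),
      F r1 r2 s1 s2

/-- The quadruple-sum quadruple-integral part of `t_n^{ε₁,ε₂}(i,j)`. -/
noncomputable def tInt (n e1 e2 i j : ℕ) : ℂ :=
  ∑ k1 ∈ Finset.range (n+1), ∑ l1 ∈ Finset.range (k1+1),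
    ∑ k2 ∈ Finset.range (n+1), ∑ l2 ∈ Finset.range (k2+1),
      ((pnk n k1 l1 : ℚ) : ℂ) * ((pnk n k2 l2 : ℚ) : ℂ) *
        quadInt (fun r1 r2 s1 s2 =>
          Afun e1 n k1 i r1 * Afun e2 n k2 j r2 *
            ((s1 - s2) / ((s1*s2 - 1) * s1^(l1+1) * s2^(l2+1))))

/-- `t_n^{1,1}(i,j)`. -/
noncomputable def t11 (n i j : ℕ) : ℂ := tInt n 1 1 i j

/-- `t_n^{1,0}(i,j) = ((j+1) mod 2)·h_n^{1,b}(i) + (integral part)`. -/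
noncomputable def t10 (n i j : ℕ) : ℂ :=
  (((j+1) % 2 : ℕ) : ℂ) * h1b n i + tInt n 1 0 i j

/-- `t_n^{0,0}(i,j) = 1_{i<j}((i+1) mod 2)(j mod 2) − 1_{i>j}(i mod 2)((j+1) mod 2)
  + ((j+1) mod 2)·h_n^{0,b}(i) − ((i+1) mod 2)·h_n^{0,b}(j) + (integral part)`. -/
noncomputable def t00 (n i j : ℕ) : ℂ :=
  (if i < j then ((((i+1) % 2 : ℕ)) : ℂ) * (((j % 2 : ℕ)) : ℂ) else 0)
  - (if j < i then (((i % 2 : ℕ)) : ℂ) * ((((j+1) % 2 : ℕ)) : ℂ) else 0)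
  + ((((j+1) % 2 : ℕ)) : ℂ) * h0b n i - ((((i+1) % 2 : ℕ)) : ℂ) * h0b n j
  + tInt n 0 0 i j

/-!
The rows of `K_n` away from the top of `V_n` propagate a column of `K_n⁻¹`: its values at the
vertices `(x₁, x₁ + 2s)` and `(x₁, x₁ + 2s + 1)` arise from those with `s = 0` by applying
`(-1)^s (1 + S)^s` and `(-1)^s (1 + S)^(-s)`, with `S` the forward, respectively backward, shift
of `x₁`. The rows at the top then become a linear system `B T = -1 + (rank one)`, where the
entries of `B` are partial sums of rows of Pascal's triangle. Its solution is `T = P J Pᵀ`, with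
`J` the form `[c₁ = c₂ + 1] - [c₂ = c₁ + 1]` and `P` the triangular matrix of the coefficients
`p(n,k,ℓ)`, because creative telescoping in the sense of Zeilberger gives `Pᵀ B P` in closed form.
The integrals over `s₁, s₂` in `t_n` produce the entries of `J`, and those over `r₁, r₂` the
binomial coefficients by which `T` enters at the lowest vertices, so `t_n` provides exactly this
solution.
-/

namespace TSSCPP

/-! ### Hypergeometric coefficients -/

/-- The reciprocal factorial on `ℤ`, zero at negative integers. -/
def invFact (z : ℤ) : ℚ := if z < 0 then 0 else ((z.toNat.factorial : ℕ) : ℚ)⁻¹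

lemma invFact_of_neg {z : ℤ} (h : z < 0) : invFact z = 0 := by simp [invFact, h]

lemma invFact_natCast (m : ℕ) : invFact (m : ℤ) = ((m.factorial : ℕ) : ℚ)⁻¹ := by
  simp [invFact]

lemma invFact_sub_one (z : ℤ) : invFact (z - 1) = z * invFact z := by
  rcases lt_trichotomy z 0 with h | h | h
  · rw [invFact_of_neg h, invFact_of_neg (by omega), mul_zero]
  · subst h; simp [invFact]
  · obtain ⟨m, rfl⟩ : ∃ m : ℕ, z = (m + 1 : ℕ) := ⟨(z - 1).toNat, by omega⟩
    have : ((m + 1 : ℕ) : ℤ) - 1 = (m : ℕ) := by push_cast; ring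
    rw [this, invFact_natCast, invFact_natCast, Nat.factorial_succ]
    push_cast
    field_simp

lemma invFact_eq_mul (z w : ℤ) (h : w = z + 1) : invFact z = (w : ℚ) * invFact w := by
  rw [← invFact_sub_one, h, add_sub_cancel_right]

lemma add_two_mul_catalan_succ (b : ℕ) :
    (b + 2) * catalan (b + 1) = 2 * (2 * b + 1) * catalan b := by
  have h := Nat.succ_mul_centralBinom_succ b
  rw [← succ_mul_catalan_eq_centralBinom (b + 1), ← succ_mul_catalan_eq_centralBinom b] at h
  refine Nat.eq_of_mul_eq_mul_left (Nat.add_pos_right b one_pos) ?_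
  linear_combination h

lemma catalan_ne_zero (b : ℕ) : catalan b ≠ 0 := by
  have h := Nat.centralBinom_ne_zero b
  rw [← succ_mul_catalan_eq_centralBinom b] at h
  exact right_ne_zero_of_mul h

lemma cast_factorial_ne_zero (m : ℕ) : ((m.factorial : ℕ) : ℚ) ≠ 0 :=
  Nat.cast_ne_zero.mpr m.factorial_ne_zero

/-- The coefficient `pCoeff b c` without its factor `3b + 2`: the hypergeometric term in which the
telescoping certificates are expressed. -/
def pCoeffBase (b c : ℕ) : ℚ :=
  (-1) ^ b * (catalan b : ℚ) * ((2 * c + 1 - b).factorial : ℚ) * ((b + c + 1).factorial : ℚ) *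
    invFact ((c : ℤ) - b) * invFact (2 * c + b + 2)

/-- The coefficient `p(n,k,ℓ)` up to the sign `(-1)ⁿ`, which depends on `n` only through
`b = n - k` and `c = n - ℓ`; it vanishes for `c < b`. -/
def pCoeff (b c : ℕ) : ℚ := (3 * b + 2) * pCoeffBase b c

lemma pCoeffBase_of_lt {b c : ℕ} (h : c < b) : pCoeffBase b c = 0 := by
  rw [pCoeffBase, invFact_of_neg (z := (c : ℤ) - b) (by omega)]; ring

lemma pCoeff_of_lt {b c : ℕ} (h : c < b) : pCoeff b c = 0 := by
  rw [pCoeff, pCoeffBase_of_lt h, mul_zero]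

lemma cast_factorial_sub_of_lt {m b : ℕ} (h : b < m) :
    (((m - b).factorial : ℕ) : ℚ) = ((m : ℚ) - b) * (((m - (b + 1)).factorial : ℕ) : ℚ) := by
  obtain ⟨d, rfl⟩ := Nat.exists_eq_add_of_lt h
  rw [show b + d + 1 - b = d + 1 by omega, show b + d + 1 - (b + 1) = d by omega,
    Nat.factorial_succ]
  push_cast
  ring

lemma cast_factorial_eq_mul (m k : ℕ) (h : m = k + 1) :
    ((m.factorial : ℕ) : ℚ) = ((k : ℚ) + 1) * ((k.factorial : ℕ) : ℚ) := by
  rw [h, Nat.factorial_succ]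
  push_cast
  ring

lemma cast_add_two_mul_catalan_succ (b : ℕ) :
    ((b : ℚ) + 2) * catalan (b + 1) = 2 * (2 * b + 1) * catalan b := by
  exact_mod_cast add_two_mul_catalan_succ b

lemma pCoeffBase_succ {b c : ℕ} (h : b ≤ c) :
    ((b : ℚ) + 2) * (2 * c + 1 - b) * (2 * c + b + 3) * pCoeffBase (b + 1) c
      = - (2 * (2 * b + 1) * (c - b) * (b + c + 2)) * pCoeffBase b c := by
  have hfact₁ := cast_factorial_sub_of_lt (m := 2 * c + 1) (b := b) (by omega)
  have hfact₂ := cast_factorial_eq_mul (b + 1 + c + 1) (b + c + 1) (by ring)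
  have hinv₁ := invFact_eq_mul ((c : ℤ) - (b + 1 : ℕ)) ((c : ℤ) - b) (by push_cast; ring)
  have hinv₂ := invFact_eq_mul (2 * (c : ℤ) + b + 2) (2 * (c : ℤ) + (b + 1 : ℕ) + 2)
    (by push_cast; ring)
  unfold pCoeffBase
  rw [hfact₁, hfact₂, hinv₁, hinv₂, pow_succ]
  generalize invFact ((c : ℤ) - b) = x
  generalize invFact (2 * (c : ℤ) + (b + 1 : ℕ) + 2) = y
  generalize (((2 * c + 1 - (b + 1)).factorial : ℕ) : ℚ) = z
  generalize (((b + c + 1).factorial : ℕ) : ℚ) = w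
  push_cast
  linear_combination (-(-1 : ℚ) ^ b * (2 * c + 1 - b) * (2 * c + b + 3) * z *
    ((b + c + 2) * w) * ((c - b) * x) * y) * cast_add_two_mul_catalan_succ b

/-- The weight `(binom(a+b,2b-a+1) + binom(a+b+1,2b-a+1)) / (3a+1)`, the inhomogeneity in the
recurrence in `a` for the boundary coefficients `bdryCoeff a b`. -/
def bdryWeight (a b : ℕ) : ℚ :=
  ((a + b).factorial : ℚ) * invFact (2 * b - a + 1) * invFact (2 * a - b)

/-- The telescoping certificate, in the sense of Zeilberger, for `∑ b, bdryWeight a b * pCoeff b c`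
as a function of `a`. -/
def bdryCert (a c b : ℕ) : ℚ :=
  (b + 1) * (2 * c - b + 2) * (2 * c + b + 2) *
    ((a + b).factorial * invFact (2 * b - a - 1) * invFact (2 * a + 2 - b)) * pCoeffBase b c

lemma bdryWeight_mul_pCoeff_telescope (a : ℕ) {b c : ℕ} (h : b ≤ c) :
    2 * (2 * a + 3) * (c - a) * (c + a + 2) * (bdryWeight (a + 1) b * pCoeff b c)
      + a * (2 * c + a + 3) * (2 * c - a + 1) * (bdryWeight a b * pCoeff b c)
    = 3 * (a + 1) * (bdryCert a c b - bdryCert a c (b + 1)) := by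
  have hratio := pCoeffBase_succ h
  have hinv_b := invFact_eq_mul (2 * (b : ℤ) - a) (2 * b - a + 1) (by ring)
  have hinv_b_pred := invFact_eq_mul (2 * (b : ℤ) - a - 1) (2 * b - a) (by ring)
  have hinv_a := invFact_eq_mul (2 * (a : ℤ) - b) (2 * a + 1 - b) (by ring)
  have hinv_a_succ := invFact_eq_mul (2 * (a : ℤ) + 1 - b) (2 * a + 2 - b) (by ring)
  have hcast₁ : 2 * (b : ℤ) - ((a + 1 : ℕ) : ℤ) + 1 = 2 * b - a := by push_cast; ring
  have hcast₂ : 2 * ((a + 1 : ℕ) : ℤ) - b = 2 * a + 2 - b := by push_cast; ring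
  have hcast₃ : 2 * ((b + 1 : ℕ) : ℤ) - a - 1 = 2 * b - a + 1 := by push_cast; ring
  have hcast₄ : 2 * (a : ℤ) + 2 - ((b + 1 : ℕ) : ℤ) = 2 * a + 1 - b := by push_cast; ring
  unfold bdryCert bdryWeight pCoeff
  rw [hcast₁, hcast₂, hcast₃, hcast₄, hinv_b_pred, hinv_b, hinv_a, hinv_a_succ,
    show a + 1 + b = a + b + 1 by ring, show a + (b + 1) = a + b + 1 by ring, Nat.factorial_succ]
  push_cast
  linear_combination 3 * ((a : ℚ) + 1) * ((a + b + 1) * ((a + b).factorial : ℚ) *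
    invFact (2 * b - a + 1) * ((2 * a + 2 - b) * invFact (2 * a + 2 - b))) * hratio

lemma sum_bdryWeight_mul_pCoeff_recurrence (a c : ℕ) :
    2 * (2 * a + 3) * ((c : ℚ) - a) * (c + a + 2) *
        ∑ b ∈ range (c + 1), bdryWeight (a + 1) b * pCoeff b c
      + a * (2 * c + a + 3) * (2 * c - a + 1) *
        ∑ b ∈ range (c + 1), bdryWeight a b * pCoeff b c = 0 := by
  rw [mul_sum, mul_sum, ← sum_add_distrib,
    sum_congr rfl fun b hb =>
      bdryWeight_mul_pCoeff_telescope a (Nat.lt_succ_iff.mp (mem_range.mp hb)),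
    ← mul_sum, sum_range_sub', bdryCert, bdryCert, pCoeffBase_of_lt (Nat.lt_succ_self c),
    invFact_of_neg (z := 2 * ((0 : ℕ) : ℤ) - a - 1) (by push_cast; omega)]
  ring

lemma sum_bdryWeight_mul_pCoeff_eq_zero {a c : ℕ} (h : a < c) :
    ∑ b ∈ range (c + 1), bdryWeight (a + 1) b * pCoeff b c = 0 := by
  have hstep : ∀ a < c, (a : ℚ) * ∑ b ∈ range (c + 1), bdryWeight a b * pCoeff b c = 0 →
      ∑ b ∈ range (c + 1), bdryWeight (a + 1) b * pCoeff b c = 0 := by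
    intro a ha h0
    have hr := sum_bdryWeight_mul_pCoeff_recurrence a c
    have hca : (0 : ℚ) < (c : ℚ) - a := by
      have : (a : ℚ) < c := by exact_mod_cast ha
      linarith
    have hpos : (2 * (2 * a + 3) * ((c : ℚ) - a) * (c + a + 2)) ≠ 0 := by positivity
    refine (mul_eq_zero.mp ?_).resolve_left hpos
    linear_combination hr - (2 * c + a + 3) * (2 * c - a + 1) * h0
  induction a with
  | zero => exact hstep 0 h (by simp)
  | succ a ih => exact hstep _ h (by rw [ih (by omega), mul_zero])

/-- The common hypergeometric part of `2 ^ b * pCoeff b c` and `2 ^ b * pCoeff b (c + 1)`. -/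
def pCoeffStep (b c : ℕ) : ℚ :=
  (-2) ^ b * (catalan b : ℚ) * ((2 * c + 1 - b).factorial : ℚ) * ((b + c + 1).factorial : ℚ) *
    invFact ((c : ℤ) + 1 - b) * invFact (2 * c + b + 4)

lemma pCoeffStep_of_lt {b c : ℕ} (h : c + 1 < b) : pCoeffStep b c = 0 := by
  rw [pCoeffStep, invFact_of_neg (z := (c : ℤ) + 1 - b) (by omega)]; ring

lemma pCoeffStep_succ {b c : ℕ} (h : b ≤ c + 1) :
    ((b : ℚ) + 2) * (2 * c + 1 - b) * (2 * c + b + 5) * pCoeffStep (b + 1) c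
      = - (4 * (2 * b + 1) * (c + 1 - b) * (b + c + 2)) * pCoeffStep b c := by
  rcases h.eq_or_lt with rfl | h
  · rw [pCoeffStep_of_lt (Nat.lt_succ_self _)]
    push_cast
    ring
  have hfact₁ := cast_factorial_sub_of_lt (m := 2 * c + 1) (b := b) (by omega)
  have hfact₂ := cast_factorial_eq_mul (b + 1 + c + 1) (b + c + 1) (by ring)
  have hinv₁ := invFact_eq_mul ((c : ℤ) + 1 - (b + 1 : ℕ)) ((c : ℤ) + 1 - b) (by push_cast; ring)
  have hinv₂ := invFact_eq_mul (2 * (c : ℤ) + b + 4) (2 * (c : ℤ) + (b + 1 : ℕ) + 4)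
    (by push_cast; ring)
  unfold pCoeffStep
  rw [hfact₁, hfact₂, hinv₁, hinv₂, pow_succ]
  generalize invFact ((c : ℤ) + 1 - b) = x
  generalize invFact (2 * (c : ℤ) + (b + 1 : ℕ) + 4) = y
  generalize (((2 * c + 1 - (b + 1)).factorial : ℕ) : ℚ) = z
  generalize (((b + c + 1).factorial : ℕ) : ℚ) = w
  push_cast
  linear_combination (-2 * (-2 : ℚ) ^ b * (2 * c + 1 - b) * (2 * c + b + 5) * z *
    ((b + c + 2) * w) * ((c + 1 - b) * x) * y) * cast_add_two_mul_catalan_succ b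

lemma two_pow_mul_pCoeff_add {b c : ℕ} (h : b ≤ c + 1) :
    2 ^ b * pCoeff b (c + 1) + 2 ^ b * pCoeff b c = (3 * b + 2) *
      ((2 * c + 3 - b) * (2 * c + 2 - b) * (b + c + 2)
        + (c + 1 - b) * (2 * c + b + 3) * (2 * c + b + 4)) * pCoeffStep b c := by
  have hfact₁ := cast_factorial_sub_of_lt (m := 2 * (c + 1) + 1) (b := b) (by omega)
  have hfact₂ := cast_factorial_sub_of_lt (m := 2 * (c + 1)) (b := b) (by omega)
  have hfact₃ := cast_factorial_eq_mul (b + (c + 1) + 1) (b + c + 1) (by ring)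
  have hinv₁ := invFact_eq_mul ((c : ℤ) - b) ((c : ℤ) + 1 - b) (by ring)
  have hinv₂ := invFact_eq_mul (2 * (c : ℤ) + b + 2) (2 * (c : ℤ) + b + 3) (by ring)
  have hinv₃ := invFact_eq_mul (2 * (c : ℤ) + b + 3) (2 * (c : ℤ) + b + 4) (by ring)
  unfold pCoeff pCoeffBase pCoeffStep
  rw [hfact₁, show 2 * (c + 1) + 1 - (b + 1) = 2 * (c + 1) - b by omega, hfact₂,
    show 2 * (c + 1) - (b + 1) = 2 * c + 1 - b by omega, hfact₃, hinv₁, hinv₂, hinv₃,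
    show ((c + 1 : ℕ) : ℤ) - b = (c : ℤ) + 1 - b by push_cast; ring,
    show 2 * ((c + 1 : ℕ) : ℤ) + b + 2 = 2 * (c : ℤ) + b + 4 by push_cast; ring,
    show (-2 : ℚ) ^ b = 2 ^ b * (-1) ^ b by rw [← mul_pow]; norm_num]
  push_cast
  ring

/-- The telescoping certificate for `∑ b, 2 ^ b * pCoeff b c` as a function of `c`. -/
def twoPowCert (c b : ℕ) : ℚ :=
  (b + 1) * (2 * c - b + 2) * (2 * c + b + 4) * pCoeffStep b c

lemma two_pow_mul_pCoeff_telescope {b c : ℕ} (h : b ≤ c + 1) :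
    2 ^ b * pCoeff b (c + 1) + 2 ^ b * pCoeff b c
    = (2 * c + 3) * (twoPowCert c b - twoPowCert c (b + 1)) := by
  have hratio := pCoeffStep_succ h
  rw [two_pow_mul_pCoeff_add h, twoPowCert, twoPowCert]
  push_cast
  linear_combination ((2 : ℚ) * c + 3) * hratio

/-- The indicator of the even natural numbers, `(c + 1) mod 2` in the formulas for `t_n`. -/
def evenInd (c : ℕ) : ℚ := if c % 2 = 0 then 1 else 0

lemma evenInd_succ (c : ℕ) : evenInd (c + 1) = 1 - evenInd c := by
  unfold evenInd
  rcases Nat.mod_two_eq_zero_or_one c with h | h <;> simp [Nat.add_mod, h]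

lemma pCoeff_zero (c : ℕ) : pCoeff 0 c = 1 := by
  have hfact₁ := cast_factorial_eq_mul (2 * c + 2) (2 * c + 1) (by ring)
  have hfact₂ := cast_factorial_eq_mul (c + 1) c rfl
  have hne₁ := cast_factorial_ne_zero (2 * c + 1)
  have hne₂ := cast_factorial_ne_zero c
  unfold pCoeff pCoeffBase
  rw [show (c : ℤ) - (0 : ℕ) = (c : ℕ) by simp,
    show 2 * (c : ℤ) + (0 : ℕ) + 2 = ((2 * c + 2 : ℕ) : ℤ) by push_cast; ring,
    invFact_natCast, invFact_natCast, hfact₁, zero_add, hfact₂]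
  simp only [catalan_zero, Nat.sub_zero]
  push_cast
  field_simp
  ring

lemma mul_twoPowCert_zero (c : ℕ) : (2 * (c : ℚ) + 3) * twoPowCert c 0 = 1 := by
  have hfact₁ := cast_factorial_eq_mul (2 * c + 4) (2 * c + 3) (by ring)
  have hfact₂ := cast_factorial_eq_mul (2 * c + 3) (2 * c + 2) (by ring)
  have hfact₃ := cast_factorial_eq_mul (2 * c + 2) (2 * c + 1) (by ring)
  have hne₁ := cast_factorial_ne_zero (2 * c + 1)
  have hne₂ := cast_factorial_ne_zero (c + 1)
  unfold twoPowCert pCoeffStep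
  rw [show (c : ℤ) + 1 - (0 : ℕ) = ((c + 1 : ℕ) : ℤ) by push_cast; ring,
    show 2 * (c : ℤ) + (0 : ℕ) + 4 = ((2 * c + 4 : ℕ) : ℤ) by push_cast; ring,
    invFact_natCast, invFact_natCast, hfact₁, hfact₂, hfact₃]
  simp only [catalan_zero, Nat.sub_zero, zero_add]
  push_cast
  field_simp
  ring

lemma sum_two_pow_mul_pCoeff (c : ℕ) :
    ∑ b ∈ range (c + 1), 2 ^ b * pCoeff b c = evenInd c := by
  induction c with
  | zero => simp [pCoeff_zero, evenInd]
  | succ c ih =>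
    have hold : ∑ b ∈ range (c + 1 + 1), 2 ^ b * pCoeff b c = evenInd c := by
      rw [sum_range_succ, ih, pCoeff_of_lt (Nat.lt_succ_self c), mul_zero, add_zero]
    have hadd : ∑ b ∈ range (c + 1 + 1), (2 ^ b * pCoeff b (c + 1) + 2 ^ b * pCoeff b c) = 1 := by
      rw [sum_congr rfl fun b hb =>
          two_pow_mul_pCoeff_telescope (Nat.lt_succ_iff.mp (mem_range.mp hb)),
        ← mul_sum, sum_range_sub', mul_sub, mul_twoPowCert_zero, twoPowCert,
        pCoeffStep_of_lt (Nat.lt_succ_self _), mul_zero, mul_zero, sub_zero]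
    rw [sum_add_distrib, hold] at hadd
    rw [evenInd_succ]
    linear_combination hadd

lemma pCoeff_self_ne_zero (c : ℕ) : pCoeff c c ≠ 0 := by
  have hcat : (catalan c : ℚ) ≠ 0 := Nat.cast_ne_zero.mpr (catalan_ne_zero c)
  unfold pCoeff pCoeffBase
  rw [show (c : ℤ) - (c : ℕ) = (0 : ℕ) by simp,
    show 2 * (c : ℤ) + (c : ℕ) + 2 = ((2 * c + c + 2 : ℕ) : ℤ) by push_cast; ring,
    invFact_natCast, invFact_natCast]
  have hlin : (3 * (c : ℚ) + 2) ≠ 0 := by positivity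
  simp [hcat, Nat.factorial_ne_zero, hlin]

/-- The binomial coefficient `binom(N, z)` with integral lower index, zero at negative `z`. -/
def intChoose (N : ℕ) (z : ℤ) : ℚ := if z < 0 then 0 else (N.choose z.toNat : ℚ)

/-- The sum of `binom(N, j)` over `0 ≤ j < z`. -/
def chooseSum (N : ℕ) (z : ℤ) : ℚ := ∑ j ∈ range z.toNat, (N.choose j : ℚ)

lemma intChoose_of_neg {N : ℕ} {z : ℤ} (h : z < 0) : intChoose N z = 0 := by simp [intChoose, h]

lemma intChoose_natCast (N k : ℕ) : intChoose N (k : ℤ) = (N.choose k : ℚ) := by simp [intChoose]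

lemma intChoose_of_gt {N : ℕ} {z : ℤ} (h : (N : ℤ) < z) : intChoose N z = 0 := by
  obtain ⟨k, rfl⟩ := Int.eq_ofNat_of_zero_le (a := z) (by omega)
  rw [intChoose_natCast, Nat.choose_eq_zero_of_lt (by omega), Nat.cast_zero]

lemma intChoose_succ (N : ℕ) (z : ℤ) :
    intChoose (N + 1) z = intChoose N z + intChoose N (z - 1) := by
  rcases lt_trichotomy z 0 with h | h | h
  · rw [intChoose_of_neg h, intChoose_of_neg h, intChoose_of_neg (by omega), add_zero]
  · subst h; simp [intChoose]
  · obtain ⟨m, rfl⟩ : ∃ m : ℕ, z = (m + 1 : ℕ) := ⟨(z - 1).toNat, by omega⟩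
    rw [show ((m + 1 : ℕ) : ℤ) - 1 = (m : ℕ) by push_cast; ring, intChoose_natCast,
      intChoose_natCast, intChoose_natCast, Nat.choose_succ_succ]
    push_cast
    ring

lemma intChoose_eq_invFact (N : ℕ) (z : ℤ) :
    intChoose N z = (N.factorial : ℚ) * invFact z * invFact (N - z) := by
  rcases lt_or_ge z 0 with h | h
  · rw [intChoose_of_neg h, invFact_of_neg h]; ring
  rcases lt_or_ge (N : ℤ) z with h' | h'
  · rw [intChoose_of_gt h', invFact_of_neg (z := N - z) (by omega)]; ring
  obtain ⟨k, rfl⟩ := Int.eq_ofNat_of_zero_le h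
  have hk : k ≤ N := by omega
  rw [intChoose_natCast, show (N : ℤ) - (k : ℕ) = ((N - k : ℕ) : ℤ) by omega, invFact_natCast,
    invFact_natCast, Nat.cast_choose ℚ hk]
  field_simp

lemma chooseSum_of_nonpos {N : ℕ} {z : ℤ} (h : z ≤ 0) : chooseSum N z = 0 := by
  rw [chooseSum, Int.toNat_of_nonpos h, sum_range_zero]

lemma chooseSum_add_one (N : ℕ) (z : ℤ) : chooseSum N (z + 1) = chooseSum N z + intChoose N z := by
  rcases lt_or_ge z 0 with h | h
  · rw [chooseSum_of_nonpos (by omega), chooseSum_of_nonpos (by omega), intChoose_of_neg h,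
      add_zero]
  · obtain ⟨k, rfl⟩ := Int.eq_ofNat_of_zero_le h
    rw [intChoose_natCast, chooseSum, chooseSum, show ((k : ℤ) + 1).toNat = k + 1 by omega,
      sum_range_succ, Int.toNat_natCast]

lemma chooseSum_zero (z : ℤ) : chooseSum 0 z = if 0 < z then 1 else 0 := by
  split_ifs with h
  · obtain ⟨k, rfl⟩ : ∃ k : ℕ, z = (k + 1 : ℕ) := ⟨(z - 1).toNat, by omega⟩
    rw [chooseSum, Int.toNat_natCast, sum_range_succ']
    simp
  · exact chooseSum_of_nonpos (by omega)

lemma chooseSum_succ (N : ℕ) (z : ℤ) :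
    chooseSum (N + 1) z = chooseSum N z + chooseSum N (z - 1) := by
  rcases le_or_gt z 0 with h | h
  · rw [chooseSum_of_nonpos h, chooseSum_of_nonpos h, chooseSum_of_nonpos (by omega), add_zero]
  obtain ⟨k, rfl⟩ := Int.eq_ofNat_of_zero_le h.le
  clear h
  induction k with
  | zero => simp [chooseSum]
  | succ k ih =>
    have hpred := chooseSum_add_one N ((k : ℤ) - 1)
    rw [sub_add_cancel] at hpred
    rw [Nat.cast_succ, chooseSum_add_one, chooseSum_add_one, add_sub_cancel_right, ih,
      intChoose_succ]
    linear_combination -hpred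

lemma chooseSum_add_chooseSum (N : ℕ) (z : ℤ) :
    chooseSum N z + chooseSum N (N + 1 - z) = 2 ^ N := by
  induction N generalizing z with
  | zero =>
    rw [chooseSum_zero, chooseSum_zero]
    rcases lt_or_ge 0 z with h | h
    · rw [if_pos h, if_neg (by push_cast; omega)]; norm_num
    · rw [if_neg (by omega), if_pos (by push_cast; omega)]; norm_num
  | succ N ih =>
    rw [chooseSum_succ, chooseSum_succ, pow_succ,
      show ((N + 1 : ℕ) : ℤ) + 1 - z - 1 = N + 1 - z by push_cast; ring,
      show ((N + 1 : ℕ) : ℤ) + 1 - z = N + 1 - (z - 1) by push_cast; ring]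
    linear_combination ih z + ih (z - 1)

lemma chooseSum_of_lt {N : ℕ} {z : ℤ} (h : (N : ℤ) < z) : chooseSum N z = 2 ^ N := by
  rw [← chooseSum_add_chooseSum N z, chooseSum_of_nonpos (z := N + 1 - z) (by omega), add_zero]

/-- The coefficients of the linear system imposed by the rows at the top of `V_n`, with the rows
and the unknowns counted from the corner: partial sums of a row of Pascal's triangle. -/
def bdryCoeff (a b : ℕ) : ℚ := chooseSum (a + b + 1) (2 * b + 1 - a)

lemma bdryCoeff_add_bdryCoeff (a b : ℕ) : bdryCoeff a b + bdryCoeff b a = 2 * 2 ^ a * 2 ^ b := by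
  have h := chooseSum_add_chooseSum (a + b + 1) (2 * b + 1 - a)
  rw [show ((a + b + 1 : ℕ) : ℤ) + 1 - (2 * b + 1 - a) = 2 * a + 1 - b by push_cast; ring] at h
  rw [bdryCoeff, bdryCoeff, show b + a + 1 = a + b + 1 by ring, h]
  ring

lemma bdryCoeff_zero (b : ℕ) :
    bdryCoeff 0 b = 2 * (if b = 0 then 0 else 2 ^ b) + if b = 0 then 1 else 0 := by
  rcases Nat.eq_zero_or_pos b with rfl | h
  · simp [bdryCoeff, chooseSum]
  · rw [bdryCoeff, chooseSum_of_lt (by push_cast; omega), if_neg (by omega), if_neg (by omega)]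
    ring

lemma bdryCoeff_succ (a b : ℕ) :
    bdryCoeff (a + 1) b = 2 * bdryCoeff a b - (3 * a + 4) * bdryWeight (a + 1) b := by
  have hpascal := chooseSum_succ (a + b + 1) (2 * b - a)
  have hstep := chooseSum_add_one (a + b + 1) (2 * b - a)
  have hstep_pred := chooseSum_add_one (a + b + 1) (2 * b - a - 1)
  have hinv_b := invFact_eq_mul (2 * (b : ℤ) - a - 1) (2 * b - a) (by ring)
  have hinv_a := invFact_eq_mul (2 * (a : ℤ) + 1 - b) (2 * a + 2 - b) (by ring)
  rw [intChoose_eq_invFact, show ((a + b + 1 : ℕ) : ℤ) - (2 * b - a) = 2 * a + 1 - b by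
    push_cast; ring, hinv_a] at hstep
  rw [intChoose_eq_invFact, show ((a + b + 1 : ℕ) : ℤ) - (2 * b - a - 1) = 2 * a + 2 - b by
    push_cast; ring, hinv_b, sub_add_cancel] at hstep_pred
  unfold bdryCoeff bdryWeight
  rw [show a + 1 + b + 1 = a + b + 1 + 1 by ring, show a + 1 + b = a + b + 1 by ring,
    show 2 * (b : ℤ) + 1 - ((a + 1 : ℕ) : ℤ) = 2 * b - a by push_cast; ring,
    show 2 * (b : ℤ) + 1 - a = 2 * b - a + 1 by ring,
    show 2 * (b : ℤ) - ((a + 1 : ℕ) : ℤ) + 1 = 2 * b - a by push_cast; ring,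
    show 2 * ((a + 1 : ℕ) : ℤ) - b = 2 * a + 2 - b by push_cast; ring, hpascal, hstep]
  push_cast at hstep_pred ⊢
  linear_combination -hstep_pred

/-! ### The Gram matrix of the boundary coefficients -/

lemma neg_one_pow_eq (c : ℕ) : (-1 : ℚ) ^ c = 2 * evenInd c - 1 := by
  induction c with
  | zero => norm_num [evenInd]
  | succ c ih => rw [pow_succ, ih, evenInd_succ]; ring

lemma sum_bdryCoeff_mul_pCoeff {a c : ℕ} (h : a ≤ c) :
    ∑ b ∈ range (c + 1), bdryCoeff a b * pCoeff b c = (-1) ^ c * 2 ^ a := by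
  induction a with
  | zero =>
    have htwo := sum_two_pow_mul_pCoeff c
    rw [sum_range_succ', pCoeff_zero, pow_zero, one_mul] at htwo
    rw [sum_range_succ', pCoeff_zero, neg_one_pow_eq]
    simp only [bdryCoeff_zero, Nat.add_eq_zero_iff, one_ne_zero, and_false, if_false, if_true,
      add_zero, mul_assoc, ← mul_sum]
    linear_combination 2 * htwo
  | succ a ih =>
    have hstep (b : ℕ) : bdryCoeff (a + 1) b * pCoeff b c
        = 2 * (bdryCoeff a b * pCoeff b c) - (3 * a + 4) * (bdryWeight (a + 1) b * pCoeff b c) := by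
      rw [bdryCoeff_succ]; ring
    simp only [hstep]
    rw [sum_sub_distrib, ← mul_sum, ← mul_sum, ih (by omega),
      sum_bdryWeight_mul_pCoeff_eq_zero (by omega)]
    ring

lemma sum_mul_pCoeff_of_le (f : ℕ → ℚ) {c n : ℕ} (h : c ≤ n) :
    ∑ b ∈ range (n + 1), f b * pCoeff b c = ∑ b ∈ range (c + 1), f b * pCoeff b c := by
  symm
  refine sum_subset (range_mono (by omega)) fun b _ hb => ?_
  rw [pCoeff_of_lt (by simpa using hb), mul_zero]

/-- The skew-symmetric form `[c₁ = c₂ + 1] - [c₂ = c₁ + 1]`: the coefficient extracted by the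
integrals over `s₁` and `s₂` in the definition of `t_n`. -/
def skew (c₁ c₂ : ℕ) : ℚ := (if c₁ = c₂ + 1 then 1 else 0) - if c₂ = c₁ + 1 then 1 else 0

lemma sum_mul_skew (f : ℕ → ℚ) {n c : ℕ} (hc : c ≤ n) :
    ∑ x ∈ range (n + 1), f x * skew x c
      = f (c + 1) - (if c = 0 then 0 else f (c - 1)) - if c = n then f (n + 1) else 0 := by
  simp only [skew, mul_sub, sum_sub_distrib, mul_ite, mul_one, mul_zero]
  rw [sum_ite_eq', sub_right_comm]
  congr 1
  · rcases hc.eq_or_lt with rfl | h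
    · simp
    · rw [if_pos (mem_range.mpr (by omega)), if_neg h.ne, sub_zero]
  · rcases c with _ | d
    · simp
    · simp only [Nat.add_right_cancel_iff, Nat.add_eq_zero_iff, one_ne_zero, and_false, if_false,
        Nat.add_sub_cancel]
      rw [sum_ite_eq, if_pos (mem_range.mpr (by omega))]

/-- The values of the bilinear form `bdryCoeff` on the vectors `pCoeff · c'` and `pCoeff · c`. -/
def gramEntry (c' c : ℕ) : ℚ := if c' ≤ c then (-1) ^ c * evenInd c' else evenInd c

lemma evenInd_mul_self (c : ℕ) : evenInd c * evenInd c = evenInd c := by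
  unfold evenInd; split_ifs <;> norm_num

lemma gramEntry_one (c' : ℕ) : gramEntry c' 1 = -if c' = 0 then 1 else 0 := by
  rcases c' with _ | _ | c' <;> simp [gramEntry, evenInd]

lemma gramEntry_add_two (c' c : ℕ) :
    gramEntry c' (c + 2) - gramEntry c' c = -if c' = c + 1 then 1 else 0 := by
  have hsq := evenInd_mul_self c
  have heven : evenInd (c + 2) = evenInd c := by rw [evenInd_succ, evenInd_succ, sub_sub_cancel]
  unfold gramEntry
  rcases lt_trichotomy c' (c + 1) with h | rfl | h
  · rw [if_pos (by omega), if_pos (by omega), if_neg h.ne, pow_add]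
    ring
  · rw [if_pos (by omega), if_neg (by omega), if_pos rfl, pow_add, neg_one_pow_eq, evenInd_succ]
    linear_combination -2 * hsq
  · rw [if_neg (by omega : ¬c' ≤ c), if_neg h.ne']
    split_ifs with h'
    · obtain rfl : c' = c + 2 := by omega
      rw [heven, pow_add, neg_one_pow_eq]
      linear_combination 2 * hsq
    · rw [heven]; ring

lemma sum_gramEntry_mul_skew {n c' c : ℕ} (h' : c' ≤ n) (hc : c ≤ n) :
    ∑ x ∈ range (n + 1), gramEntry c' x * skew x c
      = -(if c' = c then 1 else 0) + (-1) ^ n * evenInd c' * if c = n then 1 else 0 := by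
  have hlast : gramEntry c' (n + 1) = -((-1) ^ n * evenInd c') := by
    rw [gramEntry, if_pos (by omega), pow_succ]; ring
  rw [sum_mul_skew _ hc, hlast]
  rcases c with _ | d
  · rw [zero_add, gramEntry_one, if_pos rfl]
    split_ifs <;> ring
  · rw [if_neg (Nat.succ_ne_zero d), Nat.add_sub_cancel, gramEntry_add_two]
    split_ifs <;> ring

/-- The upper triangular matrix of the coefficients `pCoeff b c`. -/
def pMatrix (n : ℕ) : Matrix (Fin (n + 1)) (Fin (n + 1)) ℚ := .of fun b c => pCoeff b c

/-- The matrix of the boundary coefficients `bdryCoeff a b`. -/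
def bdryMatrix (n : ℕ) : Matrix (Fin (n + 1)) (Fin (n + 1)) ℚ := .of fun a b => bdryCoeff a b

/-- The matrix of the skew-symmetric form `skew`. -/
def skewMatrix (n : ℕ) : Matrix (Fin (n + 1)) (Fin (n + 1)) ℚ := .of fun x y => skew x y

section Gram

open Matrix

lemma isUnit_pMatrix_transpose (n : ℕ) : IsUnit (pMatrix n)ᵀ := by
  have hupper : (pMatrix n).IsUpperTriangular := fun _ _ h => pCoeff_of_lt h
  rw [isUnit_transpose, isUnit_iff_isUnit_det, det_of_isUpperTriangular hupper, isUnit_iff_ne_zero]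
  exact prod_ne_zero_iff.mpr fun c _ => pCoeff_self_ne_zero c

lemma pMatrix_transpose_mulVec_two_pow (n : ℕ) :
    (pMatrix n)ᵀ *ᵥ (fun a => 2 ^ (a : ℕ)) = fun c : Fin (n + 1) => evenInd c := by
  ext c
  rw [← sum_two_pow_mul_pCoeff, ← sum_mul_pCoeff_of_le _ (Nat.lt_succ_iff.mp c.2),
    ← Fin.sum_univ_eq_sum_range (fun b => 2 ^ b * pCoeff b c)]
  exact dotProduct_comm (fun b : Fin (n + 1) => pCoeff b c) _

lemma bdryMatrix_mul_pMatrix_apply {n : ℕ} {a c : Fin (n + 1)} (h : a ≤ c) :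
    (bdryMatrix n * pMatrix n) a c = (-1) ^ (c : ℕ) * 2 ^ (a : ℕ) := by
  rw [← sum_bdryCoeff_mul_pCoeff h, ← sum_mul_pCoeff_of_le _ (Nat.lt_succ_iff.mp c.2)]
  exact Fin.sum_univ_eq_sum_range (fun b => bdryCoeff a b * pCoeff b c) _

lemma bdryMatrix_add_transpose (n : ℕ) :
    bdryMatrix n + (bdryMatrix n)ᵀ = (2 : ℚ) • vecMulVec (2 ^ ·.val) (2 ^ ·.val) := by
  ext a b
  exact (bdryCoeff_add_bdryCoeff a b).trans (mul_assoc _ _ _)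

lemma gramMatrix_apply_of_le {n : ℕ} {c' c : Fin (n + 1)} (h : c' ≤ c) :
    ((pMatrix n)ᵀ * (bdryMatrix n * pMatrix n)) c' c = (-1) ^ (c : ℕ) * evenInd c' := by
  rw [← congrFun (pMatrix_transpose_mulVec_two_pow n) c', mulVec, dotProduct, mul_sum, mul_apply]
  refine sum_congr rfl fun a _ => ?_
  rcases le_or_gt a c' with ha | ha
  · rw [bdryMatrix_mul_pMatrix_apply (ha.trans h)]; ring
  · rw [transpose_apply, pMatrix, of_apply, pCoeff_of_lt ha]; ring

lemma gramMatrix_add_transpose (n : ℕ) :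
    (pMatrix n)ᵀ * (bdryMatrix n * pMatrix n) + ((pMatrix n)ᵀ * (bdryMatrix n * pMatrix n))ᵀ
      = (2 : ℚ) • vecMulVec (evenInd ·.val) (evenInd ·.val) := by
  rw [transpose_mul, transpose_mul, transpose_transpose, Matrix.mul_assoc, ← Matrix.mul_add,
    ← Matrix.add_mul, bdryMatrix_add_transpose, ← pMatrix_transpose_mulVec_two_pow,
    ← mul_vecMulVec]
  simp [mul_vecMulVec, vecMulVec_mul, mulVec_transpose]

lemma gramMatrix_apply {n : ℕ} (c' c : Fin (n + 1)) :
    ((pMatrix n)ᵀ * (bdryMatrix n * pMatrix n)) c' c = gramEntry c' c := by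
  rcases le_or_gt c' c with h | h
  · exact (gramMatrix_apply_of_le h).trans (if_pos h).symm
  · have hadd := congrFun₂ (gramMatrix_add_transpose n) c' c
    rw [Matrix.add_apply, transpose_apply, gramMatrix_apply_of_le h.le, neg_one_pow_eq,
      Matrix.smul_apply, vecMulVec_apply, smul_eq_mul] at hadd
    refine Eq.trans ?_ (if_neg (not_le.mpr h)).symm
    linear_combination hadd

lemma gramMatrix_mul_skewMatrix (n : ℕ) :
    (pMatrix n)ᵀ * (bdryMatrix n * pMatrix n) * skewMatrix n
      = -1 + (-1 : ℚ) ^ n • vecMulVec (evenInd ·.val) (Pi.single (Fin.last n) 1) := by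
  ext c' c
  have h := sum_gramEntry_mul_skew (Nat.lt_succ_iff.mp c'.2) (Nat.lt_succ_iff.mp c.2)
  rw [← Fin.sum_univ_eq_sum_range (fun x => gramEntry c' x * skew x c)] at h
  rw [mul_apply]
  simp only [gramMatrix_apply]
  refine h.trans ?_
  simp [vecMulVec_apply, Pi.single_apply, one_apply, Fin.ext_iff]

lemma bdryMatrix_mul_skew_conj (n : ℕ) :
    bdryMatrix n * (pMatrix n * skewMatrix n * (pMatrix n)ᵀ)
      = -1 + (-1 : ℚ) ^ n • vecMulVec (2 ^ ·.val) (fun b => pMatrix n b (Fin.last n)) := by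
  refine (isUnit_pMatrix_transpose n).mul_left_cancel ?_
  calc (pMatrix n)ᵀ * (bdryMatrix n * (pMatrix n * skewMatrix n * (pMatrix n)ᵀ))
      = (pMatrix n)ᵀ * (bdryMatrix n * pMatrix n) * skewMatrix n * (pMatrix n)ᵀ := by
        simp only [Matrix.mul_assoc]
    _ = _ := by
        rw [gramMatrix_mul_skewMatrix, Matrix.add_mul, Matrix.mul_add, Matrix.smul_mul,
          Matrix.mul_smul, vecMulVec_mul, mul_vecMulVec, pMatrix_transpose_mulVec_two_pow,
          vecMul_transpose, Matrix.neg_mul, Matrix.one_mul, Matrix.mul_neg, Matrix.mul_one,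
          mulVec_single_one]
        rfl

/-- The skew-symmetric bilinear form whose values are the quadruple sums in `t_n`, the coordinate
`b` standing for the summation index `n - k`. -/
def tForm (n : ℕ) : LinearMap.BilinForm ℚ (Fin (n + 1) → ℚ) :=
  toBilin' (pMatrix n * skewMatrix n * (pMatrix n)ᵀ)

/-- The linear form whose values are the sums over `k` in `h_n^{0,b}` and `h_n^{1,b}`, the
coordinate `b` standing for the summation index `n - k`. -/
def pForm (n : ℕ) : (Fin (n + 1) → ℚ) →ₗ[ℚ] ℚ :=
  (-1 : ℚ) ^ n • dotProductBilin ℚ ℚ (fun b => pMatrix n b (Fin.last n))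

lemma pForm_apply (n : ℕ) (y : Fin (n + 1) → ℚ) :
    pForm n y = (-1) ^ n * ((fun b => pMatrix n b (Fin.last n)) ⬝ᵥ y) := rfl

lemma tForm_bdryMatrix {n : ℕ} (a : Fin (n + 1)) (y : Fin (n + 1) → ℚ) :
    tForm n (bdryMatrix n a) y = -y a + 2 ^ (a : ℕ) * pForm n y := by
  have h := congrFun (congrArg (· *ᵥ y) (bdryMatrix_mul_skew_conj n)) a
  simp only [← mulVec_mulVec (v := y) (M := bdryMatrix n), add_mulVec, neg_mulVec, one_mulVec,
    smul_mulVec, vecMulVec_mulVec] at h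
  rw [tForm, toBilin'_apply', pForm_apply]
  refine h.trans ?_
  simp only [op_smul_eq_smul, Pi.add_apply, Pi.neg_apply, Pi.smul_apply, smul_eq_mul]
  ring

lemma pForm_bdryMatrix {n : ℕ} (a : Fin (n + 1)) : pForm n (bdryMatrix n a) = 2 ^ (a : ℕ) := by
  rw [pForm_apply, dotProduct_comm,
    show bdryMatrix n a ⬝ᵥ (fun b => pMatrix n b (Fin.last n)) = _ from
      bdryMatrix_mul_pMatrix_apply (Fin.le_last a), Fin.val_last, ← mul_assoc,
    ← mul_pow, neg_one_mul, neg_neg, one_pow, one_mul]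

lemma one_vecMul_skewMatrix (n : ℕ) :
    1 ᵥ* skewMatrix n = Pi.single 0 1 - Pi.single (Fin.last n) 1 := by
  ext c
  have h := sum_mul_skew (fun _ => 1) (Nat.lt_succ_iff.mp c.2)
  rw [← Fin.sum_univ_eq_sum_range (fun x => 1 * skew x c)] at h
  refine h.trans ?_
  simp only [Pi.sub_apply, Pi.single_apply, Fin.ext_iff, Fin.val_zero, Fin.val_last]
  split_ifs <;> ring

lemma tForm_single_zero (n : ℕ) (y : Fin (n + 1) → ℚ) :
    tForm n (Pi.single 0 1) y = y 0 - (-1) ^ n * pForm n y := by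
  have hrow : (pMatrix n).row 0 = 1 := funext fun c => pCoeff_zero c
  have hcol : (pMatrix n).col 0 = Pi.single 0 1 := by
    ext b
    rcases Fin.eq_zero_or_eq_succ b with rfl | ⟨d, rfl⟩
    · exact (pCoeff_zero 0).trans (Pi.single_eq_same (M := fun _ => ℚ) 0 1).symm
    · exact (pCoeff_of_lt (Fin.succ_pos d)).trans
        (Pi.single_eq_of_ne (M := fun _ => ℚ) (Fin.succ_ne_zero d) 1).symm
  rw [tForm, toBilin'_apply', dotProduct_mulVec, ← vecMul_vecMul, ← vecMul_vecMul,
    single_one_vecMul, hrow, one_vecMul_skewMatrix, vecMul_transpose, mulVec_sub, mulVec_single_one,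
    mulVec_single_one, hcol, sub_dotProduct, single_one_dotProduct, pForm_apply, ← mul_assoc,
    ← mul_pow, neg_one_mul, neg_neg, one_pow, one_mul]
  rfl

/-- The values at the corner of the graph of the vectors `evenVec` defined below. -/
def twoPowVec (n : ℕ) (b : Fin (n + 1)) : ℚ := if b = 0 then 0 else 2 ^ (b : ℕ)

lemma twoPowVec_eq (n : ℕ) :
    twoPowVec n = (2⁻¹ : ℚ) • (bdryMatrix n 0 - Pi.single 0 1) := by
  ext b
  have h : bdryMatrix n 0 b = _ := bdryCoeff_zero b
  simp only [twoPowVec, Pi.smul_apply, Pi.sub_apply, h, Pi.single_apply, Fin.val_eq_zero_iff,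
    smul_eq_mul]
  split_ifs <;> ring

lemma tForm_twoPowVec (n : ℕ) (y : Fin (n + 1) → ℚ) :
    tForm n (twoPowVec n) y = -y 0 + evenInd n * pForm n y := by
  rw [twoPowVec_eq, map_smul, map_sub, LinearMap.smul_apply, LinearMap.sub_apply, tForm_bdryMatrix,
    tForm_single_zero, neg_one_pow_eq, Fin.val_zero, pow_zero, smul_eq_mul]
  ring

lemma pForm_twoPowVec (n : ℕ) : pForm n (twoPowVec n) = 1 - evenInd n := by
  have hsingle : pForm n (Pi.single 0 1) = (-1) ^ n := by
    rw [pForm_apply, dotProduct_single_one, show pMatrix n 0 (Fin.last n) = 1 from pCoeff_zero n,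
      mul_one]
  rw [twoPowVec_eq, map_smul, map_sub, pForm_bdryMatrix, hsingle, neg_one_pow_eq, Fin.val_zero,
    pow_zero, smul_eq_mul]
  ring

end Gram

/-! ### Contour integrals -/

section ContourIntegrals

open Complex Metric

variable {R : ℝ} {a : ℂ}

lemma integral_zpow (hR : 0 < R) (z : ℤ) :
    (∮ r in C(0, R), r ^ z) = 2 * Real.pi * I * if z = -1 then 1 else 0 := by
  split_ifs with h
  · subst h
    simpa using circleIntegral.integral_sub_center_inv (0 : ℂ) hR.ne'
  · simpa using circleIntegral.integral_sub_zpow_of_ne h 0 0 R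

lemma ne_zero_of_mem_sphere_of_pos (hR : 0 < R) {r : ℂ} (hr : r ∈ sphere (0 : ℂ) R) : r ≠ 0 :=
  ne_zero_of_mem_sphere hR.ne' ⟨r, hr⟩

lemma circleIntegrable_mul_zpow (hR : 0 < R) {f : ℂ → ℂ} (hf : ContinuousOn f (sphere 0 R))
    (z : ℤ) : CircleIntegrable (fun r => f r * r ^ z) 0 R :=
  (hf.mul fun _ hr => (continuousAt_zpow₀ _ z
    (Or.inl (ne_zero_of_mem_sphere_of_pos hR hr))).continuousWithinAt).circleIntegrable hR.le

lemma integral_one_add_pow_mul_zpow (hR : 0 < R) (N : ℕ) (z : ℤ) :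
    (∮ r in C(0, R), (1 + r) ^ N * r ^ z) = 2 * Real.pi * I * intChoose N (-z - 1) := by
  induction N generalizing z with
  | zero =>
    simp only [pow_zero, one_mul]
    rw [integral_zpow hR]
    congr 1
    unfold intChoose
    rcases lt_trichotomy z (-1) with h | rfl | h
    · rw [if_neg (by omega), if_neg (by omega), Nat.choose_eq_zero_of_lt (by omega)]
      simp
    · simp
    · rw [if_neg (by omega), if_pos (by omega), Rat.cast_zero]
  | succ N ih =>
    have hint := circleIntegrable_mul_zpow hR (f := fun r => (1 + r) ^ N) (by fun_prop)
    have hpascal : (∮ r in C(0, R), (1 + r) ^ (N + 1) * r ^ z)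
        = ∮ r in C(0, R), ((1 + r) ^ N * r ^ z + (1 + r) ^ N * r ^ (z + 1)) := by
      refine circleIntegral.integral_congr hR.le fun r hr => ?_
      simp only [zpow_add_one₀ (ne_zero_of_mem_sphere_of_pos hR hr)]
      ring
    rw [hpascal, circleIntegral.integral_add (hint z) (hint (z + 1)), ih, ih, intChoose_succ,
      show -(z + 1) - 1 = -z - 1 - 1 by ring]
    push_cast
    ring

lemma one_sub_mul_ne_zero (ha : ‖a‖ * R < 1) {r : ℂ} (hr : r ∈ closedBall (0 : ℂ) R) :
    1 - a * r ≠ 0 := by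
  intro h
  have hnorm : ‖a * r‖ = 1 := by rw [← sub_eq_zero.mp h, norm_one]
  rw [norm_mul] at hnorm
  have := mul_le_mul_of_nonneg_left (mem_closedBall_zero_iff.mp hr) (norm_nonneg a)
  linarith

lemma continuousOn_mul_inv_one_sub_mul (ha : ‖a‖ * R < 1) {f : ℂ → ℂ} (hf : Continuous f) :
    ContinuousOn (fun r => f r * (1 - a * r)⁻¹) (sphere 0 R) :=
  hf.continuousOn.mul (ContinuousOn.inv₀ (by fun_prop)
    fun _ hr => one_sub_mul_ne_zero ha (sphere_subset_closedBall hr))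

lemma integral_mul_inv_one_sub_mul_pow (hR : 0 < R) (ha : ‖a‖ * R < 1) {f : ℂ → ℂ}
    (hf : Differentiable ℂ f) (m : ℕ) :
    (∮ r in C(0, R), f r * (1 - a * r)⁻¹ * r ^ (m : ℤ)) = 0 := by
  have hdiff : ∀ r ∈ closedBall (0 : ℂ) R,
      DifferentiableAt ℂ (fun r => f r * (1 - a * r)⁻¹ * r ^ (m : ℤ)) r := fun r hr => by
    have := one_sub_mul_ne_zero ha hr
    simp only [zpow_natCast]
    fun_prop (disch := assumption)
  exact circleIntegral_eq_zero_of_differentiable_on_off_countable hR.le Set.countable_empty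
    (fun r hr => (hdiff r hr).continuousAt.continuousWithinAt)
    fun r hr => hdiff r (ball_subset_closedBall hr.1)

lemma integral_mul_inv_one_sub_mul_zpow_sub_one (hR : 0 < R) (ha : ‖a‖ * R < 1) {f : ℂ → ℂ}
    (hf : Continuous f) (z : ℤ) :
    (∮ r in C(0, R), f r * (1 - a * r)⁻¹ * r ^ (z - 1))
      = a * (∮ r in C(0, R), f r * (1 - a * r)⁻¹ * r ^ z) + ∮ r in C(0, R), f r * r ^ (z - 1) := by
  have hint := circleIntegrable_mul_zpow hR (continuousOn_mul_inv_one_sub_mul ha hf) z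
  have hint' := circleIntegrable_mul_zpow hR hf.continuousOn (z - 1)
  have hconst : CircleIntegrable (fun r => a * (f r * (1 - a * r)⁻¹ * r ^ z)) 0 R :=
    IntervalIntegrable.const_mul hint a
  rw [← circleIntegral.integral_const_mul, ← circleIntegral.integral_add hconst hint']
  refine circleIntegral.integral_congr hR.le fun r hr => ?_
  have hr0 := ne_zero_of_mem_sphere_of_pos hR hr
  have hone := one_sub_mul_ne_zero ha (sphere_subset_closedBall hr)
  simp only [zpow_sub_one₀ hr0]
  field_simp
  ring

lemma integral_one_add_pow_div_one_sub_mul_zpow (hR : 0 < R) (hR1 : R < 1) (N : ℕ) (d : ℤ) :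
    (∮ r in C(0, R), (1 + r) ^ N * (1 - r)⁻¹ * r ^ (-d)) = 2 * Real.pi * I * chooseSum N d := by
  have hnorm : ‖(1 : ℂ)‖ * R < 1 := by rwa [norm_one, one_mul]
  have hzero := integral_mul_inv_one_sub_mul_pow hR hnorm (f := fun r => (1 + r) ^ N)
    (by fun_prop)
  have hrec := integral_mul_inv_one_sub_mul_zpow_sub_one hR hnorm (f := fun r => (1 + r) ^ N)
    (by fun_prop)
  simp only [one_mul] at hzero hrec
  rcases le_or_gt d 0 with h | h
  · obtain ⟨m, rfl⟩ : ∃ m : ℕ, d = -m := ⟨(-d).toNat, by omega⟩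
    rw [neg_neg, hzero, chooseSum_of_nonpos h, Rat.cast_zero, mul_zero]
  · obtain ⟨m, rfl⟩ := Int.eq_ofNat_of_zero_le h.le
    clear h
    induction m with
    | zero => simpa [chooseSum_of_nonpos] using hzero 0
    | succ m ih =>
      rw [Nat.cast_succ, neg_add', hrec, ih, integral_one_add_pow_mul_zpow hR, chooseSum_add_one,
        show -(-(m : ℤ) - 1) - 1 = m by ring]
      push_cast
      ring

lemma integral_inv_one_sub_mul_zpow (hR : 0 < R) (ha : ‖a‖ * R < 1) (l : ℕ) :
    (∮ r in C(0, R), (1 - a * r)⁻¹ * r ^ (-(l : ℤ)))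
      = 2 * Real.pi * I * if l = 0 then 0 else a ^ (l - 1) := by
  have hzero := integral_mul_inv_one_sub_mul_pow hR ha (f := fun _ => 1) (by fun_prop) 0
  have hrec := integral_mul_inv_one_sub_mul_zpow_sub_one hR ha (f := fun _ => 1) (by fun_prop)
  simp only [one_mul] at hzero hrec
  induction l with
  | zero => simpa using hzero
  | succ l ih =>
    rw [Nat.cast_succ, neg_add', hrec, ih, integral_zpow hR]
    rcases l with _ | l
    · simp
    · rw [if_neg (by omega), if_neg (by omega), if_neg (by omega), Nat.add_sub_cancel,
        Nat.add_sub_cancel, pow_succ]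
      ring

lemma integral_sub_div_mul_sub_one (hR : 0 < R) {s : ℂ} (hs0 : s ≠ 0) (hs : ‖s‖ * R < 1)
    (l₁ l₂ : ℕ) :
    (∮ r in C(0, R), (r - s) / ((r * s - 1) * r ^ (l₁ + 1) * s ^ (l₂ + 1)))
      = 2 * Real.pi * I * (1 * s ^ ((l₁ : ℤ) - l₂)
        - (if l₁ = 0 then 0 else 1) * s ^ ((l₁ : ℤ) - l₂ - 2)) := by
  have hint := circleIntegrable_mul_zpow hR (f := fun r => (1 - s * r)⁻¹)
    (by simpa using continuousOn_mul_inv_one_sub_mul hs (continuous_const (y := 1)))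
  have hconst : CircleIntegrable (fun r => s * ((1 - s * r)⁻¹ * r ^ (-((l₁ + 1 : ℕ) : ℤ)))) 0 R :=
    IntervalIntegrable.const_mul (hint _) s
  have hsplit : (∮ r in C(0, R), (r - s) / ((r * s - 1) * r ^ (l₁ + 1) * s ^ (l₂ + 1)))
      = (s ^ (l₂ + 1))⁻¹ * (s * (∮ r in C(0, R), (1 - s * r)⁻¹ * r ^ (-((l₁ + 1 : ℕ) : ℤ)))
        - ∮ r in C(0, R), (1 - s * r)⁻¹ * r ^ (-(l₁ : ℤ))) := by
    rw [← circleIntegral.integral_const_mul, ← circleIntegral.integral_sub hconst (hint _),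
      ← circleIntegral.integral_const_mul]
    refine circleIntegral.integral_congr hR.le fun r hr => ?_
    have hr0 := ne_zero_of_mem_sphere_of_pos hR hr
    have hneg : r * s - 1 = -(1 - s * r) := by ring
    simp only [zpow_neg, zpow_natCast, hneg]
    field_simp
    ring
  rw [hsplit, integral_inv_one_sub_mul_zpow hR hs, integral_inv_one_sub_mul_zpow hR hs,
    zpow_sub₀ hs0, zpow_sub₀ hs0, zpow_sub₀ hs0, zpow_natCast, zpow_natCast,
    if_neg (Nat.succ_ne_zero l₁), Nat.add_sub_cancel]
  rcases l₁ with _ | l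
  · simp only [if_true]
    field_simp
    norm_cast
    ring
  · simp only [Nat.add_eq_zero_iff, one_ne_zero, and_false, if_false, Nat.add_sub_cancel]
    field_simp
    norm_cast
    ring

lemma integral_integral_skew (hR : 0 < R) (hR1 : R < 1) (l₁ l₂ : ℕ) :
    (∮ s₂ in C(0, R), ∮ s₁ in C(0, R),
      (s₁ - s₂) / ((s₁ * s₂ - 1) * s₁ ^ (l₁ + 1) * s₂ ^ (l₂ + 1)))
    = (2 * Real.pi * I) ^ 2 * skew l₂ l₁ := by
  have hinner : ∀ s ∈ sphere (0 : ℂ) R, ‖s‖ * R < 1 := fun s hs => by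
    rw [mem_sphere_zero_iff_norm.mp hs]; nlinarith
  have hint (c : ℂ) (z : ℤ) : CircleIntegrable (fun s => c * s ^ z) 0 R :=
    circleIntegrable_mul_zpow hR (by fun_prop) z
  rw [circleIntegral.integral_congr hR.le fun s hs => integral_sub_div_mul_sub_one hR
      (ne_zero_of_mem_sphere_of_pos hR hs) (hinner s hs) l₁ l₂,
    circleIntegral.integral_const_mul, circleIntegral.integral_sub (hint _ _) (hint _ _),
    circleIntegral.integral_const_mul, circleIntegral.integral_const_mul, integral_zpow hR,
    integral_zpow hR, skew]
  have hpos : ((l₁ : ℤ) - l₂ = -1) ↔ l₂ = l₁ + 1 := by omega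
  have hneg : ((l₁ : ℤ) - l₂ - 2 = -1) ↔ l₁ = l₂ + 1 := by omega
  simp only [hpos, hneg]
  split_ifs <;> first | omega | (push_cast; ring)

end ContourIntegrals

/-! ### The coefficients `t_n` as rational numbers -/

/-- The vector of the residues of `(1 + r)^b r^{-(i - 2(n - b) + 1)}`, `0 ≤ b ≤ n`. -/
def oddVec (n i : ℕ) (b : Fin (n + 1)) : ℚ := intChoose b ((i : ℤ) - 2 * ((n : ℤ) - b))

/-- The vector of the residues of `(1 + r)^b (1 - r)⁻¹ r^{-(i - 2(n - b))}`, `0 ≤ b ≤ n`. -/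
def evenVec (n i : ℕ) (b : Fin (n + 1)) : ℚ := chooseSum b ((i : ℤ) - 2 * ((n : ℤ) - b))

/-- The vector of the residues of `Afun e n (n - b) i`, `0 ≤ b ≤ n`. -/
def residueVec (e n i : ℕ) : Fin (n + 1) → ℚ := if e = 1 then oddVec n i else evenVec n i

lemma pnk_eq {n k l : ℕ} (hk : k ≤ n) (hl : l ≤ k) :
    pnk n k l = (-1) ^ n * pCoeff (n - k) (n - l) := by
  obtain ⟨b, rfl⟩ := Nat.exists_eq_add_of_le hk
  obtain ⟨d, rfl⟩ := Nat.exists_eq_add_of_le hl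
  have hsign : (-1 : ℚ) ^ (l + d + b) * (-1) ^ b = (-1) ^ (l + d) := by
    rw [pow_add _ (l + d), mul_assoc, ← mul_pow, neg_one_mul, neg_neg, one_pow, mul_one]
  rw [pnk, pCoeff, pCoeffBase, ← hsign, show l + d + b - (l + d) = b by omega,
    show l + d + b - l = b + d by omega, show l + d - l = d by omega,
    show l + d + b + (l + d) - 2 * l + 1 = 2 * (b + d) + 1 - b by omega,
    show 2 * (l + d + b) - (l + d) - l + 1 = b + (b + d) + 1 by omega,
    show 3 * (l + d + b) - (l + d) + 2 - 2 * l = 2 * (b + d) + b + 2 by omega,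
    show ((b + d : ℕ) : ℤ) - (b : ℤ) = (d : ℕ) by push_cast; ring,
    show 2 * ((b + d : ℕ) : ℤ) + b + 2 = ((2 * (b + d) + b + 2 : ℕ) : ℤ) by push_cast; ring,
    invFact_natCast, invFact_natCast]
  push_cast
  field_simp
  ring

lemma sum_range_eq_sum_fin_sub {M : Type*} [AddCommMonoid M] (n : ℕ) (f : ℕ → M) :
    ∑ k ∈ range (n + 1), f k = ∑ b : Fin (n + 1), f (n - b) := by
  rw [sum_range, ← Equiv.sum_comp Fin.revPerm]
  simp only [Fin.revPerm_apply, Fin.val_rev, Nat.add_sub_add_right]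

lemma sum_pnk_mul {n : ℕ} (b : Fin (n + 1)) (f : ℕ → ℂ) :
    ∑ l ∈ range (n - b + 1), (pnk n (n - b) l : ℂ) * f l
      = (-1) ^ n * ∑ c : Fin (n + 1), (pMatrix n b c : ℂ) * f (n - c) := by
  have hb : (b : ℕ) ≤ n := Nat.lt_succ_iff.mp b.2
  have hterm : ∀ l ∈ range (n - b + 1), (pnk n (n - b) l : ℂ) * f l
      = (-1) ^ n * ((pCoeff b (n - l) : ℂ) * f l) := fun l hl => by
    rw [pnk_eq (Nat.sub_le n b) (Nat.lt_succ_iff.mp (mem_range.mp hl)), Nat.sub_sub_self hb]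
    push_cast
    ring
  rw [sum_congr rfl hterm, ← mul_sum, sum_subset (range_mono (by omega : n - b + 1 ≤ n + 1)),
    sum_range_eq_sum_fin_sub]
  · refine congrArg _ (sum_congr rfl fun c _ => ?_)
    rw [Nat.sub_sub_self (Nat.lt_succ_iff.mp c.2), pMatrix, Matrix.of_apply]
  · intro l hl hl'
    rw [mem_range] at hl hl'
    rw [pCoeff_of_lt (by omega), Rat.cast_zero, zero_mul]

section Residues

open Complex

lemma integral_Afun {e n : ℕ} (i : ℕ) (b : Fin (n + 1)) :
    (∮ r in C(0, 1/2), Afun e n (n - b) i r)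
      = 2 * (Real.pi : ℂ) * I * residueVec e n i b := by
  have hb : (b : ℕ) ≤ n := Nat.lt_succ_iff.mp b.2
  unfold Afun residueVec
  split_ifs with h
  · rw [integral_one_add_pow_mul_zpow one_half_pos, oddVec, Nat.sub_sub_self hb, Nat.cast_sub hb]
    congr 3
    ring
  · rw [evenVec, Nat.sub_sub_self hb, Nat.cast_sub hb, ← neg_sub (i : ℤ),
      integral_one_add_pow_div_one_sub_mul_zpow one_half_pos one_half_lt_one]

lemma integral_integral_mul_mul (f g : ℂ → ℂ) (S c : ℂ) (R : ℝ) :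
    (∮ r₂ in C(c, R), ∮ r₁ in C(c, R), f r₁ * g r₂ * S)
      = (∮ r in C(c, R), f r) * (∮ r in C(c, R), g r) * S := by
  have hinner (r₂ : ℂ) : (∮ r₁ in C(c, R), f r₁ * g r₂ * S)
      = S * (∮ r in C(c, R), f r) * g r₂ := by
    rw [mul_right_comm, mul_comm S, ← circleIntegral.integral_const_mul]
    exact congrArg (circleIntegral · c R) (funext fun r₁ => by ring)
  simp only [hinner, circleIntegral.integral_const_mul]
  ring

lemma quadInt_eq {e₁ e₂ n : ℕ} (i j l₁ l₂ : ℕ) (b₁ b₂ : Fin (n + 1)) :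
    quadInt (fun r1 r2 s1 s2 => Afun e₁ n (n - b₁) i r1 * Afun e₂ n (n - b₂) j r2 *
        ((s1 - s2) / ((s1*s2 - 1) * s1^(l₁+1) * s2^(l₂+1))))
      = residueVec e₁ n i b₁ * residueVec e₂ n j b₂ * skew l₂ l₁ := by
  simp only [quadInt, integral_integral_mul_mul, integral_Afun, circleIntegral.integral_const_mul,
    integral_integral_skew one_half_pos one_half_lt_one]
  have hpi : 2 * (Real.pi : ℂ) * I ≠ 0 := two_pi_I_ne_zero
  generalize 2 * (Real.pi : ℂ) * I = c at hpi
  field_simp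

lemma tForm_apply {n : ℕ} (u v : Fin (n + 1) → ℚ) :
    tForm n u v = ∑ b₁, u b₁ * ∑ x, pMatrix n b₁ x *
      ∑ b₂, v b₂ * ∑ y, pMatrix n b₂ y * skew x y := by
  rw [tForm, Matrix.toBilin'_apply', ← Matrix.mulVec_mulVec, ← Matrix.mulVec_mulVec]
  simp only [Matrix.mulVec, dotProduct, Matrix.transpose_apply]
  refine sum_congr rfl fun b₁ _ => congrArg (u b₁ * ·) (sum_congr rfl fun x _ =>
    congrArg (pMatrix n b₁ x * ·) ?_)
  simp only [mul_sum]
  rw [sum_comm]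
  refine sum_congr rfl fun b₂ _ => sum_congr rfl fun y _ => ?_
  rw [skewMatrix, Matrix.of_apply]
  ring

lemma tInt_eq (n e₁ e₂ i j : ℕ) :
    tInt n e₁ e₂ i j = (tForm n (residueVec e₁ n i) (residueVec e₂ n j) : ℚ) := by
  have hskew (x y : Fin (n + 1)) : skew (n - y) (n - x) = skew x y := by
    simp only [skew, show n - (y : ℕ) = n - x + 1 ↔ (x : ℕ) = y + 1 by omega,
      show n - (x : ℕ) = n - y + 1 ↔ (y : ℕ) = x + 1 by omega]
  have hsign : (-1 : ℂ) ^ n * (-1) ^ n = 1 := by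
    rw [← mul_pow, neg_one_mul, neg_neg, one_pow]
  calc tInt n e₁ e₂ i j
      = ∑ b₁ : Fin (n + 1), residueVec e₁ n i b₁ * ∑ l₁ ∈ range (n - b₁ + 1),
          pnk n (n - b₁) l₁ * ∑ b₂ : Fin (n + 1), residueVec e₂ n j b₂ *
            ∑ l₂ ∈ range (n - b₂ + 1), (pnk n (n - b₂) l₂ : ℂ) * skew l₂ l₁ := by
        simp only [tInt, sum_range_eq_sum_fin_sub n, quadInt_eq, mul_sum]
        refine sum_congr rfl fun b₁ _ => sum_congr rfl fun l₁ _ => sum_congr rfl fun b₂ _ =>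
          sum_congr rfl fun l₂ _ => ?_
        ring
    _ = (-1) ^ n * (-1) ^ n * ∑ b₁ : Fin (n + 1), residueVec e₁ n i b₁ * ∑ x : Fin (n + 1),
          pMatrix n b₁ x * ∑ b₂ : Fin (n + 1), residueVec e₂ n j b₂ *
            ∑ y : Fin (n + 1), (pMatrix n b₂ y : ℂ) * skew x y := by
        simp only [sum_pnk_mul, hskew, mul_left_comm _ ((-1 : ℂ) ^ n), ← mul_sum, mul_assoc]
    _ = _ := by
        rw [hsign, one_mul, tForm_apply]
        push_cast
        rfl

lemma sum_pnk_zero_mul_integral (n e i : ℕ) :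
    ∑ k ∈ range (n + 1), ((pnk n k 0 : ℚ) : ℂ) * (1/(2*(Real.pi : ℂ)*I)) *
      (∮ r in C(0, 1/2), Afun e n k i r) = (pForm n (residueVec e n i) : ℚ) := by
  rw [sum_range_eq_sum_fin_sub, pForm_apply, dotProduct, mul_sum]
  push_cast
  refine sum_congr rfl fun b _ => ?_
  have hpi : 2 * (Real.pi : ℂ) * I ≠ 0 := two_pi_I_ne_zero
  rw [integral_Afun, pnk_eq (Nat.sub_le n b) (Nat.zero_le _), Nat.sub_sub_self
    (Nat.lt_succ_iff.mp b.2), Nat.sub_zero, pMatrix, Matrix.of_apply, Fin.val_last]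
  generalize 2 * (Real.pi : ℂ) * I = c at hpi
  push_cast
  field_simp

end Residues

/-- The rational value of `h1b`. -/
def h1Rat (n i : ℕ) : ℚ := pForm n (oddVec n i)

/-- The rational value of `h0b`. -/
def h0Rat (n i : ℕ) : ℚ := pForm n (evenVec n i) - evenInd i

lemma cast_succ_mod_two (i : ℕ) : (((i + 1) % 2 : ℕ) : ℂ) = (evenInd i : ℚ) := by
  unfold evenInd
  rcases Nat.mod_two_eq_zero_or_one i with h | h
  · rw [if_pos h, show (i + 1) % 2 = 1 by omega, Nat.cast_one, Rat.cast_one]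
  · rw [if_neg (by omega), show (i + 1) % 2 = 0 by omega, Nat.cast_zero, Rat.cast_zero]

lemma cast_mod_two (i : ℕ) : ((i % 2 : ℕ) : ℂ) = 1 - (evenInd i : ℚ) := by
  rw [← Nat.add_mod_right, show i + 2 = i + 1 + 1 from rfl, cast_succ_mod_two, evenInd_succ,
    Rat.cast_sub, Rat.cast_one]

lemma h1b_eq (n i : ℕ) : h1b n i = (h1Rat n i : ℚ) := sum_pnk_zero_mul_integral n 1 i

lemma h0b_eq (n i : ℕ) : h0b n i = (h0Rat n i : ℚ) := by
  rw [h0Rat, Rat.cast_sub, ← cast_succ_mod_two, sub_eq_neg_add]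
  exact congrArg _ (sum_pnk_zero_mul_integral n 0 i)

/-- The correction `1_{i<j} 1_{i even} 1_{j odd} - 1_{i>j} 1_{i odd} 1_{j even}` in `t00`. -/
def parityCorr (i j : ℕ) : ℚ :=
  (if i < j then evenInd i * (1 - evenInd j) else 0)
    - if j < i then (1 - evenInd i) * evenInd j else 0

/-- The rational value of `t11`. -/
def t11Rat (n i j : ℕ) : ℚ := tForm n (oddVec n i) (oddVec n j)

/-- The rational value of `t10`. -/
def t10Rat (n i j : ℕ) : ℚ := evenInd j * h1Rat n i + tForm n (oddVec n i) (evenVec n j)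

/-- The rational value of the function `t_n^{0,1}` of the paper. -/
def t01Rat (n i j : ℕ) : ℚ := tForm n (evenVec n i) (oddVec n j) - evenInd i * h1Rat n j

/-- The rational value of `t00`. -/
def t00Rat (n i j : ℕ) : ℚ :=
  parityCorr i j + evenInd j * h0Rat n i - evenInd i * h0Rat n j
    + tForm n (evenVec n i) (evenVec n j)

lemma t11_eq (n i j : ℕ) : t11 n i j = (t11Rat n i j : ℚ) := tInt_eq n 1 1 i j

lemma t10_eq (n i j : ℕ) : t10 n i j = (t10Rat n i j : ℚ) := by
  rw [t10, t10Rat, h1b_eq, cast_succ_mod_two, tInt_eq, Rat.cast_add, Rat.cast_mul]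
  rfl

lemma t00_eq (n i j : ℕ) : t00 n i j = (t00Rat n i j : ℚ) := by
  simp only [t00, t00Rat, parityCorr, tInt_eq, h0b_eq, cast_succ_mod_two, cast_mod_two]
  push_cast [apply_ite (Rat.cast : ℚ → ℂ)]
  rfl

/-! ### Propagation and the top boundary equations -/

section Operators

variable {M N : Type*} [AddCommGroup M] [AddCommGroup N]

/-- The operator `(-1)^s (1 + S)^(-s)`, where `S` is the backward shift, evaluated at `i`: it
expresses a column of the inverse Kasteleyn matrix at the odd vertices through its values at the
lowest odd vertices. -/
def oddOp (i s : ℕ) (u : ℕ → M) : M :=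
  ∑ l ∈ range (i + 1), ((-1) ^ s * (-1) ^ l * (s.multichoose l : ℤ)) • u (i - l)

/-- The operator `(-1)^s (1 + S)^s`, where `S` is the forward shift, evaluated at `i`: it
expresses a column of the inverse Kasteleyn matrix at the even vertices through its values on the
diagonal. -/
def evenOp (i s : ℕ) (u : ℕ → M) : M :=
  ∑ l ∈ range (s + 1), ((-1) ^ s * (s.choose l : ℤ)) • u (i + l)

lemma map_oddOp {F : Type*} [FunLike F M N] [AddMonoidHomClass F M N] (L : F) (i s : ℕ)
    (u : ℕ → M) : oddOp i s (fun k => L (u k)) = L (oddOp i s u) := by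
  simp only [oddOp, map_sum, map_zsmul]

lemma map_evenOp {F : Type*} [FunLike F M N] [AddMonoidHomClass F M N] (L : F) (i s : ℕ)
    (u : ℕ → M) : evenOp i s (fun k => L (u k)) = L (evenOp i s u) := by
  simp only [evenOp, map_sum, map_zsmul]

lemma oddOp_apply {ι : Type*} (i s : ℕ) (u : ℕ → ι → M) (j : ι) :
    oddOp i s u j = oddOp i s (u · j) :=
  (map_oddOp (Pi.evalAddMonoidHom (fun _ => M) j) i s u).symm

lemma evenOp_apply {ι : Type*} (i s : ℕ) (u : ℕ → ι → M) (j : ι) :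
    evenOp i s u j = evenOp i s (u · j) :=
  (map_evenOp (Pi.evalAddMonoidHom (fun _ => M) j) i s u).symm

lemma oddOp_add (i s : ℕ) (u v : ℕ → M) : oddOp i s (u + v) = oddOp i s u + oddOp i s v := by
  simp only [oddOp, Pi.add_apply, smul_add, sum_add_distrib]

lemma oddOp_sub (i s : ℕ) (u v : ℕ → M) : oddOp i s (u - v) = oddOp i s u - oddOp i s v := by
  simp only [oddOp, Pi.sub_apply, smul_sub, sum_sub_distrib]

lemma evenOp_add (i s : ℕ) (u v : ℕ → M) : evenOp i s (u + v) = evenOp i s u + evenOp i s v := by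
  simp only [evenOp, Pi.add_apply, smul_add, sum_add_distrib]

lemma evenOp_sub (i s : ℕ) (u v : ℕ → M) : evenOp i s (u - v) = evenOp i s u - evenOp i s v := by
  simp only [evenOp, Pi.sub_apply, smul_sub, sum_sub_distrib]

lemma oddOp_neg (i s : ℕ) (u : ℕ → M) : oddOp i s (-u) = -oddOp i s u := by
  simp only [oddOp, Pi.neg_apply, smul_neg, sum_neg_distrib]

lemma evenOp_neg (i s : ℕ) (u : ℕ → M) : evenOp i s (-u) = -evenOp i s u := by
  simp only [evenOp, Pi.neg_apply, smul_neg, sum_neg_distrib]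

lemma oddOp_zero_right (i s : ℕ) : oddOp i s (0 : ℕ → M) = 0 := by
  simp only [oddOp, Pi.zero_apply, smul_zero, sum_const_zero]

lemma evenOp_zero_right (i s : ℕ) : evenOp i s (0 : ℕ → M) = 0 := by
  simp only [evenOp, Pi.zero_apply, smul_zero, sum_const_zero]

lemma oddOp_congr {i : ℕ} (s : ℕ) {u v : ℕ → M} (h : ∀ k ≤ i, u k = v k) :
    oddOp i s u = oddOp i s v :=
  sum_congr rfl fun _ _ => by rw [h _ (Nat.sub_le _ _)]

lemma evenOp_congr {i s : ℕ} {u v : ℕ → M} (h : ∀ k ≤ i + s, u k = v k) :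
    evenOp i s u = evenOp i s v :=
  sum_congr rfl fun _ hl => by rw [h _ (by have := mem_range.mp hl; omega)]

lemma oddOp_zero (i : ℕ) (u : ℕ → M) : oddOp i 0 u = u i := by
  rw [oddOp, sum_range_succ']
  simp

lemma evenOp_zero (i : ℕ) (u : ℕ → M) : evenOp i 0 u = u i := by
  simp [evenOp]

lemma oddOp_zero_succ (s : ℕ) (u : ℕ → M) : oddOp 0 (s + 1) u = -oddOp 0 s u := by
  simp [oddOp, pow_succ]

lemma oddOp_succ_succ (i s : ℕ) (u : ℕ → M) :
    oddOp (i + 1) (s + 1) u = -oddOp i (s + 1) u - oddOp (i + 1) s u := by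
  have hpascal (l : ℕ) : ((-1) ^ (s + 1) * (-1) ^ (l + 1) *
      ((s.multichoose (l + 1) + (s + 1).multichoose l : ℕ) : ℤ)) • u (i - l)
      = -(((-1) ^ (s + 1) * (-1) ^ l * ((s + 1).multichoose l : ℤ)) • u (i - l))
        - ((-1) ^ s * (-1) ^ (l + 1) * (s.multichoose (l + 1) : ℤ)) • u (i - l) := by
    push_cast
    module
  simp only [oddOp]
  rw [sum_range_succ' _ (i + 1),
    sum_range_succ' (fun l => ((-1) ^ s * (-1) ^ l * (s.multichoose l : ℤ)) • _) (i + 1)]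
  simp only [Nat.multichoose_zero_right, Nat.multichoose_succ_succ, Nat.add_sub_add_right, hpascal,
    sum_sub_distrib, sum_neg_distrib]
  push_cast
  module

lemma evenOp_succ (i s : ℕ) (u : ℕ → M) :
    evenOp i (s + 1) u = -evenOp i s u - evenOp (i + 1) s u := by
  have h := sum_choose_succ_nsmul (fun l _ => u (i + l)) s
  simp only [evenOp, mul_smul, ← smul_sum, natCast_zsmul] at h ⊢
  simp only [h, pow_succ, add_right_comm i 1, add_assoc i _ 1]
  module

end Operators

lemma evenOp_evenInd (i N : ℕ) : evenOp i (N + 1) evenInd = (-1) ^ (N + 1) * 2 ^ N := by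
  induction N generalizing i with
  | zero =>
    rw [evenOp_succ, evenOp_zero, evenOp_zero, evenInd_succ]
    ring
  | succ N ih =>
    rw [evenOp_succ, ih, ih]
    ring

lemma evenOp_evenVec (n i N : ℕ) (b : Fin (n + 1)) : evenOp i N (evenVec n) b
    = (-1) ^ N * chooseSum (b + N) ((i : ℤ) + N - 2 * ((n : ℤ) - b)) := by
  induction N generalizing i with
  | zero => simp [evenOp_zero, evenVec]
  | succ N ih =>
    rw [evenOp_succ, Pi.sub_apply, Pi.neg_apply, ih, ih, ← add_assoc (b : ℕ), chooseSum_succ,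
      show ((i + 1 : ℕ) : ℤ) + N - 2 * ((n : ℤ) - b) = i + (N + 1 : ℕ) - 2 * ((n : ℤ) - b) by
        push_cast; ring,
      show (i : ℤ) + (N + 1 : ℕ) - 2 * ((n : ℤ) - b) - 1 = i + N - 2 * ((n : ℤ) - b) by
        push_cast; ring]
    ring

lemma evenOp_evenVec_boundary {n m : ℕ} {a : Fin (n + 1)} (h : a + m = n) :
    evenOp (2 * m) (a + 1) (evenVec n) = (-1 : ℚ) ^ (a + 1 : ℕ) • bdryMatrix n a := by
  ext b
  rw [evenOp_evenVec, Pi.smul_apply, smul_eq_mul, bdryMatrix, Matrix.of_apply, bdryCoeff,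
    show (b : ℕ) + (a + 1) = a + b + 1 by omega]
  congr 2
  omega

lemma oddOp_oddVec {n s : ℕ} {b : Fin (n + 1)} (hs : s ≤ b) (i : ℕ) : oddOp i s (oddVec n) b
    = (-1) ^ s * intChoose (b - s) ((i : ℤ) - 2 * ((n : ℤ) - b)) := by
  induction s generalizing i with
  | zero => simp [oddOp_zero, oddVec]
  | succ s ih =>
    have hpascal (z : ℤ) := intChoose_succ (b - (s + 1)) z
    rw [show b - (s + 1) + 1 = (b : ℕ) - s by omega] at hpascal
    induction i with
    | zero =>
      rw [oddOp_zero_succ, Pi.neg_apply, ih (by omega), hpascal,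
        intChoose_of_neg (z := _ - 1) (by push_cast; omega)]
      ring
    | succ i ih_left =>
      rw [oddOp_succ_succ, Pi.sub_apply, Pi.neg_apply, ih_left, ih (by omega), hpascal,
        show ((i + 1 : ℕ) : ℤ) - 2 * ((n : ℤ) - b) - 1 = i - 2 * ((n : ℤ) - b) by push_cast; ring]
      ring

lemma oddOp_oddVec_of_lt {n i : ℕ} {b : Fin (n + 1)} (s : ℕ) (h : i + 2 * (b : ℕ) < 2 * n) :
    oddOp i s (oddVec n) b = 0 := by
  rw [oddOp_apply, oddOp]
  refine sum_eq_zero fun l _ => ?_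
  rw [oddVec, intChoose_of_neg (by omega), smul_zero]

lemma oddOp_oddVec_boundary {n m s : ℕ} (h : s + m = n) :
    oddOp (2 * m + 1) s (oddVec n) = 0 := by
  ext b
  rcases le_or_gt s b with hb | hb
  · rw [oddOp_oddVec hb, intChoose_of_gt (by omega), mul_zero, Pi.zero_apply]
  · exact oddOp_oddVec_of_lt _ (by omega)

lemma oddVec_zero (n : ℕ) : oddVec n 0 = evenVec n 1 := by
  ext b
  have h := chooseSum_add_one b (((0 : ℕ) : ℤ) - 2 * ((n : ℤ) - b))
  rw [chooseSum_of_nonpos (z := _ - _) (by omega), zero_add] at h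
  rw [oddVec, evenVec, ← h]
  congr 1
  push_cast
  ring

lemma oddVec_add_evenVec (n i : ℕ) : oddVec n i + evenVec n i = evenVec n (i + 1) := by
  ext b
  rw [Pi.add_apply, oddVec, evenVec, evenVec, add_comm, ← chooseSum_add_one]
  congr 1
  push_cast
  ring

lemma parityCorr_add_succ (i j : ℕ) :
    parityCorr i j + parityCorr (i + 1) j = (if i < j then 1 else 0) - evenInd j := by
  rw [parityCorr, parityCorr, evenInd_succ]
  rcases (by omega : i + 1 < j ∨ i + 1 = j ∨ i = j ∨ j < i) with h | rfl | rfl | h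
  · rw [if_pos (by omega), if_neg (by omega), if_pos h, if_neg (by omega), if_pos (by omega)]
    ring
  · rw [if_pos i.lt_succ_self, if_neg (by omega), if_neg (lt_irrefl _), if_neg (lt_irrefl _),
      if_pos i.lt_succ_self, evenInd_succ]
    linear_combination evenInd_mul_self i
  · rw [if_neg (lt_irrefl _), if_neg (lt_irrefl _), if_neg (by omega), if_pos i.lt_succ_self,
      if_neg (lt_irrefl _)]
    linear_combination -evenInd_mul_self i
  · rw [if_neg (by omega), if_pos h, if_neg (by omega), if_pos (by omega), if_neg (by omega)]
    ring

lemma parityCorr_sub (i j : ℕ) :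
    parityCorr i j - parityCorr (i + 2) j = (Pi.single (i + 1) 1 : ℕ → ℚ) j := by
  have h : (if i < j then (1 : ℚ) else 0) - (if i + 1 < j then 1 else 0)
      = (Pi.single (i + 1) 1 : ℕ → ℚ) j := by
    rw [Pi.single_apply]
    split_ifs <;> first | omega | norm_num
  linear_combination h + parityCorr_add_succ i j - parityCorr_add_succ (i + 1) j

lemma evenOp_parityCorr (i j N : ℕ) : evenOp i (N + 1) (parityCorr · j)
    = (-1) ^ (N + 1) * (chooseSum N ((j : ℤ) - i) - 2 ^ N * evenInd j) := by
  induction N generalizing i with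
  | zero =>
    rw [evenOp_succ, evenOp_zero, evenOp_zero, chooseSum_zero]
    simp only [sub_pos, Nat.cast_lt]
    linear_combination -parityCorr_add_succ i j
  | succ N ih =>
    rw [evenOp_succ, ih, ih, chooseSum_succ,
      show (j : ℤ) - (i + 1 : ℕ) = j - i - 1 by push_cast; ring]
    ring

lemma t00Rat_eq (n i j : ℕ) : t00Rat n i j = parityCorr i j
    + ((tForm n).flip (evenVec n j) + evenInd j • pForm n) (evenVec n i)
    - evenInd i * pForm n (evenVec n j) := by
  rw [t00Rat, h0Rat, h0Rat, LinearMap.add_apply, LinearMap.smul_apply,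
    LinearMap.BilinForm.flip_apply, smul_eq_mul]
  ring

lemma t10Rat_eq (n i j : ℕ) : t10Rat n i j
    = ((tForm n).flip (evenVec n j) + evenInd j • pForm n) (oddVec n i) := by
  rw [t10Rat, h1Rat, LinearMap.add_apply, LinearMap.smul_apply, LinearMap.BilinForm.flip_apply,
    smul_eq_mul, add_comm]

lemma evenInd_of_even {n : ℕ} (h : n % 2 = 0) : evenInd n = 1 := if_pos h

lemma evenInd_of_odd {n : ℕ} (h : n % 2 = 1) : evenInd n = 0 := if_neg (by omega)

lemma t11Rat_zero_sub (n : ℕ) : t11Rat n 0 - t01Rat n 1 = 0 := by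
  ext j
  rw [Pi.sub_apply, t11Rat, t01Rat, oddVec_zero, evenInd, if_neg (by norm_num), zero_mul, sub_zero,
    sub_self, Pi.zero_apply]

lemma evenInd_add_two (i : ℕ) : evenInd (i + 2) = evenInd i := by
  rw [evenInd_succ, evenInd_succ, sub_sub_cancel]

lemma oddVec_succ_add (n i : ℕ) :
    oddVec n (i + 1) + oddVec n i + evenVec n i = evenVec n (i + 2) := by
  rw [add_assoc, oddVec_add_evenVec, oddVec_add_evenVec]

lemma t11Rat_succ_add (n i : ℕ) :
    t11Rat n (i + 1) + t11Rat n i + t01Rat n i - t01Rat n (i + 2) = 0 := by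
  ext j
  have h := congrArg (fun v => tForm n v (oddVec n j)) (oddVec_succ_add n i)
  simp only [map_add, LinearMap.add_apply] at h
  simp only [Pi.add_apply, Pi.sub_apply, Pi.zero_apply, t11Rat, t01Rat, evenInd_add_two]
  linear_combination h

lemma t10Rat_zero_sub (n : ℕ) : t10Rat n 0 - t00Rat n 1 = Pi.single 0 1 := by
  ext j
  have hodd : evenInd 1 = 0 := evenInd_of_odd rfl
  have hcorr : -parityCorr 1 j = (Pi.single 0 1 : ℕ → ℚ) j := by
    rw [parityCorr, hodd, zero_mul, ite_self, Pi.single_apply]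
    rcases Nat.eq_zero_or_pos j with rfl | hj
    · rw [if_pos Nat.one_pos, if_pos rfl, evenInd_of_even rfl]
      ring
    · rw [if_neg (by omega), if_neg (by omega)]
      ring
  rw [Pi.sub_apply, t10Rat_eq, t00Rat_eq, oddVec_zero, hodd, ← hcorr]
  ring

lemma t10Rat_succ_add (n i : ℕ) :
    t10Rat n (i + 1) + t10Rat n i + t00Rat n i - t00Rat n (i + 2) = Pi.single (i + 1) 1 := by
  ext j
  simp only [Pi.add_apply, Pi.sub_apply, t10Rat_eq, t00Rat_eq, ← oddVec_succ_add, map_add,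
    evenInd_add_two, ← parityCorr_sub]
  ring

lemma evenOp_t01Rat {n m : ℕ} {a : Fin (n + 1)} (h : a + m = n) (j : ℕ) :
    evenOp (2 * m) (a + 1) (t01Rat n) j = -((-1) ^ (a + 1 : ℕ) * oddVec n j a) := by
  have hsplit : (t01Rat n · j) = (fun i => (tForm n).flip (oddVec n j) (evenVec n i))
      - fun i => AddMonoidHom.mulRight (h1Rat n j) (evenInd i) := rfl
  rw [evenOp_apply, hsplit, evenOp_sub, map_evenOp, map_evenOp, evenOp_evenInd,
    evenOp_evenVec_boundary h, map_smul, LinearMap.BilinForm.flip_apply, tForm_bdryMatrix,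
    AddMonoidHom.coe_mulRight, h1Rat, smul_eq_mul]
  ring

lemma evenOp_t00Rat {n m : ℕ} {a : Fin (n + 1)} (h : a + m = n) :
    evenOp (2 * m) (a + 1) (t00Rat n) = 0 := by
  ext j
  have hsplit : (t00Rat n · j) = (parityCorr · j)
      + (fun i => ((tForm n).flip (evenVec n j) + evenInd j • pForm n) (evenVec n i))
      - fun i => AddMonoidHom.mulRight (pForm n (evenVec n j)) (evenInd i) :=
    funext fun i => t00Rat_eq n i j
  have hshift : ((j : ℤ) - (2 * m : ℕ)) = (j : ℤ) - 2 * ((n : ℤ) - (a : ℕ)) := by omega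
  rw [evenOp_apply, hsplit, evenOp_sub, evenOp_add, map_evenOp, map_evenOp, evenOp_evenInd,
    evenOp_evenVec_boundary h, evenOp_parityCorr, map_smul, LinearMap.add_apply,
    LinearMap.smul_apply, LinearMap.BilinForm.flip_apply, tForm_bdryMatrix, pForm_bdryMatrix,
    AddMonoidHom.coe_mulRight, hshift, ← evenVec, smul_eq_mul, smul_eq_mul, Pi.zero_apply]
  ring

lemma oddOp_t11Rat {n m s : ℕ} (h : s + m = n) : oddOp (2 * m + 1) s (t11Rat n) = 0 := by
  ext j
  have hsplit : (t11Rat n · j) = fun i => (tForm n).flip (oddVec n j) (oddVec n i) := rfl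
  rw [oddOp_apply, hsplit, map_oddOp, oddOp_oddVec_boundary h, map_zero, Pi.zero_apply]

lemma oddOp_t10Rat {n m s : ℕ} (h : s + m = n) : oddOp (2 * m + 1) s (t10Rat n) = 0 := by
  ext j
  rw [oddOp_apply, funext fun i => t10Rat_eq n i j, map_oddOp, oddOp_oddVec_boundary h, map_zero,
    Pi.zero_apply]

lemma evenVec_two_mul (n : ℕ) : evenVec n (2 * n) = twoPowVec n := by
  ext b
  rw [evenVec, twoPowVec,
    show ((2 * n : ℕ) : ℤ) - 2 * ((n : ℤ) - b) = 2 * (b : ℕ) by push_cast; ring]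
  split_ifs with h
  · exact chooseSum_of_nonpos (by simp [h])
  · exact chooseSum_of_lt (by have := Fin.pos_iff_ne_zero.mpr h; omega)

lemma oddVec_add_evenVec_corner (n : ℕ) :
    oddVec (n + 1) (2 * n + 1) + evenVec (n + 1) (2 * n + 1) = twoPowVec (n + 1) := by
  rw [oddVec_add_evenVec, ← evenVec_two_mul]
  rfl

lemma oddVec_apply_zero {n j : ℕ} (h : j < 2 * n) : oddVec n j 0 = 0 :=
  intChoose_of_neg (by rw [Fin.val_zero]; push_cast; omega)

lemma evenVec_apply_zero {n j : ℕ} (h : j ≤ 2 * n) : evenVec n j 0 = 0 :=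
  chooseSum_of_nonpos (by rw [Fin.val_zero]; push_cast; omega)

lemma t01Rat_corner {n : ℕ} (hn : n % 2 = 0) {j : ℕ} (hj : j < 2 * n) :
    t01Rat n (2 * n) j = 0 := by
  rw [t01Rat, h1Rat, evenVec_two_mul, tForm_twoPowVec, oddVec_apply_zero hj, evenInd_of_even hn,
    evenInd_of_even (Nat.mul_mod_right 2 n)]
  ring

lemma t00Rat_corner {n : ℕ} (hn : n % 2 = 0) {j : ℕ} (hj : j ≤ 2 * n) :
    t00Rat n (2 * n) j = 0 := by
  have hcorr : parityCorr (2 * n) j = 0 := by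
    rw [parityCorr, if_neg (by omega), evenInd_of_even (Nat.mul_mod_right 2 n), sub_self, zero_mul,
      ite_self, sub_zero]
  rw [t00Rat_eq, LinearMap.add_apply, LinearMap.smul_apply, LinearMap.BilinForm.flip_apply,
    evenVec_two_mul, tForm_twoPowVec, pForm_twoPowVec, evenVec_apply_zero hj, evenInd_of_even hn,
    evenInd_of_even (Nat.mul_mod_right 2 n), hcorr, smul_eq_mul]
  ring

lemma t11Rat_corner {n : ℕ} (hn : (n + 1) % 2 = 1) {j : ℕ} (hj : j < 2 * (n + 1)) :
    t11Rat (n + 1) (2 * n + 1) j + t01Rat (n + 1) (2 * n + 1) j = 0 := by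
  rw [t11Rat, t01Rat, evenInd_of_odd (by omega : (2 * n + 1) % 2 = 1), zero_mul, sub_zero,
    ← LinearMap.add_apply, ← map_add, oddVec_add_evenVec_corner, tForm_twoPowVec,
    oddVec_apply_zero hj, evenInd_of_odd hn]
  ring

lemma t10Rat_corner {n : ℕ} (hn : (n + 1) % 2 = 1) {j : ℕ} (hj : j ≤ 2 * (n + 1)) :
    t10Rat (n + 1) (2 * n + 1) j + t00Rat (n + 1) (2 * n + 1) j
      = (Pi.single (2 * (n + 1)) 1 : ℕ → ℚ) j := by
  have hodd : evenInd (2 * n + 1) = 0 := evenInd_of_odd (by omega)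
  have hcorr : parityCorr (2 * n + 1) j + evenInd j = (Pi.single (2 * (n + 1)) 1 : ℕ → ℚ) j := by
    rw [parityCorr, hodd, zero_mul, ite_self, sub_zero, one_mul, Pi.single_apply]
    rcases (by omega : j < 2 * n + 1 ∨ j = 2 * n + 1 ∨ j = 2 * (n + 1)) with h | rfl | rfl
    · rw [if_pos h, if_neg (by omega)]
      ring
    · rw [if_neg (lt_irrefl _), hodd, if_neg (by omega)]
      ring
    · rw [if_neg (by omega), evenInd_of_even (Nat.mul_mod_right 2 _), if_pos rfl]
      ring
  have hvec : ((tForm (n + 1)).flip (evenVec (n + 1) j) + evenInd j • pForm (n + 1))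
      (oddVec (n + 1) (2 * n + 1) + evenVec (n + 1) (2 * n + 1)) = evenInd j := by
    rw [oddVec_add_evenVec_corner, LinearMap.add_apply, LinearMap.smul_apply,
      LinearMap.BilinForm.flip_apply, tForm_twoPowVec, pForm_twoPowVec, evenVec_apply_zero hj,
      evenInd_of_odd hn, smul_eq_mul]
    ring
  rw [map_add] at hvec
  rw [t10Rat_eq, t00Rat_eq, hodd, ← hcorr]
  linear_combination hvec

/-! ### The columns of the inverse Kasteleyn matrix -/

lemma mem_Vfin {n : ℕ} {x : ℤ × ℤ} : x ∈ Vfin n ↔ memV n x := by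
  simp only [Vfin, mem_filter, mem_product, mem_Icc, and_iff_right_iff_imp]
  rintro ⟨h1, h2, h3, h4, -⟩
  omega

lemma memV_mk {n : ℕ} {x₁ x₂ : ℤ} : memV n (x₁, x₂) ↔ 0 ≤ x₁ ∧ x₁ ≤ 2 * n ∧ x₁ ≤ x₂ ∧
    x₂ ≤ 2 * n + 1 ∧ ¬(n % 2 = 1 ∧ x₁ = 2 * n ∧ x₂ = 2 * n + 1) := Iff.rfl

lemma kfunC_left (x₁ x₂ : ℤ) (z : ℤ × ℤ) : kfunC (x₁, x₂) z
    = (if (x₁ + x₂) % 2 = 0 then (if z = (x₁ - 1, x₂) then 1 else 0)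
          + (if z = (x₁, x₂ + 1) then 1 else 0) + (if z = (x₁, x₂ - 1) then 1 else 0) else 0)
      + if x₁ = x₂ then (if z = (x₁ - 1, x₂ - 1) then 1 else 0) else 0 := by
  obtain ⟨z₁, z₂⟩ := z
  simp only [kfunC, Prod.mk.injEq]
  grind

lemma kfunC_right (x₁ x₂ : ℤ) (z : ℤ × ℤ) : kfunC z (x₁, x₂)
    = (if (x₁ + x₂) % 2 = 0 then 0 else (if z = (x₁ + 1, x₂) then 1 else 0)
          + (if z = (x₁, x₂ + 1) then 1 else 0) + (if z = (x₁, x₂ - 1) then 1 else 0))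
      + if x₁ = x₂ then (if z = (x₁ + 1, x₂ + 1) then 1 else 0) else 0 := by
  obtain ⟨z₁, z₂⟩ := z
  simp only [kfunC, Prod.mk.injEq]
  grind

/-- The row of the Kasteleyn matrix at the vertex `(x₁, x₂)`, applied to a function that is defined
on all of `ℤ × ℤ` and should vanish outside `V_n`. -/
def kasteleynRow {R : Type*} [AddCommGroup R] (f : ℤ × ℤ → R) (x₁ x₂ : ℤ) : R :=
  (if (x₁ + x₂) % 2 = 0 then f (x₁ - 1, x₂) + f (x₁, x₂ + 1) + f (x₁, x₂ - 1)
      else -(f (x₁ + 1, x₂) + f (x₁, x₂ + 1) + f (x₁, x₂ - 1)))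
    + if x₁ = x₂ then f (x₁ - 1, x₂ - 1) - f (x₁ + 1, x₂ + 1) else 0

lemma kasteleynRow_ratCast (f : ℤ × ℤ → ℚ) (x₁ x₂ : ℤ) :
    kasteleynRow (fun z => (f z : ℂ)) x₁ x₂ = (kasteleynRow f x₁ x₂ : ℚ) := by
  simp only [kasteleynRow]
  push_cast [apply_ite (Rat.cast : ℚ → ℂ)]
  rfl

lemma KmatC_mulVec {n : ℕ} {f : ℤ × ℤ → ℂ} (hf : ∀ z, ¬ memV n z → f z = 0)
    {x₁ x₂ : ℤ} (hx : (x₁, x₂) ∈ Vfin n) :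
    (KmatC n).mulVec (fun z => f z) ⟨(x₁, x₂), hx⟩ = kasteleynRow f x₁ x₂ := by
  have heval (p : ℤ × ℤ) : ∑ z ∈ Vfin n, (if z = p then (1 : ℂ) else 0) * f z = f p := by
    simp only [ite_mul, one_mul, zero_mul, sum_ite_eq', ite_eq_left_iff]
    exact fun hp => (hf p fun h => hp (mem_Vfin.mpr h)).symm
  have hrow : (KmatC n).mulVec (fun z => f z) ⟨(x₁, x₂), hx⟩
      = ∑ z ∈ Vfin n, (kfunC (x₁, x₂) z - kfunC z (x₁, x₂)) * f z :=
    sum_coe_sort (Vfin n) fun z => (kfunC (x₁, x₂) z - kfunC z (x₁, x₂)) * f z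
  rw [hrow, kasteleynRow]
  simp only [kfunC_left, kfunC_right]
  split_ifs <;> simp only [add_mul, sub_mul, sum_add_distrib, sum_sub_distrib, heval, zero_mul,
    sum_const_zero] <;> ring

/-- The vector on the vertices with values `V₀ x₁ s` at `(x₁, x₁ + 2s)` and `V₁ x₁ s` at
`(x₁, x₁ + 2s + 1)`, except at the corner `(2n, 2n + 1)`, whose value is forced by the row at the
last diagonal vertex `(2n, 2n)`. -/
def columnVector (n : ℕ) (V₀ V₁ : ℕ → ℕ → ℚ) (z : ℤ × ℤ) : ℚ :=
  if memV n z then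
    if z.1 = 2 * n ∧ z.2 = 2 * n + 1 then -V₁ (2 * n - 1) 0 - V₀ (2 * n - 1) 0
    else if (z.2 - z.1) % 2 = 0 then V₀ z.1.toNat ((z.2 - z.1) / 2).toNat
    else V₁ z.1.toNat ((z.2 - z.1) / 2).toNat
  else 0

section ColumnVector

variable {n : ℕ} {V₀ V₁ : ℕ → ℕ → ℚ}

lemma columnVector_of_not_memV {z : ℤ × ℤ} (h : ¬ memV n z) : columnVector n V₀ V₁ z = 0 := if_neg h

lemma columnVector_even {z₁ z₂ : ℤ} (i s : ℕ) (h₁ : z₁ = i) (h₂ : z₂ = i + 2 * s) (hi : i ≤ 2 * n)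
    (hs : i + 2 * s ≤ 2 * n + 1) : columnVector n V₀ V₁ (z₁, z₂) = V₀ i s := by
  rw [columnVector, if_pos (by rw [memV_mk]; omega), if_neg (by dsimp only; omega),
    if_pos (by dsimp only; omega)]
  congr 1 <;> dsimp only <;> omega

lemma columnVector_odd {z₁ z₂ : ℤ} (i s : ℕ) (h₁ : z₁ = i) (h₂ : z₂ = i + 2 * s + 1)
    (hi : i < 2 * n) (hs : i + 2 * s ≤ 2 * n) : columnVector n V₀ V₁ (z₁, z₂) = V₁ i s := by
  rw [columnVector, if_pos (by rw [memV_mk]; omega), if_neg (by dsimp only; omega),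
    if_neg (by dsimp only; omega)]
  congr 1 <;> dsimp only <;> omega

lemma columnVector_corner (hn : n % 2 = 0) :
    columnVector n V₀ V₁ (2 * n, 2 * n + 1) = -V₁ (2 * n - 1) 0 - V₀ (2 * n - 1) 0 := by
  rw [columnVector, if_pos (by rw [memV_mk]; omega), if_pos ⟨rfl, rfl⟩]

end ColumnVector

/-- The equations that make `columnVector n V₀ V₁` the column of `K_n⁻¹` at the vertex `y`: the
rows of `K_n` at the odd vertices, at the even vertices above the diagonal and on the diagonal,
written as if there were no upper boundary, together with the vanishing just above the upper
boundary and at the corner that makes up for this. -/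
structure IsInverseColumn (n : ℕ) (y : ℤ × ℤ) (V₀ V₁ : ℕ → ℕ → ℚ) : Prop where
  odd : ∀ i s, V₀ (i + 1) s + V₀ i (s + 1) + V₀ i s
    = -if y = ((i : ℤ), (i : ℤ) + 2 * s + 1) then 1 else 0
  even_zero : ∀ s, V₁ 0 (s + 1) + V₁ 0 s
    = if y = ((0 : ℤ), (0 : ℤ) + 2 * ((s + 1 : ℕ) : ℤ)) then 1 else 0
  even_succ : ∀ i s, V₁ i (s + 1) + V₁ (i + 1) (s + 1) + V₁ (i + 1) s
    = if y = (((i + 1 : ℕ) : ℤ), ((i + 1 : ℕ) : ℤ) + 2 * ((s + 1 : ℕ) : ℤ)) then 1 else 0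
  diag_zero : V₁ 0 0 - V₀ 1 0 = if y = ((0 : ℤ), (0 : ℤ)) then 1 else 0
  diag_succ : ∀ i, V₁ (i + 1) 0 + V₁ i 0 + V₀ i 0 - V₀ (i + 2) 0
    = if y = (((i + 1 : ℕ) : ℤ), ((i + 1 : ℕ) : ℤ)) then 1 else 0
  top_even : ∀ m s, s + m = n → V₀ (2 * m) (s + 1) = 0
  top_odd : ∀ m s, s + m = n → V₁ (2 * m + 1) s = 0
  corner_even : n % 2 = 0 → V₀ (2 * n) 0 = 0
  corner_odd : n % 2 = 1 → V₁ (2 * n - 1) 0 + V₀ (2 * n - 1) 0 = 0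

namespace IsInverseColumn

variable {n : ℕ} {y : ℤ × ℤ} {V₀ V₁ : ℕ → ℕ → ℚ}

lemma kasteleynRow_diag (H : IsInverseColumn n y V₀ V₁) {i : ℕ} (hi : i < 2 * n) :
    kasteleynRow (columnVector n V₀ V₁) i i = if y = ((i : ℤ), (i : ℤ)) then 1 else 0 := by
  have hbelow : columnVector n V₀ V₁ ((i : ℤ), (i : ℤ) - 1) = 0 :=
    columnVector_of_not_memV (by rw [memV_mk]; omega)
  have habove : columnVector n V₀ V₁ ((i : ℤ), (i : ℤ) + 1) = V₁ i 0 :=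
    columnVector_odd i 0 rfl (by simp) hi (by omega)
  have hnext : columnVector n V₀ V₁ ((i : ℤ) + 1, (i : ℤ) + 1) = V₀ (i + 1) 0 :=
    columnVector_even (i + 1) 0 (by simp) (by simp) (by omega) (by omega)
  rw [kasteleynRow, if_pos (by omega), if_pos rfl, hbelow, habove, hnext]
  rcases i with _ | i
  · rw [columnVector_of_not_memV (z := (((0 : ℕ) : ℤ) - 1, _)) (by rw [memV_mk]; omega),
      columnVector_of_not_memV (z := (((0 : ℕ) : ℤ) - 1, _)) (by rw [memV_mk]; omega)]
    linear_combination H.diag_zero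
  · rw [columnVector_odd (z₂ := ((i + 1 : ℕ) : ℤ)) i 0 (by simp) (by simp) (by omega) (by omega),
      columnVector_even (z₂ := _ - 1) i 0 (by simp) (by simp) (by omega) (by omega)]
    linear_combination H.diag_succ i

lemma kasteleynRow_last_diag (H : IsInverseColumn n y V₀ V₁) (hn : 0 < n) (hy : y.1 < 2 * n) :
    kasteleynRow (columnVector n V₀ V₁) (2 * n) (2 * n)
      = if y = ((2 * n : ℤ), (2 * n : ℤ)) then 1 else 0 := by
  have hcorner : columnVector n V₀ V₁ (2 * n, 2 * n + 1)
      = -V₁ (2 * n - 1) 0 - V₀ (2 * n - 1) 0 := by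
    rcases Nat.mod_two_eq_zero_or_one n with h | h
    · exact columnVector_corner h
    · rw [columnVector_of_not_memV (by rw [memV_mk]; omega)]
      linear_combination H.corner_odd h
  rw [kasteleynRow, if_pos (by omega), if_pos rfl, hcorner,
    columnVector_odd (z₁ := _ - 1) (2 * n - 1) 0 (by omega) (by omega) (by omega) (by omega),
    columnVector_of_not_memV (z := (_, 2 * (n : ℤ) - 1)) (by rw [memV_mk]; omega),
    columnVector_even (z₁ := _ - 1) (2 * n - 1) 0 (by omega) (by omega) (by omega) (by omega),
    columnVector_of_not_memV (by rw [memV_mk]; omega), if_neg (by rintro rfl; exact lt_irrefl _ hy)]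
  ring

lemma kasteleynRow_even (H : IsInverseColumn n y V₀ V₁) {i s : ℕ} (hi : i ≤ 2 * n)
    (hs : i + 2 * (s + 1) ≤ 2 * n + 1) :
    kasteleynRow (columnVector n V₀ V₁) i (i + 2 * (s + 1 : ℕ))
      = if y = ((i : ℤ), (i : ℤ) + 2 * (s + 1 : ℕ)) then 1 else 0 := by
  have htop : columnVector n V₀ V₁ (i, i + 2 * (s + 1 : ℕ) + 1) = V₁ i (s + 1) := by
    rcases hs.lt_or_eq with h | h
    · exact columnVector_odd i (s + 1) rfl rfl (by omega) (by omega)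
    · obtain ⟨m, rfl⟩ : ∃ m, i = 2 * m + 1 := ⟨i / 2, by omega⟩
      rw [H.top_odd m (s + 1) (by omega), columnVector_of_not_memV (by rw [memV_mk]; omega)]
  rw [kasteleynRow, if_pos (by omega), if_neg (by omega), htop,
    columnVector_odd (z₂ := _ - 1) i s rfl (by omega) (by omega) (by omega)]
  rcases i with _ | i
  · rw [columnVector_of_not_memV (by rw [memV_mk]; omega)]
    linear_combination H.even_zero s
  · rw [columnVector_odd i (s + 1) (by simp) (by omega) (by omega) (by omega)]
    linear_combination H.even_succ i s

lemma kasteleynRow_odd (H : IsInverseColumn n y V₀ V₁) {i s : ℕ} (hi : i < 2 * n)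
    (hs : i + 2 * s ≤ 2 * n) :
    kasteleynRow (columnVector n V₀ V₁) i (i + 2 * s + 1)
      = if y = ((i : ℤ), (i : ℤ) + 2 * s + 1) then 1 else 0 := by
  have htop : columnVector n V₀ V₁ (i, i + 2 * (s : ℤ) + 1 + 1) = V₀ i (s + 1) := by
    rcases hs.lt_or_eq with h | h
    · exact columnVector_even i (s + 1) rfl (by push_cast; ring) (by omega) (by omega)
    · obtain ⟨m, rfl⟩ : ∃ m, i = 2 * m := ⟨i / 2, by omega⟩
      rw [H.top_even m s (by omega), columnVector_of_not_memV (by rw [memV_mk]; omega)]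
  rw [kasteleynRow, if_neg (by omega), if_neg (by omega), htop,
    columnVector_even (z₂ := _ - 1) i s rfl (by omega) (by omega) (by omega),
    columnVector_even (i + 1) s (by simp) (by push_cast; ring) (by omega) (by omega), H.odd i s]
  ring

lemma kasteleynRow_corner (H : IsInverseColumn n y V₀ V₁) (hn : n % 2 = 0) (hy : y.1 < 2 * n) :
    kasteleynRow (columnVector n V₀ V₁) (2 * n) (2 * n + 1)
      = if y = ((2 * n : ℤ), (2 * n : ℤ) + 1) then 1 else 0 := by
  rw [kasteleynRow, if_neg (by omega), if_neg (by omega),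
    columnVector_even (z₂ := _ - 1) (2 * n) 0 (by simp) (by simp) le_rfl (by omega),
    columnVector_of_not_memV (by rw [memV_mk]; omega),
    columnVector_of_not_memV (by rw [memV_mk]; omega), H.corner_even hn,
    if_neg (by rintro rfl; exact lt_irrefl _ hy)]
  ring

lemma kasteleynRow_eq (H : IsInverseColumn n y V₀ V₁) (hn : 0 < n) (hy : y.1 < 2 * n) {x₁ x₂ : ℤ}
    (hx : memV n (x₁, x₂)) :
    kasteleynRow (columnVector n V₀ V₁) x₁ x₂ = if y = (x₁, x₂) then 1 else 0 := by
  rw [memV_mk] at hx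
  obtain ⟨i, rfl⟩ := Int.eq_ofNat_of_zero_le hx.1
  obtain ⟨d, rfl⟩ := Int.exists_add_of_le hx.2.2.1
  rcases d.even_or_odd' with ⟨s, rfl | rfl⟩
  · rcases s with _ | s
    · rw [mul_zero, Nat.cast_zero, add_zero]
      rcases (by omega : i < 2 * n ∨ i = 2 * n) with hi | rfl
      · exact H.kasteleynRow_diag hi
      · exact_mod_cast H.kasteleynRow_last_diag hn hy
    · exact_mod_cast H.kasteleynRow_even (i := i) (s := s) (by omega) (by omega)
  · rcases (by omega : i < 2 * n ∨ i = 2 * n) with hi | rfl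
    · exact_mod_cast H.kasteleynRow_odd (s := s) hi (by omega)
    · obtain rfl : s = 0 := by omega
      exact_mod_cast H.kasteleynRow_corner (by omega) hy

theorem inv_eq (H : IsInverseColumn n y V₀ V₁) (hdet : IsUnit (KmatC n).det) (hyV : y ∈ Vfin n)
    (hy : y.1 < 2 * n) (x : Vfin n) :
    (KmatC n)⁻¹ x ⟨y, hyV⟩ = (columnVector n V₀ V₁ x : ℚ) := by
  have hn : 0 < n := by
    have := (mem_Vfin.mp hyV).1
    omega
  have hcol : (KmatC n).mulVec (fun z => ((columnVector n V₀ V₁ z : ℚ) : ℂ))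
      = Pi.single ⟨y, hyV⟩ 1 := by
    ext ⟨⟨x₁, x₂⟩, hx⟩
    rw [KmatC_mulVec (f := fun z => (columnVector n V₀ V₁ z : ℚ))
        (fun z hz => by rw [columnVector_of_not_memV hz, Rat.cast_zero]) hx, kasteleynRow_ratCast,
      H.kasteleynRow_eq hn hy (mem_Vfin.mp hx), Pi.single_apply]
    simp only [Subtype.mk.injEq, eq_comm (a := (x₁, x₂))]
    split_ifs <;> simp only [Rat.cast_one, Rat.cast_zero]
  have hinv := congrFun (congrArg (KmatC n)⁻¹.mulVec hcol) x
  rw [Matrix.mulVec_mulVec, Matrix.nonsing_inv_mul _ hdet, Matrix.one_mulVec,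
    Matrix.mulVec_single_one, Matrix.col_apply] at hinv
  exact hinv.symm

end IsInverseColumn

lemma KmatC_inv_skew {n : ℕ} (hdet : IsUnit (KmatC n).det) (x y : Vfin n) :
    (KmatC n)⁻¹ x y = -(KmatC n)⁻¹ y x := by
  have htranspose : (KmatC n).transpose = -KmatC n := by
    ext a b
    simp only [Matrix.transpose_apply, Matrix.neg_apply, KmatC]
    ring
  have hinv : (-KmatC n)⁻¹ = -(KmatC n)⁻¹ :=
    Matrix.inv_eq_right_inv (by rw [neg_mul_neg, Matrix.mul_nonsing_inv _ hdet])
  rw [← Matrix.neg_apply, ← hinv, ← htranspose, ← Matrix.transpose_nonsing_inv,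
    Matrix.transpose_apply]

/-! ### The local correction and the two kinds of columns -/

/-- The local correction between the odd vertex `(i₁, i₁ + 2i₂ + 1)` and the even vertex
`(j₁, j₁ + 2j₂)`: the term, independent of `n`, by which the entry of `K_n⁻¹` differs from the
double sum over `t_n^{1,0}`. The sign of that term is included. -/
def localCorr (i₁ i₂ j₁ j₂ : ℕ) : ℚ :=
  if j₁ ≤ i₁ ∧ i₂ < j₂ then (-1) ^ (i₂ + j₂) * ((j₂ - i₂ - 1).choose (i₁ - j₁) : ℚ) else 0

section LocalCorr

variable {i₁ i₂ j₁ j₂ : ℕ}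

lemma localCorr_of_not (h : ¬(j₁ ≤ i₁ ∧ i₂ < j₂)) : localCorr i₁ i₂ j₁ j₂ = 0 := if_neg h

lemma localCorr_of_lt (h : j₁ + j₂ < i₁ + i₂ + 1) : localCorr i₁ i₂ j₁ j₂ = 0 := by
  rw [localCorr]
  split_ifs
  · rw [Nat.choose_eq_zero_of_lt (by omega), Nat.cast_zero, mul_zero]
  · rfl

lemma localCorr_add (d e j₁ i₂ : ℕ) :
    localCorr (j₁ + d) i₂ j₁ (i₂ + e + 1) = (-1) ^ (e + 1) * (e.choose d : ℚ) := by
  rw [localCorr, if_pos (by omega), show i₂ + (i₂ + e + 1) = 2 * i₂ + (e + 1) by ring, pow_add,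
    pow_mul, neg_one_sq, one_pow, one_mul]
  congr 3 <;> omega

variable (i₁ i₂ j₁ j₂)

lemma localCorr_succ_fst : localCorr (i₁ + 1) i₂ (j₁ + 1) j₂ = localCorr i₁ i₂ j₁ j₂ := by
  simp only [localCorr, Nat.add_le_add_iff_right, Nat.add_sub_add_right]

lemma localCorr_succ_snd : localCorr i₁ (i₂ + 1) j₁ (j₂ + 1) = localCorr i₁ i₂ j₁ j₂ := by
  have hsign : (-1 : ℚ) ^ (i₂ + 1 + (j₂ + 1)) = (-1) ^ (i₂ + j₂) := by ring
  simp only [localCorr, Nat.add_lt_add_iff_right, Nat.add_sub_add_right, hsign]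

lemma localCorr_right_succ :
    localCorr i₁ i₂ (j₁ + 1) j₂ + localCorr i₁ i₂ j₁ (j₂ + 1) + localCorr i₁ i₂ j₁ j₂
      = -if i₁ = j₁ ∧ i₂ = j₂ then 1 else 0 := by
  by_cases h : j₁ ≤ i₁ ∧ i₂ ≤ j₂
  · obtain ⟨d, rfl⟩ := Nat.exists_eq_add_of_le h.1
    obtain ⟨e, rfl⟩ := Nat.exists_eq_add_of_le h.2
    rw [localCorr_add]
    rcases e with _ | e
    · rw [localCorr_of_not (by omega), localCorr_of_not (by omega)]
      rcases d with _ | d <;> simp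
    · rw [if_neg (by omega), ← add_assoc, localCorr_add]
      rcases d with _ | d
      · rw [localCorr_of_not (by omega), Nat.choose_zero_right, Nat.choose_zero_right]
        ring
      · rw [show j₁ + (d + 1) = j₁ + 1 + d by ring, localCorr_add, Nat.choose_succ_succ]
        push_cast
        ring
  · rw [localCorr_of_not (by omega), localCorr_of_not (by omega), localCorr_of_not (by omega),
      if_neg (by omega)]
    ring

lemma localCorr_left_zero : localCorr 0 (i₂ + 1) j₁ j₂ + localCorr 0 i₂ j₁ j₂
    = -if 0 = j₁ ∧ i₂ + 1 = j₂ then 1 else 0 := by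
  rcases j₂ with _ | j₂
  · rw [localCorr_of_not (by omega), localCorr_of_not (by omega), if_neg (by omega)]
    ring
  · have h := localCorr_right_succ 0 i₂ j₁ j₂
    rw [localCorr_of_not (j₁ := j₁ + 1) (by omega), zero_add, add_comm] at h
    simpa only [localCorr_succ_snd, Nat.add_right_cancel_iff] using h

lemma localCorr_left_succ : localCorr i₁ (i₂ + 1) j₁ j₂ + localCorr (i₁ + 1) (i₂ + 1) j₁ j₂
    + localCorr (i₁ + 1) i₂ j₁ j₂ = -if i₁ + 1 = j₁ ∧ i₂ + 1 = j₂ then 1 else 0 := by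
  rcases j₂ with _ | j₂
  · rw [localCorr_of_not (by omega), localCorr_of_not (by omega), localCorr_of_not (by omega),
      if_neg (by omega)]
    ring
  · have h := localCorr_right_succ (i₁ + 1) i₂ j₁ j₂
    rw [localCorr_succ_fst] at h
    simp only [localCorr_succ_snd, Nat.add_right_cancel_iff]
    linear_combination h

lemma evenOp_single : evenOp j₁ j₂ (Pi.single i₁ 1) = -localCorr i₁ 0 j₁ (j₂ + 1) := by
  rw [evenOp]
  by_cases h : j₁ ≤ i₁
  · obtain ⟨d, rfl⟩ := Nat.exists_eq_add_of_le h
    have hcorr := localCorr_add d j₂ j₁ 0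
    rw [zero_add] at hcorr
    simp only [hcorr, Pi.single_apply, Nat.add_left_cancel_iff, smul_ite, smul_zero, sum_ite_eq',
      mem_range]
    split_ifs with hd
    · rw [zsmul_eq_mul]
      push_cast
      ring
    · rw [Nat.choose_eq_zero_of_lt (by omega), Nat.cast_zero, mul_zero, neg_zero]
  · rw [localCorr_of_not (by omega), neg_zero]
    exact sum_eq_zero fun l _ => by rw [Pi.single_eq_of_ne (by omega), smul_zero]

lemma oddOp_oddVec_eq_localCorr {n m : ℕ} {a : Fin (n + 1)} (h : a + m = n)
    (hj : j₁ + 2 * j₂ ≤ 2 * n) :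
    oddOp j₁ j₂ (oddVec n) a = (-1) ^ (a + 1 : ℕ) * localCorr j₁ j₂ (2 * m) (a + 1) := by
  rcases le_or_gt j₂ a with ha | ha
  · rw [oddOp_oddVec ha, localCorr]
    rcases le_or_gt (2 * m) j₁ with hm | hm
    · have hsign : (-1 : ℚ) ^ (a + 1 : ℕ) * (-1) ^ (j₂ + (a + 1 : ℕ)) = (-1) ^ j₂ := by
        rw [← pow_add, show (a : ℕ) + 1 + (j₂ + (a + 1)) = j₂ + 2 * (a + 1) by ring, pow_add,
          pow_mul, neg_one_sq, one_pow, mul_one]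
      rw [if_pos (by omega), show (j₁ : ℤ) - 2 * ((n : ℤ) - a) = (j₁ - 2 * m : ℕ) by omega,
        intChoose_natCast, ← mul_assoc, hsign, show (a : ℕ) + 1 - j₂ - 1 = a - j₂ by omega]
    · rw [if_neg (by omega), intChoose_of_neg (by omega), mul_zero, mul_zero]
  · rw [oddOp_oddVec_of_lt _ (by omega), localCorr_of_not (by omega), mul_zero]

end LocalCorr

section OddColumn

variable {n j₁ j₂ : ℕ}

lemma oddColumn_diag_succ (i : ℕ) :
    oddOp j₁ j₂ (t11Rat n (i + 1)) + oddOp j₁ j₂ (t11Rat n i) + oddOp j₁ j₂ (t01Rat n i)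
      - oddOp j₁ j₂ (t01Rat n (i + 2)) = 0 := by
  rw [← oddOp_add, ← oddOp_add, ← oddOp_sub, t11Rat_succ_add, oddOp_zero_right]

lemma oddColumn_top_even (hj : j₁ + 2 * j₂ ≤ 2 * n) {m s : ℕ} (h : s + m = n) :
    oddOp j₁ j₂ (evenOp (2 * m) (s + 1) (t01Rat n)) + localCorr j₁ j₂ (2 * m) (s + 1) = 0 := by
  have ha : ((⟨s, by omega⟩ : Fin (n + 1)) : ℕ) + m = n := h
  have hsq : (-1 : ℚ) ^ (s + 1) * (-1) ^ (s + 1) = 1 := by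
    rw [← mul_pow, neg_one_mul, neg_neg, one_pow]
  have heven : evenOp (2 * m) (s + 1) (t01Rat n)
      = fun j => AddMonoidHom.mulLeft (-(-1 : ℚ) ^ (s + 1)) (oddVec n j ⟨s, by omega⟩) :=
    funext fun j => (evenOp_t01Rat ha j).trans (neg_mul _ _).symm
  rw [heven, map_oddOp, ← oddOp_apply, oddOp_oddVec_eq_localCorr j₁ j₂ ha hj,
    AddMonoidHom.coe_mulLeft]
  linear_combination -localCorr j₁ j₂ (2 * m) (s + 1) * hsq

lemma oddColumn_corner_odd (hj₁ : j₁ < 2 * n) (hn : n % 2 = 1) :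
    oddOp j₁ j₂ (t11Rat n (2 * n - 1)) + oddOp j₁ j₂ (t01Rat n (2 * n - 1)) = 0 := by
  obtain ⟨n, rfl⟩ : ∃ k, n = k + 1 := ⟨n - 1, by omega⟩
  rw [← oddOp_add, ← oddOp_zero_right j₁ j₂]
  exact oddOp_congr _ fun j hj => t11Rat_corner hn (by omega)

theorem isInverseColumn_odd (hj₁ : j₁ < 2 * n) (hj : j₁ + 2 * j₂ ≤ 2 * n) :
    IsInverseColumn n (j₁, j₁ + 2 * j₂ + 1)
      (fun i s => oddOp j₁ j₂ (evenOp i s (t01Rat n)) + localCorr j₁ j₂ i s)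
      (fun i s => oddOp j₁ j₂ (oddOp i s (t11Rat n))) where
  odd i s := by
    have hy : ((j₁ : ℤ), (j₁ : ℤ) + 2 * j₂ + 1) = ((i : ℤ), (i : ℤ) + 2 * s + 1)
        ↔ j₁ = i ∧ j₂ = s := by rw [Prod.mk.injEq]; omega
    simp only [hy, evenOp_succ, oddOp_sub, oddOp_neg]
    linear_combination localCorr_right_succ j₁ j₂ i s
  even_zero s := by
    rw [oddOp_zero_succ, oddOp_neg, neg_add_cancel, if_neg (by rw [Prod.mk.injEq]; omega)]
  even_succ i s := by
    rw [oddOp_succ_succ, oddOp_sub, oddOp_neg, if_neg (by rw [Prod.mk.injEq]; omega)]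
    ring
  diag_zero := by
    rw [if_neg (by rw [Prod.mk.injEq]; omega), localCorr_of_not (by omega), add_zero, oddOp_zero,
      evenOp_zero, ← oddOp_sub, t11Rat_zero_sub, oddOp_zero_right]
  diag_succ i := by
    simp only [oddOp_zero, evenOp_zero, localCorr_of_not (not_and_of_not_right _ j₂.not_lt_zero),
      add_zero]
    rw [oddColumn_diag_succ, if_neg (by rw [Prod.mk.injEq]; omega)]
  top_even m s h := oddColumn_top_even hj h
  top_odd m s h := by rw [oddOp_t11Rat h, oddOp_zero_right]
  corner_even hn := by
    rw [evenOp_zero, localCorr_of_not (by omega), add_zero, ← oddOp_zero_right j₁ j₂]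
    exact oddOp_congr _ fun j hj => t01Rat_corner hn (by omega)
  corner_odd hn := by
    rw [oddOp_zero, evenOp_zero, localCorr_of_not (by omega), add_zero, oddColumn_corner_odd hj₁ hn]

end OddColumn

section EvenColumn

variable {n j₁ j₂ : ℕ}

lemma evenColumn_diag_zero : evenOp j₁ j₂ (t10Rat n 0) - localCorr 0 0 j₁ j₂
    - evenOp j₁ j₂ (t00Rat n 1) = if 0 = j₁ ∧ 0 = j₂ then 1 else 0 := by
  have h := localCorr_right_succ 0 0 j₁ j₂
  rw [localCorr_of_not (j₁ := j₁ + 1) (by omega)] at h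
  have hdiag := evenOp_single 0 j₁ j₂
  rw [← t10Rat_zero_sub n, evenOp_sub] at hdiag
  linear_combination hdiag - h

lemma evenColumn_diag_succ (i : ℕ) :
    evenOp j₁ j₂ (t10Rat n (i + 1)) - localCorr (i + 1) 0 j₁ j₂
      + (evenOp j₁ j₂ (t10Rat n i) - localCorr i 0 j₁ j₂) + evenOp j₁ j₂ (t00Rat n i)
      - evenOp j₁ j₂ (t00Rat n (i + 2)) = if i + 1 = j₁ ∧ 0 = j₂ then 1 else 0 := by
  have h := localCorr_right_succ (i + 1) 0 j₁ j₂
  rw [localCorr_succ_fst] at h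
  have hdiag := evenOp_single (i + 1) j₁ j₂
  rw [← t10Rat_succ_add n, evenOp_sub, evenOp_add, evenOp_add] at hdiag
  linear_combination hdiag - h

lemma evenColumn_corner_odd (hj₁ : j₁ < 2 * n) (hj : j₁ + 2 * j₂ ≤ 2 * n + 1) (hn : n % 2 = 1) :
    evenOp j₁ j₂ (t10Rat n (2 * n - 1)) - localCorr (2 * n - 1) 0 j₁ j₂
      + evenOp j₁ j₂ (t00Rat n (2 * n - 1)) = 0 := by
  obtain ⟨n, rfl⟩ : ∃ k, n = k + 1 := ⟨n - 1, by omega⟩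
  have h := localCorr_right_succ (2 * n + 1 + 1) 0 j₁ j₂
  rw [localCorr_succ_fst, localCorr_of_lt (i₁ := 2 * n + 1 + 1) (j₂ := j₂) (by omega),
    if_neg (by omega)] at h
  have hsingle : evenOp j₁ j₂ (t10Rat (n + 1) (2 * n + 1))
      + evenOp j₁ j₂ (t00Rat (n + 1) (2 * n + 1)) = evenOp j₁ j₂ (Pi.single (2 * n + 1 + 1) 1) := by
    rw [← evenOp_add]
    exact evenOp_congr fun j hj => t10Rat_corner hn (by omega)
  rw [evenOp_single] at hsingle
  rw [show 2 * (n + 1) - 1 = 2 * n + 1 by omega]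
  linear_combination hsingle - h

theorem isInverseColumn_even (hj₁ : j₁ < 2 * n) (hj : j₁ + 2 * j₂ ≤ 2 * n + 1) :
    IsInverseColumn n (j₁, j₁ + 2 * j₂)
      (fun i s => evenOp j₁ j₂ (evenOp i s (t00Rat n)))
      (fun i s => evenOp j₁ j₂ (oddOp i s (t10Rat n)) - localCorr i s j₁ j₂) where
  odd i s := by
    rw [evenOp_succ, evenOp_sub, evenOp_neg, if_neg (by rw [Prod.mk.injEq]; omega)]
    ring
  even_zero s := by
    have hy : ((j₁ : ℤ), (j₁ : ℤ) + 2 * j₂) = ((0 : ℤ), (0 : ℤ) + 2 * ((s + 1 : ℕ) : ℤ))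
        ↔ 0 = j₁ ∧ s + 1 = j₂ := by rw [Prod.mk.injEq]; omega
    simp only [hy, oddOp_zero_succ, evenOp_neg]
    linear_combination -localCorr_left_zero s j₁ j₂
  even_succ i s := by
    have hy : ((j₁ : ℤ), (j₁ : ℤ) + 2 * j₂)
        = (((i + 1 : ℕ) : ℤ), ((i + 1 : ℕ) : ℤ) + 2 * ((s + 1 : ℕ) : ℤ))
        ↔ i + 1 = j₁ ∧ s + 1 = j₂ := by rw [Prod.mk.injEq]; omega
    simp only [hy, oddOp_succ_succ, evenOp_sub, evenOp_neg]
    linear_combination -localCorr_left_succ i s j₁ j₂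
  diag_zero := by
    have hy : ((j₁ : ℤ), (j₁ : ℤ) + 2 * j₂) = ((0 : ℤ), (0 : ℤ)) ↔ 0 = j₁ ∧ 0 = j₂ := by
      rw [Prod.mk.injEq]; omega
    simp only [hy, oddOp_zero, evenOp_zero, evenColumn_diag_zero]
  diag_succ i := by
    have hy : ((j₁ : ℤ), (j₁ : ℤ) + 2 * j₂) = (((i + 1 : ℕ) : ℤ), ((i + 1 : ℕ) : ℤ))
        ↔ i + 1 = j₁ ∧ 0 = j₂ := by rw [Prod.mk.injEq]; omega
    simp only [hy, oddOp_zero, evenOp_zero, evenColumn_diag_succ]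
  top_even m s h := by
    have ha : ((⟨s, by omega⟩ : Fin (n + 1)) : ℕ) + m = n := h
    rw [evenOp_t00Rat ha, evenOp_zero_right]
  top_odd m s h := by
    rw [oddOp_t10Rat h, evenOp_zero_right, zero_sub, neg_eq_zero]
    rcases lt_or_ge s j₂ with hs | hs
    · exact localCorr_of_lt (by omega)
    · exact localCorr_of_not (by omega)
  corner_even hn := by
    rw [evenOp_zero, ← evenOp_zero_right j₁ j₂]
    exact evenOp_congr fun j hj => t00Rat_corner hn (by omega)
  corner_odd hn := by
    rw [oddOp_zero, evenOp_zero, evenColumn_corner_odd hj₁ hj hn]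

end EvenColumn

lemma genBinom_natCast (m l : ℕ) : genBinom (m : ℤ) l = (m.choose l : ℂ) := by
  rw [genBinom, Nat.cast_choose_eq_descPochhammer_div, descPochhammer_eval_eq_prod_range]
  simp

lemma genBinom_multichoose (m l : ℕ) : genBinom ((m : ℤ) - 1 + l) l = (m.multichoose l : ℂ) := by
  rcases m with _ | m
  · rcases l with _ | l
    · simp [genBinom]
    · rw [show ((0 : ℕ) : ℤ) - 1 + ((l + 1 : ℕ) : ℤ) = (l : ℕ) by push_cast; ring,
        genBinom_natCast, Nat.multichoose_zero_succ, Nat.choose_succ_self]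
  · rw [show ((m + 1 : ℕ) : ℤ) - 1 + l = (m + l : ℕ) by push_cast; ring,
      genBinom_natCast, Nat.multichoose_eq, show m + 1 + l - 1 = m + l by omega]

lemma genBinom_localCorr (i₁ i₂ j₁ j₂ : ℕ) :
    (-1) ^ (i₂ + j₂) * (if j₁ ≤ i₁ ∧ 2 * i₁ + 2 * i₂ + 1 < 2 * j₁ + 2 * j₂ then
      genBinom ((j₂ : ℤ) - (i₂ : ℤ) - 1) (i₁ - j₁) else 0) = (localCorr i₁ i₂ j₁ j₂ : ℚ) := by
  split_ifs with h
  · rw [localCorr, if_pos (by omega), show (j₂ : ℤ) - i₂ - 1 = (j₂ - i₂ - 1 : ℕ) by omega,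
      genBinom_natCast]
    push_cast
    rfl
  · rw [mul_zero]
    rcases le_or_gt j₁ i₁ with hle | hlt
    · rw [localCorr_of_lt (by omega), Rat.cast_zero]
    · rw [localCorr_of_not (by omega), Rat.cast_zero]

/-! ### The entries of the inverse -/

section Entries

variable {n i₁ i₂ j₁ j₂ : ℕ} {x y : Vfin n}

theorem KmatC_inv_odd_odd (hdet : IsUnit (KmatC n).det)
    (hx : x.1 = ((i₁ : ℤ), (i₁ : ℤ) + 2 * i₂ + 1)) (hy : y.1 = ((j₁ : ℤ), (j₁ : ℤ) + 2 * j₂ + 1))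
    (hi₁ : i₁ < 2 * n) (hj₁ : j₁ < 2 * n) :
    (KmatC n)⁻¹ x y = ∑ l₁ ∈ range (i₁ + 1), ∑ l₂ ∈ range (j₁ + 1),
      (-1) ^ (i₂ + j₂) * (-1) ^ (l₁ + l₂) * genBinom ((i₂ : ℤ) - 1 + l₁) l₁ *
        genBinom ((j₂ : ℤ) - 1 + l₂) l₂ * t11 n (i₁ - l₁) (j₁ - l₂) := by
  obtain ⟨_, hxV⟩ := x
  obtain ⟨_, hyV⟩ := y
  subst hx hy
  obtain ⟨-, -, -, hx₂, -⟩ := memV_mk.mp (mem_Vfin.mp hxV)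
  obtain ⟨-, -, -, hy₂, -⟩ := memV_mk.mp (mem_Vfin.mp hyV)
  rw [(isInverseColumn_odd hj₁ (by omega)).inv_eq hdet hyV (by dsimp only; omega),
    columnVector_odd i₁ i₂ rfl rfl hi₁ (by omega)]
  simp only [oddOp, Finset.sum_apply, zsmul_eq_mul, Pi.mul_apply, Pi.intCast_apply, mul_sum,
    genBinom_multichoose, t11_eq]
  push_cast
  rw [sum_comm]
  exact sum_congr rfl fun _ _ => sum_congr rfl fun _ _ => by ring

theorem KmatC_inv_even_even (hdet : IsUnit (KmatC n).det)
    (hx : x.1 = ((i₁ : ℤ), (i₁ : ℤ) + 2 * i₂)) (hy : y.1 = ((j₁ : ℤ), (j₁ : ℤ) + 2 * j₂))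
    (hj₁ : j₁ < 2 * n) :
    (KmatC n)⁻¹ x y = ∑ l₁ ∈ range (i₂ + 1), ∑ l₂ ∈ range (j₂ + 1),
      (-1) ^ (i₂ + j₂) * genBinom i₂ l₁ * genBinom j₂ l₂ * t00 n (i₁ + l₁) (j₁ + l₂) := by
  obtain ⟨_, hxV⟩ := x
  obtain ⟨_, hyV⟩ := y
  subst hx hy
  obtain ⟨-, hx₁, -, hx₂, -⟩ := memV_mk.mp (mem_Vfin.mp hxV)
  obtain ⟨-, -, -, hy₂, -⟩ := memV_mk.mp (mem_Vfin.mp hyV)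
  rw [(isInverseColumn_even hj₁ (by omega)).inv_eq hdet hyV (by dsimp only; omega),
    columnVector_even i₁ i₂ rfl rfl (by omega) (by omega)]
  simp only [evenOp, Finset.sum_apply, zsmul_eq_mul, Pi.mul_apply, Pi.intCast_apply, mul_sum,
    genBinom_natCast, t00_eq]
  push_cast
  rw [sum_comm]
  exact sum_congr rfl fun _ _ => sum_congr rfl fun _ _ => by ring

theorem KmatC_inv_odd_even (hdet : IsUnit (KmatC n).det)
    (hx : x.1 = ((i₁ : ℤ), (i₁ : ℤ) + 2 * i₂ + 1)) (hy : y.1 = ((j₁ : ℤ), (j₁ : ℤ) + 2 * j₂))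
    (hi₁ : i₁ < 2 * n) (hj₁ : j₁ < 2 * n) :
    (KmatC n)⁻¹ x y = (∑ l₁ ∈ range (i₁ + 1), ∑ l₂ ∈ range (j₂ + 1),
        (-1) ^ (i₂ + j₂) * (-1) ^ l₁ * genBinom ((i₂ : ℤ) - 1 + l₁) l₁ * genBinom j₂ l₂ *
          t10 n (i₁ - l₁) (j₁ + l₂))
      - (-1) ^ (i₂ + j₂) * (if j₁ ≤ i₁ ∧ 2 * i₁ + 2 * i₂ + 1 < 2 * j₁ + 2 * j₂ then
          genBinom ((j₂ : ℤ) - i₂ - 1) (i₁ - j₁) else 0) := by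
  obtain ⟨_, hxV⟩ := x
  obtain ⟨_, hyV⟩ := y
  subst hx hy
  obtain ⟨-, -, -, hx₂, -⟩ := memV_mk.mp (mem_Vfin.mp hxV)
  obtain ⟨-, -, -, hy₂, -⟩ := memV_mk.mp (mem_Vfin.mp hyV)
  rw [(isInverseColumn_even hj₁ (by omega)).inv_eq hdet hyV (by dsimp only; omega),
    columnVector_odd i₁ i₂ rfl rfl hi₁ (by omega), genBinom_localCorr]
  simp only [oddOp, evenOp, Finset.sum_apply, zsmul_eq_mul, Pi.mul_apply, Pi.intCast_apply, mul_sum,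
    genBinom_multichoose, genBinom_natCast, t10_eq]
  push_cast
  rw [sum_comm]
  congr 1
  exact sum_congr rfl fun _ _ => sum_congr rfl fun _ _ => by ring

end Entries

end TSSCPP

open TSSCPP in
/-- Main theorem: the entries of `K_n⁻¹` at `x = (i₁, i₁+2i₂+ε_i)`, `y = (j₁, j₁+2j₂+ε_j)`,
in the three cases `(ε_i,ε_j) = (1,1), (0,0), (1,0)`; the case `(0,1)` is determined by
the skew-symmetry `K_n⁻¹(x,y) = −K_n⁻¹(y,x)`. -/
theorem Kinv_main (n : ℕ) (hn : 1 ≤ n) (hdet : IsUnit (KmatC n).det)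
    (i1 i2 j1 j2 ei ej : ℕ) (hei : ei ≤ 1) (hej : ej ≤ 1)
    (hi1 : i1 + 1 ≤ 2*n) (hj1 : j1 + 1 ≤ 2*n)
    (hi2 : i2 ≤ n - (i1 + ei)/2) (hj2 : j2 ≤ n - (j1 + ej)/2)
    (hx : (((i1:ℤ), (i1:ℤ) + 2*(i2:ℤ) + (ei:ℤ))) ∈ Vfin n)
    (hy : (((j1:ℤ), (j1:ℤ) + 2*(j2:ℤ) + (ej:ℤ))) ∈ Vfin n) :
    (ei = 1 → ej = 1 →
      (KmatC n)⁻¹ ⟨((i1:ℤ), (i1:ℤ) + 2*(i2:ℤ) + (ei:ℤ)), hx⟩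
          ⟨((j1:ℤ), (j1:ℤ) + 2*(j2:ℤ) + (ej:ℤ)), hy⟩
        = ∑ l1 ∈ Finset.range (i1+1), ∑ l2 ∈ Finset.range (j1+1),
            (-1)^(i2+j2) * (-1)^(l1+l2) *
              genBinom ((i2:ℤ) - 1 + (l1:ℤ)) l1 * genBinom ((j2:ℤ) - 1 + (l2:ℤ)) l2 *
              t11 n (i1-l1) (j1-l2)) ∧
    (ei = 0 → ej = 0 →
      (KmatC n)⁻¹ ⟨((i1:ℤ), (i1:ℤ) + 2*(i2:ℤ) + (ei:ℤ)), hx⟩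
          ⟨((j1:ℤ), (j1:ℤ) + 2*(j2:ℤ) + (ej:ℤ)), hy⟩
        = ∑ l1 ∈ Finset.range (i2+1), ∑ l2 ∈ Finset.range (j2+1),
            (-1)^(i2+j2) * genBinom (i2:ℤ) l1 * genBinom (j2:ℤ) l2 *
              t00 n (i1+l1) (j1+l2)) ∧
    (ei = 1 → ej = 0 →
      (KmatC n)⁻¹ ⟨((i1:ℤ), (i1:ℤ) + 2*(i2:ℤ) + (ei:ℤ)), hx⟩
          ⟨((j1:ℤ), (j1:ℤ) + 2*(j2:ℤ) + (ej:ℤ)), hy⟩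
        = (∑ l1 ∈ Finset.range (i1+1), ∑ l2 ∈ Finset.range (j2+1),
            (-1)^(i2+j2) * (-1)^l1 *
              genBinom ((i2:ℤ) - 1 + (l1:ℤ)) l1 * genBinom (j2:ℤ) l2 *
              t10 n (i1-l1) (j1+l2))
          - (-1)^(i2+j2) *
            (if j1 ≤ i1 ∧ 2*i1 + 2*i2 + 1 < 2*j1 + 2*j2 then
              genBinom ((j2:ℤ) - (i2:ℤ) - 1) (i1-j1) else 0)) ∧
    ((KmatC n)⁻¹ ⟨((i1:ℤ), (i1:ℤ) + 2*(i2:ℤ) + (ei:ℤ)), hx⟩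
          ⟨((j1:ℤ), (j1:ℤ) + 2*(j2:ℤ) + (ej:ℤ)), hy⟩
      = -(KmatC n)⁻¹ ⟨((j1:ℤ), (j1:ℤ) + 2*(j2:ℤ) + (ej:ℤ)), hy⟩
          ⟨((i1:ℤ), (i1:ℤ) + 2*(i2:ℤ) + (ei:ℤ)), hx⟩) := by
  refine ⟨?_, ?_, ?_, KmatC_inv_skew hdet _ _⟩
  · rintro rfl rfl
    exact KmatC_inv_odd_odd hdet (by simp) (by simp) hi1 hj1
  · rintro rfl rfl
    exact KmatC_inv_even_even hdet (by simp) (by simp) hj1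
  · rintro rfl rfl
    exact KmatC_inv_odd_even hdet (by simp) (by simp) hi1 hj1
end
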